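/- arXiv:2108.06840 — 3 statements merged into one kernel-verified Lean document; each statement's English description precedes it below -/
import Mathlib

section
/- Let d ≥ 1 be an integer and δ ∈ (0,1]. There exists d₀ = d₀(d,δ) ∈ (d/2, d) such that for every p ∈ (d₀,∞) and α > 0 there is θ = θ(α,d,δ,p) > 0 with the following Liouville property. Let F be a real-valued δ-elliptic function of symmetric d×d matrices (independent of x) with F(0) = 0, and suppose there exists a convex δ-elliptic function F̄ with F̄(0) = 0 such that sup_{τ>0} τ^{−1}|F(τm) − F̄(τm)| ≤ θ for every symmetric m with Frobenius norm |m| = 1. If u is twice continuously differentiable on ℝ^d, satisfies F(D²u(x)) = 0 for all x ∈ ℝ^d, and lim_{R→∞} R^{α−2} · inf_{l ∈ 𝓛} sup_{B_R} |u − l| = 0, where 𝓛 is the set of affine functions on ℝ^d, then u is an affine function. -/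
open MeasureTheory Metric Set Filter
open scoped ENNReal RealInnerProductSpace

noncomputable section

/-- Euclidean space `ℝ^d`. -/
abbrev E (d : ℕ) : Type := EuclideanSpace ℝ (Fin d)

/-- Frobenius norm of a `d × d` matrix. -/
def frob {d : ℕ} (m : Matrix (Fin d) (Fin d) ℝ) : ℝ :=
  Real.sqrt (∑ i, ∑ j, (m i j) ^ 2)

/-- `F` is `δ`-elliptic: `δ tr w ≤ F (m + w) - F m ≤ δ⁻¹ tr w` for symmetric `m` and
symmetric positive semidefinite `w`. -/
def Elliptic {d : ℕ} (δ : ℝ) (F : Matrix (Fin d) (Fin d) ℝ → ℝ) : Prop :=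
  ∀ m : Matrix (Fin d) (Fin d) ℝ, m.IsSymm →
    ∀ w : Matrix (Fin d) (Fin d) ℝ, w.PosSemidef →
      δ * w.trace ≤ F (m + w) - F m ∧ F (m + w) - F m ≤ δ⁻¹ * w.trace

/-- Gradient of `u : ℝ^d → ℝ` as a vector in `ℝ^d`. -/
def grad {d : ℕ} (u : E d → ℝ) (x : E d) : E d :=
  (EuclideanSpace.equiv (Fin d) ℝ).symm fun i => fderiv ℝ u x (EuclideanSpace.single i 1)

/-- Hessian matrix of `u : ℝ^d → ℝ`. -/
def hess {d : ℕ} (u : E d → ℝ) (x : E d) : Matrix (Fin d) (Fin d) ℝ :=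
  Matrix.of fun i j =>
    fderiv ℝ (fun y => fderiv ℝ u y (EuclideanSpace.single j 1)) x (EuclideanSpace.single i 1)

/-- Normalized `L_p` norm `(⨍_B |g|^p)^{1/p}` (average over `B`). -/
def nLp {d : ℕ} (p : ℝ) (B : Set (E d)) (g : E d → ℝ) : ℝ≥0∞ :=
  ((volume B)⁻¹ * ∫⁻ y in B, ENNReal.ofReal (|g y| ^ p)) ^ (1 / p)

/-- Unnormalized `L_p` norm `(∫_A |g|^p)^{1/p}`. -/
def Lpn {d : ℕ} (p : ℝ) (A : Set (E d)) (g : E d → ℝ) : ℝ≥0∞ :=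
  (∫⁻ y in A, ENNReal.ofReal (|g y| ^ p)) ^ (1 / p)

/-- Morrey norm `‖g‖_{E_{p,μ}(Ω)} = sup_{ρ>0, x∈Ω} ρ^μ (⨍_{B_ρ(x)} |g 1_Ω|^p)^{1/p}`. -/
def morrey {d : ℕ} (p μ : ℝ) (Ω : Set (E d)) (g : E d → ℝ) : ℝ≥0∞ :=
  ⨆ (ρ : ℝ) (_ : 0 < ρ) (x : E d) (_ : x ∈ Ω),
    ENNReal.ofReal (ρ ^ μ) * nLp p (ball x ρ) (Ω.indicator g)

/-- The `(θ, R₀)`-oscillation condition on `F(m, x)`. -/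
def OscCond {d : ℕ} (δ θ R₀ : ℝ) (F : Matrix (Fin d) (Fin d) ℝ → E d → ℝ) : Prop :=
  ∀ r ∈ Set.Ioc (0 : ℝ) R₀, ∀ z : E d,
    ∃ Fb : Matrix (Fin d) (Fin d) ℝ → ℝ,
      ConvexOn ℝ Set.univ Fb ∧ Elliptic δ Fb ∧ Fb 0 = 0 ∧
      ∀ m : Matrix (Fin d) (Fin d) ℝ, m.IsSymm → frob m = 1 →
        (volume (ball z r))⁻¹ *
            ∫⁻ x in ball z r,
              ⨆ (τ : ℝ) (_ : 0 < τ), ENNReal.ofReal (τ⁻¹ * |F (τ • m) x - Fb (τ • m)|)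
          ≤ ENNReal.ofReal θ

/-- The homogeneity bound `|F(ζ m, x)| ≤ ζ |F(m, x)| + K(x)` for `ζ ∈ [0,1]`. -/
def HomBound {d : ℕ} (F : Matrix (Fin d) (Fin d) ℝ → E d → ℝ) (K : E d → ℝ) : Prop :=
  ∀ ζ ∈ Set.Icc (0 : ℝ) 1, ∀ m : Matrix (Fin d) (Fin d) ℝ, m.IsSymm → ∀ x : E d,
    |F (ζ • m) x| ≤ ζ * |F m x| + K x

/-- Second difference. -/
def sd {d : ℕ} (u : E d → ℝ) (h x : E d) : ℝ := u (x + h) + u (x - h) - 2 * u x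

/-- Quadratic form of a matrix. -/
def qf {d : ℕ} (X : Matrix (Fin d) (Fin d) ℝ) (ξ : E d) : ℝ := ∑ i, ∑ j, X i j * (ξ i * ξ j)

lemma qf_add {d : ℕ} (X Y : Matrix (Fin d) (Fin d) ℝ) (ξ : E d) :
    qf (X + Y) ξ = qf X ξ + qf Y ξ := by
  simp only [qf, Matrix.add_apply, add_mul, Finset.sum_add_distrib]

lemma qf_smul {d : ℕ} (c : ℝ) (X : Matrix (Fin d) (Fin d) ℝ) (ξ : E d) :
    qf (c • X) ξ = c * qf X ξ := by
  simp only [qf, Matrix.smul_apply, smul_eq_mul, Finset.mul_sum, mul_assoc]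

lemma qf_neg {d : ℕ} (X : Matrix (Fin d) (Fin d) ℝ) (ξ : E d) :
    qf (-X) ξ = - qf X ξ := by
  simp only [qf, Matrix.neg_apply, neg_mul, Finset.sum_neg_distrib]

lemma qf_sub {d : ℕ} (X Y : Matrix (Fin d) (Fin d) ℝ) (ξ : E d) :
    qf (X - Y) ξ = qf X ξ - qf Y ξ := by
  rw [sub_eq_add_neg, qf_add, qf_neg]; ring

lemma norm_sq_E {d : ℕ} (ξ : E d) : ‖ξ‖ ^ 2 = ∑ i, ξ i ^ 2 := by
  rw [EuclideanSpace.norm_sq_eq]; simp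

lemma inner_E {d : ℕ} (x y : E d) : ⟪x, y⟫ = ∑ i, x i * y i := by
  simp [PiLp.inner_apply, mul_comm]

lemma qf_one {d : ℕ} (ξ : E d) : qf (1 : Matrix (Fin d) (Fin d) ℝ) ξ = ‖ξ‖ ^ 2 := by
  rw [norm_sq_E]
  simp [qf, Matrix.one_apply, pow_two]

/-- Rank one matrix. -/
def rk1 {d : ℕ} (z : E d) : Matrix (Fin d) (Fin d) ℝ := Matrix.of fun i j => z i * z j

lemma qf_rk1 {d : ℕ} (z ξ : E d) : qf (rk1 z) ξ = ⟪z, ξ⟫ ^ 2 := by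
  rw [inner_E, pow_two, Finset.sum_mul_sum]
  simp only [qf, rk1, Matrix.of_apply]
  refine Finset.sum_congr rfl fun i _ => Finset.sum_congr rfl fun j _ => by ring

lemma rk1_symm {d : ℕ} (z : E d) : (rk1 z).IsSymm := by
  ext i j; simp [rk1, Matrix.transpose_apply, mul_comm]

lemma trace_rk1 {d : ℕ} (z : E d) : (rk1 z).trace = ‖z‖ ^ 2 := by
  rw [norm_sq_E]; simp [rk1, Matrix.trace, pow_two]

lemma psd_of_qf {d : ℕ} {X : Matrix (Fin d) (Fin d) ℝ} (hX : X.IsSymm)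
    (h : ∀ ξ, 0 ≤ qf X ξ) : X.PosSemidef := by
  refine Matrix.PosSemidef.of_dotProduct_mulVec_nonneg ?_ fun x => ?_
  · rw [Matrix.IsHermitian, Matrix.conjTranspose_eq_transpose_of_trivial]; exact hX
  · have := h (WithLp.toLp 2 x)
    have e : star x ⬝ᵥ (X.mulVec x) = qf X (WithLp.toLp 2 x) := by
      simp only [qf, dotProduct, Matrix.mulVec, Finset.mul_sum]
      refine Finset.sum_congr rfl fun i _ => Finset.sum_congr rfl fun j _ => ?_
      change x i * (X i j * x j) = X i j * (x i * x j)
      ring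
    rw [e]; exact this

lemma symm_one {d : ℕ} : (1 : Matrix (Fin d) (Fin d) ℝ).IsSymm := Matrix.isSymm_one

lemma trace_nonneg_of_qf {d : ℕ} {X : Matrix (Fin d) (Fin d) ℝ} 
    (h : ∀ ξ, 0 ≤ qf X ξ) : 0 ≤ X.trace := by
  refine Finset.sum_nonneg fun i _ => ?_
  have := h (EuclideanSpace.single i 1)
  simpa [qf, Pi.single_apply] using this

lemma frob_nonneg {d : ℕ} (X : Matrix (Fin d) (Fin d) ℝ) : 0 ≤ frob X := Real.sqrt_nonneg _

lemma frob_sq {d : ℕ} (X : Matrix (Fin d) (Fin d) ℝ) : frob X ^ 2 = ∑ i, ∑ j, (X i j) ^ 2 :=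
  Real.sq_sqrt (Finset.sum_nonneg fun _ _ => Finset.sum_nonneg fun _ _ => sq_nonneg _)

lemma frob_neg {d : ℕ} (X : Matrix (Fin d) (Fin d) ℝ) : frob (-X) = frob X := by
  simp [frob]

lemma frob_smul {d : ℕ} (c : ℝ) (hc : 0 ≤ c) (X : Matrix (Fin d) (Fin d) ℝ) :
    frob (c • X) = c * frob X := by
  unfold frob
  simp only [Matrix.smul_apply, smul_eq_mul, mul_pow, ← Finset.mul_sum]
  rw [Real.sqrt_mul (by positivity), Real.sqrt_sq hc]

lemma frob_eq_zero {d : ℕ} {X : Matrix (Fin d) (Fin d) ℝ} (h : frob X = 0) : X = 0 := by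
  have h2 := frob_sq X
  rw [h] at h2
  ext i j
  have h3 : ∑ i, ∑ j, (X i j) ^ 2 = 0 := by rw [← h2]; norm_num
  have h4 := (Finset.sum_eq_zero_iff_of_nonneg
    (fun i _ => Finset.sum_nonneg fun j _ => sq_nonneg (X i j))).1 h3 i (Finset.mem_univ _)
  have h5 := (Finset.sum_eq_zero_iff_of_nonneg
    (fun j _ => sq_nonneg (X i j))).1 h4 j (Finset.mem_univ _)
  simpa using h5

lemma abs_entry_le {d : ℕ} (z : E d) (i : Fin d) : |z i| ≤ ‖z‖ := by
  simpa using PiLp.norm_apply_le z i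

lemma qf_le_frob {d : ℕ} (X : Matrix (Fin d) (Fin d) ℝ) (ξ : E d) :
    qf X ξ ≤ frob X * ‖ξ‖ ^ 2 := by
  have h1 : qf X ξ = ∑ p : Fin d × Fin d, X p.1 p.2 * (ξ p.1 * ξ p.2) := by
    rw [Fintype.sum_prod_type]; rfl
  have h2 := Finset.sum_mul_sq_le_sq_mul_sq Finset.univ (fun p : Fin d × Fin d => X p.1 p.2)
    (fun p => ξ p.1 * ξ p.2)
  rw [← h1] at h2
  have h3 : ∑ p : Fin d × Fin d, (X p.1 p.2) ^ 2 = frob X ^ 2 := by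
    rw [frob_sq, Fintype.sum_prod_type]
  have h4 : ∑ p : Fin d × Fin d, (ξ p.1 * ξ p.2) ^ 2 = (‖ξ‖ ^ 2) ^ 2 := by
    rw [norm_sq_E, pow_two (∑ i, ξ i ^ 2), Finset.sum_mul_sum, Fintype.sum_prod_type]
    simp only [mul_pow]
  rw [h3, h4, ← mul_pow] at h2
  exact (abs_le_of_sq_le_sq' h2 (mul_nonneg (frob_nonneg _) (sq_nonneg _))).2

lemma psd_entry {d : ℕ} {X : Matrix (Fin d) (Fin d) ℝ} (hX : X.IsSymm)
    (h : ∀ ξ, 0 ≤ qf X ξ) (i j : Fin d) : (X i j) ^ 2 ≤ X i i * X j j := by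
  have hs : X j i = X i j := hX.apply i j
  have key : ∀ a b : ℝ, 0 ≤ X i i * (a * a) + 2 * X i j * (a * b) + X j j * (b * b) := by
    intro a b
    have := h (a • EuclideanSpace.single i 1 + b • EuclideanSpace.single j 1)
    have e : qf X (a • EuclideanSpace.single i (1:ℝ) + b • EuclideanSpace.single j 1)
        = X i i * (a * a) + 2 * X i j * (a * b) + X j j * (b * b) := by
      simp [qf, mul_add, add_mul, Finset.sum_add_distrib, hs]
      ring
    rwa [e] at this
  have hj : 0 ≤ X j j := by simpa using key 0 1
  rcases hj.eq_or_lt with h0 | h0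
  · rw [← h0]
    by_contra hne
    push Not at hne
    have hne' : X i j ≠ 0 := by
      intro h; rw [h] at hne; simp at hne
    have := key 1 (-(X i i + 1) / (2 * X i j))
    rw [← h0] at this
    have e : X i i * (1 * 1) + 2 * X i j * (1 * (-(X i i + 1) / (2 * X i j))) = -1 := by
      field_simp; ring
    rw [e] at this
    linarith
  · have := key (X j j) (- X i j)
    by_contra hlt
    push Not at hlt
    nlinarith [mul_pos h0 (sub_pos.2 hlt)]

lemma frob_le_trace {d : ℕ} {X : Matrix (Fin d) (Fin d) ℝ} (hX : X.IsSymm)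
    (h : ∀ ξ, 0 ≤ qf X ξ) : frob X ≤ X.trace := by
  have ht := trace_nonneg_of_qf h
  refine abs_le_of_sq_le_sq' ?_ ht |>.2
  rw [frob_sq, pow_two, Matrix.trace, Finset.sum_mul_sum]
  exact Finset.sum_le_sum fun i _ => Finset.sum_le_sum fun j _ => psd_entry hX h i j

lemma frob_tri {d : ℕ} (X Y : Matrix (Fin d) (Fin d) ℝ) : frob (X + Y) ≤ frob X + frob Y := by
  refine abs_le_of_sq_le_sq' ?_ (add_nonneg (frob_nonneg _) (frob_nonneg _)) |>.2
  have h2 := Finset.sum_mul_sq_le_sq_mul_sq Finset.univ (fun p : Fin d × Fin d => X p.1 p.2)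
    (fun p => Y p.1 p.2)
  simp only [Fintype.sum_prod_type] at h2
  rw [← frob_sq, ← frob_sq, ← mul_pow] at h2
  have h3 := (abs_le_of_sq_le_sq' h2 (mul_nonneg (frob_nonneg _) (frob_nonneg _))).2
  rw [add_sq, frob_sq, frob_sq X, frob_sq Y]
  have : ∑ i, ∑ j, (X + Y) i j ^ 2 = ∑ i, ∑ j, X i j ^ 2 + 2 * ∑ i, ∑ j, X i j * Y i j
      + ∑ i, ∑ j, Y i j ^ 2 := by
    simp only [Finset.mul_sum, ← Finset.sum_add_distrib, Matrix.add_apply]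
    refine Finset.sum_congr rfl fun i _ => Finset.sum_congr rfl fun j _ => by ring
  rw [this]; linarith

lemma frob_one_le {d : ℕ} : frob (1 : Matrix (Fin d) (Fin d) ℝ) ≤ d := by
  have := frob_le_trace (d := d) (X := 1) symm_one (fun ξ => by rw [qf_one]; positivity)
  simpa using this

lemma ell_lower {d : ℕ} {δ : ℝ} (hδ : 0 < δ) {F : Matrix (Fin d) (Fin d) ℝ → ℝ}
    (hF : Elliptic δ F) {X Y : Matrix (Fin d) (Fin d) ℝ} (hX : X.IsSymm) (hY : Y.IsSymm)
    (z : E d) {l μ : ℝ} (hl : 0 ≤ l) (hμ : 0 ≤ μ)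
    (h : ∀ ξ, l * ⟪z, ξ⟫ ^ 2 - μ * ‖ξ‖ ^ 2 ≤ qf Y ξ - qf X ξ) :
    F X + δ * l * ‖z‖ ^ 2 - δ⁻¹ * (d * μ) ≤ F Y := by
  set A := X + (-μ) • (1 : Matrix (Fin d) (Fin d) ℝ) with hA
  have hAs : A.IsSymm := hX.add (symm_one.smul _)
  set B := A + l • rk1 z with hB
  have hBs : B.IsSymm := hAs.add ((rk1_symm z).smul _)
  have h1 := (hF A hAs (μ • 1) (psd_of_qf (symm_one.smul _) (fun ξ => by
    rw [qf_smul, qf_one]; positivity))).2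
  have h2 := (hF A hAs (l • rk1 z) (psd_of_qf ((rk1_symm z).smul _) (fun ξ => by
    rw [qf_smul, qf_rk1]; positivity))).1
  have hq : ∀ ξ, 0 ≤ qf (Y - B) ξ := fun ξ => by
    rw [qf_sub, hB, hA, qf_add, qf_add, qf_smul, qf_smul, qf_one, qf_rk1]
    linarith [h ξ]
  have h3 := (hF B hBs (Y - B) (psd_of_qf (hY.sub hBs) hq)).1
  have h4 := trace_nonneg_of_qf hq
  have e1 : A + μ • (1 : Matrix (Fin d) (Fin d) ℝ) = X := by rw [hA]; simp [add_assoc]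
  rw [e1] at h1
  have e2 : B + (Y - B) = Y := by abel
  rw [e2] at h3
  simp only [Matrix.trace_smul, trace_rk1, Matrix.trace_one, smul_eq_mul, Fintype.card_fin] at h1 h2
  have := mul_nonneg hδ.le h4
  nlinarith

lemma frob_bound_lo {d : ℕ} {δ : ℝ} (hδ : 0 < δ) {F : Matrix (Fin d) (Fin d) ℝ → ℝ}
    (hF : Elliptic δ F) (hF0 : F 0 = 0) {X : Matrix (Fin d) (Fin d) ℝ} (hX : X.IsSymm)
    (hFX : F X = 0) {C : ℝ} (hC : 0 ≤ C) (h : ∀ ξ, - C * ‖ξ‖ ^ 2 ≤ qf X ξ) :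
    frob X ≤ C * (δ⁻¹ * δ⁻¹ * d + d) := by
  set A := (-C) • (1 : Matrix (Fin d) (Fin d) ℝ) with hA
  have hAs : A.IsSymm := (symm_one.smul _)
  have h1 := (hF A hAs (C • 1) (psd_of_qf (symm_one.smul _) (fun ξ => by
    rw [qf_smul, qf_one]; positivity))).2
  have hq : ∀ ξ, 0 ≤ qf (X - A) ξ := fun ξ => by
    rw [qf_sub, hA, qf_smul, qf_one]; linarith [h ξ]
  have h2 := (hF A hAs (X - A) (psd_of_qf (hX.sub hAs) hq)).1
  have e1 : A + C • (1 : Matrix (Fin d) (Fin d) ℝ) = 0 := by rw [hA]; simp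
  have e2 : A + (X - A) = X := by abel
  rw [e1, hF0] at h1
  rw [e2, hFX] at h2
  simp only [Matrix.trace_smul, Matrix.trace_one, smul_eq_mul, Fintype.card_fin] at h1
  have h3 : (X - A).trace ≤ δ⁻¹ * (δ⁻¹ * (C * d)) := by
    rw [le_inv_mul_iff₀ hδ]; linarith
  have h4 := frob_le_trace (hX.sub hAs) hq
  have h5 := frob_tri (X - A) A
  have h6 : frob A ≤ C * d := by
    rw [hA, neg_smul, frob_neg, frob_smul _ hC]
    exact mul_le_mul_of_nonneg_left frob_one_le hC
  rw [sub_add_cancel] at h5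
  nlinarith

lemma frob_bound_hi {d : ℕ} {δ : ℝ} (hδ : 0 < δ) {F : Matrix (Fin d) (Fin d) ℝ → ℝ}
    (hF : Elliptic δ F) (hF0 : F 0 = 0) {X : Matrix (Fin d) (Fin d) ℝ} (hX : X.IsSymm)
    (hFX : F X = 0) {C : ℝ} (hC : 0 ≤ C) (h : ∀ ξ, qf X ξ ≤ C * ‖ξ‖ ^ 2) :
    frob X ≤ C * (δ⁻¹ * δ⁻¹ * d + d) := by
  rw [← frob_neg]
  refine frob_bound_lo hδ (F := fun m => - F (-m)) ?_ (by simp [hF0]) (hX.neg) (by simp [hFX]) hC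
    (fun ξ => by rw [qf_neg]; linarith [h ξ])
  intro m hm w hw
  have hs : w.IsSymm := by
    have := hw.1
    rwa [Matrix.IsHermitian, Matrix.conjTranspose_eq_transpose_of_trivial] at this
  have := hF (-(m + w)) ((hm.add hs).neg) w hw
  have e : -(m + w) + w = - m := by abel
  rw [e] at this
  constructor <;> linarith [this.1, this.2]
open Topology

/-- Normalized class of solutions. -/
structure Good {d : ℕ} (δ θ : ℝ) (u : E d → ℝ) : Prop where
  cd : ContDiff ℝ 2 u
  eqn : ∃ F Fb : Matrix (Fin d) (Fin d) ℝ → ℝ, Elliptic δ F ∧ F 0 = 0 ∧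
    ConvexOn ℝ Set.univ Fb ∧ Elliptic δ Fb ∧
    (∀ m : Matrix (Fin d) (Fin d) ℝ, m.IsSymm → |F m - Fb m| ≤ θ * frob m) ∧
    ∀ x : E d, ∃ X : Matrix (Fin d) (Fin d) ℝ, X.IsSymm ∧ F X = 0 ∧
      ∀ ξ : E d, Tendsto (fun t : ℝ => sd u (t • ξ) x / t ^ 2) (𝓝[>] 0) (𝓝 (qf X ξ))

lemma Good.mono {d : ℕ} {δ θ θ' : ℝ} {u : E d → ℝ} (h : Good δ θ u) (hθ : θ ≤ θ') :
    Good δ θ' u := by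
  obtain ⟨hc, F, Fb, h1, h2, h3, h4, h5, h6⟩ := h
  exact ⟨hc, F, Fb, h1, h2, h3, h4, fun m hm => (h5 m hm).trans
    (mul_le_mul_of_nonneg_right hθ (frob_nonneg m)), h6⟩

lemma sd_scale {d : ℕ} (u : E d → ℝ) (c r : ℝ) (x₀ h y : E d) :
    sd (fun y => c * u (x₀ + r • y)) h y = c * sd u (r • h) (x₀ + r • y) := by
  simp only [sd, smul_add, smul_sub, add_assoc, add_sub_assoc]
  ring

lemma sd_affine {d : ℕ} (u : E d → ℝ) (a : ℝ) (v h x : E d) :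
    sd (fun x => u x - (a + ⟪v, x⟫)) h x = sd u h x := by
  simp only [sd, inner_add_right, inner_sub_right]
  ring

lemma Good.affine {d : ℕ} {δ θ : ℝ} {u : E d → ℝ} (h : Good δ θ u) (a : ℝ) (v : E d) :
    Good δ θ (fun x => u x - (a + ⟪v, x⟫)) := by
  obtain ⟨hc, F, Fb, h1, h2, h3, h4, h5, h6⟩ := h
  refine ⟨hc.sub (contDiff_const.add (contDiff_const.inner ℝ contDiff_id)),
    F, Fb, h1, h2, h3, h4, h5, fun x => ?_⟩
  obtain ⟨X, hX1, hX2, hX3⟩ := h6 x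
  exact ⟨X, hX1, hX2, fun ξ => by simpa only [sd_affine] using hX3 ξ⟩

lemma ell_scale {d : ℕ} {δ k : ℝ} (hk : 0 < k) {F : Matrix (Fin d) (Fin d) ℝ → ℝ}
    (hF : Elliptic δ F) : Elliptic δ (fun m => k * F (k⁻¹ • m)) := by
  intro m hm w hw
  have := hF (k⁻¹ • m) (hm.smul _) (k⁻¹ • w) (hw.smul (inv_nonneg.2 hk.le))
  rw [Matrix.trace_smul, smul_eq_mul] at this
  simp only [smul_add]
  have e1 : δ * w.trace = k * (δ * (k⁻¹ * w.trace)) := by field_simp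
  have e2 : δ⁻¹ * w.trace = k * (δ⁻¹ * (k⁻¹ * w.trace)) := by
    have := hk.ne'
    have e : k * (δ⁻¹ * (k⁻¹ * w.trace)) = (k * k⁻¹) * (δ⁻¹ * w.trace) := by ring
    rw [e, mul_inv_cancel₀ this, one_mul]
  rw [e1, e2, ← mul_sub]
  exact ⟨mul_le_mul_of_nonneg_left this.1 hk.le, mul_le_mul_of_nonneg_left this.2 hk.le⟩

lemma Good.scale {d : ℕ} {δ θ : ℝ} {u : E d → ℝ} (h : Good δ θ u) {c r : ℝ} (hc : 0 < c)
    (hr : 0 < r) (x₀ : E d) : Good δ θ (fun y => c * u (x₀ + r • y)) := by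
  obtain ⟨hcd, F, Fb, h1, h2, h3, h4, h5, h6⟩ := h
  set k := c * r ^ 2 with hkdef
  have hk : 0 < k := by positivity
  refine ⟨contDiff_const.mul (hcd.comp (contDiff_const.add (contDiff_id.const_smul r))),
    fun m => k * F (k⁻¹ • m), fun m => k * Fb (k⁻¹ • m), ell_scale hk h1, by simp [h2], ?_,
    ell_scale hk h4, ?_, ?_⟩
  · refine ⟨convex_univ, fun x _ y _ a b ha hb hab => ?_⟩
    have := h3.2 (mem_univ (k⁻¹ • x)) (mem_univ (k⁻¹ • y)) ha hb hab
    have e : k⁻¹ • (a • x + b • y) = a • k⁻¹ • x + b • k⁻¹ • y := by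
      rw [smul_add, smul_comm, smul_comm k⁻¹ b]
    simp only [e]
    have := mul_le_mul_of_nonneg_left this hk.le
    simp only [smul_eq_mul] at this ⊢
    linarith
  · intro m hm
    have := h5 (k⁻¹ • m) (hm.smul _)
    rw [frob_smul _ (inv_nonneg.2 hk.le)] at this
    rw [← mul_sub, abs_mul, abs_of_pos hk]
    calc k * |F (k⁻¹ • m) - Fb (k⁻¹ • m)| ≤ k * (θ * (k⁻¹ * frob m)) :=
          mul_le_mul_of_nonneg_left this hk.le
      _ = θ * frob m := by field_simp
  · intro x
    obtain ⟨X, hX1, hX2, hX3⟩ := h6 (x₀ + r • x)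
    refine ⟨k • X, hX1.smul _, ?_, fun ξ => ?_⟩
    · change k * F (k⁻¹ • k • X) = 0
      rw [smul_smul, inv_mul_cancel₀ hk.ne', one_smul, hX2, mul_zero]
    · have h7 := (hX3 (r • ξ)).const_mul c
      have e : c * qf X (r • ξ) = qf (k • X) ξ := by
        rw [qf_smul, hkdef, mul_assoc]
        congr 1
        simp only [qf, PiLp.smul_apply, smul_eq_mul, Finset.mul_sum]
        refine Finset.sum_congr rfl fun i _ => Finset.sum_congr rfl fun j _ => by ring
      rw [e] at h7
      refine h7.congr fun t => ?_
      rw [sd_scale, smul_comm]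
      ring

lemma close_frob {d : ℕ} {θ : ℝ} {F Fb : Matrix (Fin d) (Fin d) ℝ → ℝ} (h0 : F 0 = 0)
    (h0' : Fb 0 = 0)
    (h : ∀ m : Matrix (Fin d) (Fin d) ℝ, m.IsSymm → frob m = 1 →
                ∀ τ : ℝ, 0 < τ → τ⁻¹ * |F (τ • m) - Fb (τ • m)| ≤ θ)
    (m : Matrix (Fin d) (Fin d) ℝ) (hm : m.IsSymm) : |F m - Fb m| ≤ θ * frob m := by
  rcases (frob_nonneg m).eq_or_lt with h1 | h1
  · have := frob_eq_zero h1.symm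
    rw [← h1, this, h0, h0']; simp
  · have := h ((frob m)⁻¹ • m) (hm.smul _)
      (by rw [frob_smul _ (inv_nonneg.2 h1.le), inv_mul_cancel₀ h1.ne']) (frob m) h1
    rw [smul_smul, mul_inv_cancel₀ h1.ne', one_smul, inv_mul_le_iff₀ h1] at this
    linarith

lemma sd_limit {d : ℕ} {u : E d → ℝ} (hu : ContDiff ℝ 2 u) (x ξ : E d) :
    Tendsto (fun t : ℝ => sd u (t • ξ) x / t ^ 2) (𝓝[>] 0)
      (𝓝 (fderiv ℝ (fderiv ℝ u) x ξ ξ)) := by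
  have hd1 : Differentiable ℝ u := hu.differentiable (by norm_num)
  have hd2 : Differentiable ℝ (fderiv ℝ u) :=
    (hu.fderiv_right (m := 1) (by norm_num)).differentiable (by norm_num)
  have hline : ∀ s : ℝ, HasDerivAt (fun t : ℝ => x + t • ξ) ξ s := fun s => by
    simpa using ((hasDerivAt_id s).smul_const ξ).const_add x
  have hline' : ∀ s : ℝ, HasDerivAt (fun t : ℝ => x - t • ξ) (-ξ) s := fun s => by
    simpa using ((hasDerivAt_id s).smul_const ξ).const_sub x
  have hf : ∀ s : ℝ, HasDerivAt (fun t : ℝ => sd u (t • ξ) x)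
      (fderiv ℝ u (x + s • ξ) ξ - fderiv ℝ u (x - s • ξ) ξ) s := fun s => by
    have a := ((hd1 (x + s • ξ)).hasFDerivAt).comp_hasDerivAt s (hline s)
    have b := ((hd1 (x - s • ξ)).hasFDerivAt).comp_hasDerivAt s (hline' s)
    have := (a.add b).sub_const (2 * u x)
    rw [map_neg, ← sub_eq_add_neg] at this
    exact this
  have hg : ∀ s : ℝ, HasDerivAt (fun t : ℝ => t ^ 2) (2 * s) s := fun s => by
    simpa using hasDerivAt_pow 2 s
  refine HasDerivAt.lhopital_zero_nhdsGT (Eventually.of_forall hf) (Eventually.of_forall hg)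
    ?_ ?_ ?_ ?_
  · filter_upwards [self_mem_nhdsWithin] with s hs
    have : (0:ℝ) < s := hs
    positivity
  · have := (hf 0).continuousAt.tendsto
    have e : sd u ((0:ℝ) • ξ) x = 0 := by simp [sd]; ring
    rw [e] at this
    exact this.mono_left nhdsWithin_le_nhds
  · have := (hg 0).continuousAt.tendsto
    simp only [ne_eq, OfNat.ofNat_ne_zero, not_false_eq_true, zero_pow] at this
    exact this.mono_left nhdsWithin_le_nhds
  · have hk : HasDerivAt (fun s : ℝ => fderiv ℝ u (x + s • ξ) ξ - fderiv ℝ u (x - s • ξ) ξ)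
        (2 * fderiv ℝ (fderiv ℝ u) x ξ ξ) 0 := by
      have h1 := (hd2 (x + (0:ℝ) • ξ)).hasFDerivAt.comp_hasDerivAt (0:ℝ) (hline 0)
      have h2 := (hd2 (x - (0:ℝ) • ξ)).hasFDerivAt.comp_hasDerivAt (0:ℝ) (hline' 0)
      have h3 := (h1.sub h2).clm_apply (hasDerivAt_const (0:ℝ) ξ)
      simp at h3
      refine h3.congr_deriv ?_
      ring
    have h4 := hk.tendsto_slope_zero_right
    simp only [zero_smul, zero_add, sub_self, add_zero, sub_zero, smul_eq_mul] at h4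
    have h5 := h4.const_mul (1/2 : ℝ)
    have e : (1/2 : ℝ) * (2 * fderiv ℝ (fderiv ℝ u) x ξ ξ) = fderiv ℝ (fderiv ℝ u) x ξ ξ := by ring
    rw [e] at h5
    refine h5.congr' ?_
    filter_upwards [self_mem_nhdsWithin] with s hs
    have : (0:ℝ) < s := hs
    field_simp

lemma hess_apply {d : ℕ} {u : E d → ℝ} (hu : ContDiff ℝ 2 u) (x : E d) (i j : Fin d) :
    hess u x i j = fderiv ℝ (fderiv ℝ u) x (EuclideanSpace.single i 1)
      (EuclideanSpace.single j 1) := by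
  have hd2 : Differentiable ℝ (fderiv ℝ u) :=
    (hu.fderiv_right (m := 1) (by norm_num)).differentiable (by norm_num)
  simp only [hess, Matrix.of_apply]
  have := ((hd2 x).hasFDerivAt.clm_apply (hasFDerivAt_const (EuclideanSpace.single j (1:ℝ)) x)).fderiv
  rw [this]
  simp

lemma qf_bilin {d : ℕ} (B : E d →L[ℝ] E d →L[ℝ] ℝ) (ξ : E d) :
    qf (Matrix.of fun i j => B (EuclideanSpace.single i 1) (EuclideanSpace.single j 1)) ξ
      = B ξ ξ := by
  have e : ξ = ∑ i, ξ i • EuclideanSpace.single i (1:ℝ) := by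
    ext j
    simp [Pi.single_apply]
  conv_rhs => rw [e]
  simp only [map_sum, map_smul, _root_.sum_apply, _root_.smul_apply,
    smul_eq_mul, Finset.mul_sum, qf, Matrix.of_apply]
  rw [Finset.sum_comm]
  refine Finset.sum_congr rfl fun i _ => Finset.sum_congr rfl fun j _ => by ring

lemma good_of {d : ℕ} {δ θ : ℝ} {F Fb : Matrix (Fin d) (Fin d) ℝ → ℝ} {u : E d → ℝ}
    (hF : Elliptic δ F) (hF0 : F 0 = 0) (hFb : ConvexOn ℝ Set.univ Fb) (hFbe : Elliptic δ Fb)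
    (hFb0 : Fb 0 = 0)
    (h : ∀ m : Matrix (Fin d) (Fin d) ℝ, m.IsSymm → frob m = 1 →
                ∀ τ : ℝ, 0 < τ → τ⁻¹ * |F (τ • m) - Fb (τ • m)| ≤ θ)
    (hu : ContDiff ℝ 2 u) (he : ∀ x : E d, F (hess u x) = 0) : Good δ θ u := by
  refine ⟨hu, F, Fb, hF, hF0, hFb, hFbe, close_frob hF0 hFb0 h, fun x => ⟨hess u x, ?_, he x, ?_⟩⟩
  · ext i j
    rw [Matrix.transpose_apply, hess_apply hu, hess_apply hu]
    exact (hu.contDiffAt.isSymmSndFDerivAt (by simp)).eq _ _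
  · intro ξ
    have := sd_limit hu x ξ
    rw [← qf_bilin] at this
    convert this using 3
    ext i j
    rw [hess_apply hu]; rfl
open Topology

lemma exp_add_exp_neg_ge (y : ℝ) : 2 + y ^ 2 ≤ Real.exp (-y) + Real.exp y := by
  have h1 : (y / 2) ^ 2 ≤ (Real.sinh (y / 2)) ^ 2 := by
    rw [sq_le_sq, Real.abs_sinh]
    exact Real.self_le_sinh_iff.2 (abs_nonneg _)
  have h2 : Real.exp (-y) + Real.exp y = 2 + 4 * Real.sinh (y / 2) ^ 2 := by
    have h3 := Real.cosh_eq y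
    have h4 := Real.cosh_two_mul (y / 2)
    rw [Real.cosh_sq, mul_div_cancel₀ y (by norm_num : (2:ℝ) ≠ 0)] at h4
    linarith
  rw [h2]; linarith

lemma gauss_sd {d : ℕ} (s : ℝ) (hs : 0 < s) (p x ξ : E d) (t : ℝ) (ht : 0 < t) :
    Real.exp (-s * ‖x - p‖ ^ 2) *
      (Real.exp (-s * (t ^ 2 * ‖ξ‖ ^ 2)) * (4 * s ^ 2 * ⟪x - p, ξ⟫ ^ 2) - 2 * s * ‖ξ‖ ^ 2)
      ≤ sd (fun x => Real.exp (-s * ‖x - p‖ ^ 2)) (t • ξ) x / t ^ 2 := by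
  rw [le_div_iff₀ (by positivity)]
  have e1 : ‖x + t • ξ - p‖ ^ 2 = ‖x - p‖ ^ 2 + 2 * t * ⟪x - p, ξ⟫ + t ^ 2 * ‖ξ‖ ^ 2 := by
    rw [show x + t • ξ - p = (x - p) + t • ξ by abel, norm_add_sq_real, inner_smul_right, norm_smul,
      mul_pow, Real.norm_eq_abs, sq_abs]
    ring
  have e2 : ‖x - t • ξ - p‖ ^ 2 = ‖x - p‖ ^ 2 - 2 * t * ⟪x - p, ξ⟫ + t ^ 2 * ‖ξ‖ ^ 2 := by
    rw [show x - t • ξ - p = (x - p) - t • ξ by abel, norm_sub_sq_real, inner_smul_right, norm_smul,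
      mul_pow, Real.norm_eq_abs, sq_abs]
    ring
  simp only [sd, e1, e2]
  set c := ⟪x - p, ξ⟫
  set n := ‖ξ‖ ^ 2
  set Z := ‖x - p‖ ^ 2
  have f1 : Real.exp (-s * (Z + 2 * t * c + t ^ 2 * n))
      = Real.exp (-s * Z) * Real.exp (-s * (t ^ 2 * n)) * Real.exp (-(2 * s * t * c)) := by
    rw [← Real.exp_add, ← Real.exp_add]; ring_nf
  have f2 : Real.exp (-s * (Z - 2 * t * c + t ^ 2 * n))
      = Real.exp (-s * Z) * Real.exp (-s * (t ^ 2 * n)) * Real.exp (2 * s * t * c) := by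
    rw [← Real.exp_add, ← Real.exp_add]; ring_nf
  rw [f1, f2]
  have g1 := exp_add_exp_neg_ge (2 * s * t * c)
  have g2 : 1 - s * (t ^ 2 * n) ≤ Real.exp (-s * (t ^ 2 * n)) := by
    have := Real.add_one_le_exp (-s * (t ^ 2 * n)); linarith
  have g3 : 0 < Real.exp (-s * (t ^ 2 * n)) := Real.exp_pos _
  have g4 : 0 < Real.exp (-s * Z) := Real.exp_pos _
  set G := Real.exp (-s * Z)
  set E1 := Real.exp (-s * (t ^ 2 * n))
  have k1 : E1 * (2 + (2 * s * t * c) ^ 2) ≤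
    E1 * (Real.exp (-(2 * s * t * c)) + Real.exp (2 * s * t * c)) :=
    mul_le_mul_of_nonneg_left g1 g3.le
  have k2 : (E1 * (4 * s ^ 2 * c ^ 2) - 2 * s * n) * t ^ 2 ≤
    E1 * (Real.exp (-(2 * s * t * c)) + Real.exp (2 * s * t * c)) - 2 := by nlinarith
  have k3 := mul_le_mul_of_nonneg_left k2 g4.le
  linarith

/-- lower bound for the second-order form at a minimum of `u` minus a Gaussian-like combination -/
lemma gauss_limit {d : ℕ} (s : ℝ) (hs : 0 < s) (κ : ℝ) (hκ : 0 < κ) (p x ξ : E d) (Q : ℝ → ℝ) (q : ℝ)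
    (hQ : Tendsto Q (𝓝[>] 0) (𝓝 q))
    (h : ∀ᶠ t in 𝓝[>] (0:ℝ), κ * (sd (fun x => Real.exp (-s * ‖x - p‖ ^ 2)) (t • ξ) x / t ^ 2) ≤ Q t) :
    κ * (Real.exp (-s * ‖x - p‖ ^ 2) * (4 * s ^ 2 * ⟪x - p, ξ⟫ ^ 2 - 2 * s * ‖ξ‖ ^ 2)) ≤ q := by
  have hc : Continuous (fun t : ℝ => κ * (Real.exp (-s * ‖x - p‖ ^ 2) *
      (Real.exp (-s * (t ^ 2 * ‖ξ‖ ^ 2)) * (4 * s ^ 2 * ⟪x - p, ξ⟫ ^ 2) - 2 * s * ‖ξ‖ ^ 2))) := by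
    fun_prop
  have h1 := (hc.tendsto 0).mono_left (nhdsWithin_le_nhds (s := Ioi 0))
  simp only [ne_eq, OfNat.ofNat_ne_zero, not_false_eq_true, zero_pow, zero_mul, mul_zero,
    Real.exp_zero, one_mul] at h1
  refine le_of_tendsto_of_tendsto h1 hQ ?_
  filter_upwards [h, self_mem_nhdsWithin] with t ht ht0
  exact (mul_le_mul_of_nonneg_left (gauss_sd s hs p x ξ t ht0) hκ.le).trans ht

lemma eventually_line {d : ℕ} {U : Set (E d)} {x : E d} (hU : U ∈ 𝓝 x) (ξ : E d) :
    ∀ᶠ t in 𝓝[>] (0:ℝ), x + t • ξ ∈ U ∧ x - t • ξ ∈ U := by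
  have h1 : Continuous (fun t : ℝ => x + t • ξ) := by fun_prop
  have h2 : Continuous (fun t : ℝ => x - t • ξ) := by fun_prop
  have a : ∀ᶠ t in 𝓝 (0:ℝ), x + t • ξ ∈ U := h1.continuousAt.eventually_mem (by simpa using hU)
  have b : ∀ᶠ t in 𝓝 (0:ℝ), x - t • ξ ∈ U := h2.continuousAt.eventually_mem (by simpa using hU)
  exact (a.and b).filter_mono nhdsWithin_le_nhds

/-- The compact annulus. -/
def ann {d : ℕ} (p : E d) (a b : ℝ) : Set (E d) := closedBall p b ∩ {x | a ≤ ‖x - p‖}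

lemma ann_compact {d : ℕ} (p : E d) (a b : ℝ) : IsCompact (ann p a b) :=
  (isCompact_closedBall p b).inter_right (isClosed_le (by fun_prop) (by fun_prop))

lemma mem_ann {d : ℕ} {p x : E d} {a b : ℝ} : x ∈ ann p a b ↔ ‖x - p‖ ≤ b ∧ a ≤ ‖x - p‖ := by
  simp [ann, mem_closedBall, dist_eq_norm]

lemma ann_nhds {d : ℕ} {p x : E d} {a b : ℝ} (h1 : a < ‖x - p‖) (h2 : ‖x - p‖ < b) :
    ann p a b ∈ 𝓝 x := by
  have hc : Continuous (fun y : E d => ‖y - p‖) := by fun_prop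
  filter_upwards [hc.continuousAt.eventually_lt continuousAt_const h2,
    continuousAt_const.eventually_lt hc.continuousAt h1] with y hy1 hy2
  exact mem_ann.2 ⟨hy1.le, hy2.le⟩

/-- The comparison principle on an annulus for `u` itself. -/
lemma single_cmp {d : ℕ} {δ θ : ℝ} (hδ : 0 < δ) {a b κ s : ℝ} (ha : 0 < a)
    (hκ : 0 < κ) (hs : 0 < s) (hsa : (d:ℝ) < 2 * δ ^ 2 * a ^ 2 * s) {u : E d → ℝ} (hu : Good δ θ u)
    (p : E d) (m : ℝ)
    (hb : ∀ x, ‖x - p‖ = a ∨ ‖x - p‖ = b → m + κ * Real.exp (-s * ‖x - p‖ ^ 2) ≤ u x)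
    (x : E d) (hxa : a ≤ ‖x - p‖) (hxb : ‖x - p‖ ≤ b) :
    m + κ * Real.exp (-s * ‖x - p‖ ^ 2) ≤ u x := by
  obtain ⟨hcd, F, Fb, hF, hF0, -, -, -, hX⟩ := hu
  have hcu : Continuous u := hcd.continuous
  set f : E d → ℝ := fun x => u x - κ * Real.exp (-s * ‖x - p‖ ^ 2) with hf
  obtain ⟨y, hy, hmin⟩ := (ann_compact p a b).exists_isMinOn ⟨x, mem_ann.2 ⟨hxb, hxa⟩⟩
    (f := f) (by fun_prop)
  have hmin' : ∀ z ∈ ann p a b, f y ≤ f z := fun z hz => hmin hz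
  by_contra hlt
  push Not at hlt
  have h1 : f y < m := by
    have := hmin' x (mem_ann.2 ⟨hxb, hxa⟩)
    simp only [hf] at this ⊢; linarith
  obtain ⟨hyb, hya⟩ := mem_ann.1 hy
  have hya' : a < ‖y - p‖ := lt_of_le_of_ne hya fun h => by
    have := hb y (Or.inl h.symm); simp only [hf] at h1; linarith
  have hyb' : ‖y - p‖ < b := lt_of_le_of_ne hyb fun h => by
    have := hb y (Or.inr h); simp only [hf] at h1; linarith
  obtain ⟨X, hXs, hFX, hXl⟩ := hX y
  have key : ∀ ξ : E d, κ * (Real.exp (-s * ‖y - p‖ ^ 2) *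
      (4 * s ^ 2 * ⟪y - p, ξ⟫ ^ 2 - 2 * s * ‖ξ‖ ^ 2)) ≤ qf X ξ := by
    intro ξ
    refine gauss_limit s hs κ hκ p y ξ _ _ (hXl ξ) ?_
    filter_upwards [eventually_line (ann_nhds hya' hyb') ξ, self_mem_nhdsWithin] with t ht ht0
    have k1 := hmin' _ ht.1
    have k2 := hmin' _ ht.2
    rw [← mul_div_assoc]
    refine div_le_div_of_nonneg_right ?_ (sq_nonneg t)
    simp only [hf, sd] at k1 k2 ⊢
    linarith
  set g := Real.exp (-s * ‖y - p‖ ^ 2)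
  have hg : 0 < g := Real.exp_pos _
  have q0 : ∀ ξ : E d, qf (0 : Matrix (Fin d) (Fin d) ℝ) ξ = 0 := fun ξ => by simp [qf]
  have := ell_lower hδ hF (X := 0) (Y := X) Matrix.isSymm_zero hXs (y - p)
    (l := κ * g * (4 * s ^ 2)) (μ := κ * g * (2 * s)) (by positivity) (by positivity)
    (fun ξ => by rw [q0]; linarith [key ξ])
  rw [hF0, hFX] at this
  have h2 : a ^ 2 ≤ ‖y - p‖ ^ 2 := by gcongr
  have h3 : δ * (κ * g * (4 * s ^ 2)) * a ^ 2 ≤ δ * (κ * g * (4 * s ^ 2)) * ‖y - p‖ ^ 2 := by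
    gcongr
  have h4 : δ⁻¹ * (d * (κ * g * (2 * s))) < δ * (κ * g * (4 * s ^ 2)) * a ^ 2 := by
    rw [inv_mul_lt_iff₀ hδ]
    have : 0 < κ * g * (2 * s) := by positivity
    nlinarith
  linarith
open Topology

lemma sd_norm_sq {d : ℕ} (α ξ : E d) (t : ℝ) :
    ‖α + t • ξ‖ ^ 2 + ‖α - t • ξ‖ ^ 2 - 2 * ‖α‖ ^ 2 = 2 * t ^ 2 * ‖ξ‖ ^ 2 := by
  rw [norm_add_sq_real, norm_sub_sq_real, norm_smul, mul_pow, Real.norm_eq_abs, sq_abs]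
  ring

/-- one-sided Hessian bound from an interior minimum with quadratic penalty -/
lemma penal_bound {d : ℕ} {u : E d → ℝ} {X : Matrix (Fin d) (Fin d) ℝ} {c α : E d} {k : ℝ}
    (hα : ‖α‖ < 1)
    (hX : ∀ ξ : E d, Tendsto (fun t : ℝ => sd u (t • ξ) (c + α) / t ^ 2) (𝓝[>] 0) (𝓝 (qf X ξ)))
    (hmin : ∀ β : E d, ‖β‖ ≤ 1 → u (c + α) + k * ‖α‖ ^ 2 ≤ u (c + β) + k * ‖β‖ ^ 2) (ξ : E d) :
    -(2 * k) * ‖ξ‖ ^ 2 ≤ qf X ξ := by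
  refine ge_of_tendsto (hX ξ) ?_
  have hU : closedBall (0 : E d) 1 ∈ 𝓝 α := by
    have : ball (0 : E d) 1 ∈ 𝓝 α := isOpen_ball.mem_nhds (by simpa using hα)
    exact mem_of_superset this ball_subset_closedBall
  filter_upwards [eventually_line hU ξ, self_mem_nhdsWithin] with t ht ht0
  have ht0' : (0:ℝ) < t := ht0
  rw [le_div_iff₀ (by positivity)]
  have k1 := hmin (α + t • ξ) (by simpa using ht.1)
  have k2 := hmin (α - t • ξ) (by simpa using ht.2)
  have k3 := sd_norm_sq α ξ t
  simp only [sd]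
  rw [← add_assoc] at k1
  rw [← add_sub_assoc] at k2
  have : -(2 * k) * ‖ξ‖ ^ 2 * t ^ 2 = - k * (2 * t ^ 2 * ‖ξ‖ ^ 2) := by ring
  rw [this, ← k3]
  linarith

/-- the penalized minimum is attained close to the diagonal -/
lemma penal_small {d : ℕ} {u : E d → ℝ} {c α : E d} {k Λ : ℝ} (hΛ : 0 ≤ Λ)
    (hL : |u (c + α) - u c| ≤ Λ * ‖α‖)
    (hmin : u (c + α) + k * ‖α‖ ^ 2 ≤ u c) : k * ‖α‖ ≤ Λ := by
  rcases (norm_nonneg α).eq_or_lt with h | h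
  · rw [← h, mul_zero]; exact hΛ
  · have := (abs_le.1 hL).1
    have h2 : (k * ‖α‖) * ‖α‖ ≤ Λ * ‖α‖ := by nlinarith
    exact le_of_mul_le_mul_right h2 h

set_option maxHeartbeats 2000000 in
lemma triple {d : ℕ} {δ : ℝ} (hδ : 0 < δ) {Λ a b κ s η : ℝ} (hΛ : 0 < Λ) (ha : 0 < a)
    (hκ : 0 < κ) (hs : 0 < s) (hη : 0 < η) (hsa : (d:ℝ) < 2 * δ ^ 2 * a ^ 2 * s) :
    ∃ θ : ℝ, 0 < θ ∧ ∀ u : E d → ℝ, Good δ θ u → ∀ (h p : E d) (m : ℝ),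
    (∀ x y : E d, ‖x - p‖ ≤ b + ‖h‖ + 1 → ‖y - p‖ ≤ b + ‖h‖ + 1 → |u x - u y| ≤ Λ * ‖x - y‖) →
    (∀ x, ‖x - p‖ = a ∨ ‖x - p‖ = b → m + κ * Real.exp (-s * ‖x - p‖ ^ 2) ≤ sd u h x) →
    ∀ x : E d, a ≤ ‖x - p‖ → ‖x - p‖ ≤ b →
    m + κ * Real.exp (-s * ‖x - p‖ ^ 2) - η ≤ sd u h x := by
  -- the penalty coefficient
  obtain ⟨k, hk, hkΛ, hkη⟩ : ∃ k : ℝ, 0 < k ∧ Λ < k ∧ 2 * Λ ^ 2 ≤ η * k := by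
    refine ⟨Λ + 1 + 2 * Λ ^ 2 / η, by positivity, ?_, ?_⟩
    · have : 0 < 2 * Λ ^ 2 / η := by positivity
      linarith
    · have : η * (Λ + 1 + 2 * Λ ^ 2 / η) = η * (Λ + 1) + 2 * Λ ^ 2 := by field_simp
      rw [this]; have : 0 < η * (Λ + 1) := by positivity
      linarith
  set B : ℝ := δ⁻¹ * δ⁻¹ * d + d with hB
  have hB0 : 0 ≤ B := by positivity
  set M1 : ℝ := 2 * k * B with hM1
  set M2 : ℝ := (M1 + κ * s) * B with hM2
  have hM10 : 0 ≤ M1 := by positivity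
  have hM20 : 0 ≤ M2 := by positivity
  set c₀ : ℝ := κ * Real.exp (-s * b ^ 2) * s * (2 * δ * s * a ^ 2 - δ⁻¹ * d) with hc₀
  have hpos : 0 < 2 * δ * s * a ^ 2 - δ⁻¹ * d := by
    rw [sub_pos, inv_mul_lt_iff₀ hδ]; nlinarith
  have hc₀p : 0 < c₀ := by
    have := Real.exp_pos (-s * b ^ 2); positivity
  refine ⟨c₀ / (M1 + M2 + 1), by positivity, ?_⟩
  set θ := c₀ / (M1 + M2 + 1) with hθ
  have hθ0 : 0 < θ := by positivity
  have hθM : θ * (M1 + M2) < c₀ := by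
    have : θ * (M1 + M2 + 1) = c₀ := by rw [hθ]; field_simp
    nlinarith
  intro u hu h p m hL hbd x hxa hxb
  obtain ⟨hcd, F, Fb, hF, hF0, hconv, hFb, hclose, hX⟩ := hu
  have hcu : Continuous u := hcd.continuous
  set Φ : E d × E d × E d → ℝ := fun q =>
    u (q.1 + h + q.2.1) + u (q.1 - h + q.2.2) - 2 * u q.1
      - κ * Real.exp (-s * ‖q.1 - p‖ ^ 2) + k * (‖q.2.1‖ ^ 2 + ‖q.2.2‖ ^ 2) with hΦ
  have hΦc : Continuous Φ := by fun_prop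
  have hcomp : IsCompact (ann p a b ×ˢ (closedBall (0 : E d) 1 ×ˢ closedBall (0 : E d) 1)) :=
    (ann_compact p a b).prod ((isCompact_closedBall _ _).prod (isCompact_closedBall _ _))
  have hx0 : ((x, 0, 0) : E d × E d × E d) ∈
      (ann p a b ×ˢ (closedBall (0 : E d) 1 ×ˢ closedBall (0 : E d) 1)) :=
    ⟨mem_ann.2 ⟨hxb, hxa⟩, by simp, by simp⟩
  obtain ⟨⟨y, α, β⟩, ⟨hy, hα, hβ⟩, hmin⟩ := hcomp.exists_isMinOn ⟨_, hx0⟩ hΦc.continuousOn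
  have hmin' : ∀ y' α' β' : E d, y' ∈ ann p a b → ‖α'‖ ≤ 1 → ‖β'‖ ≤ 1 →
      Φ (y, α, β) ≤ Φ (y', α', β') := fun y' α' β' h1 h2 h3 =>
    hmin (show (y', α', β') ∈ _ from ⟨h1, by simpa using h2, by simpa using h3⟩)
  simp only [mem_closedBall, dist_zero_right] at hα hβ
  by_contra hlt
  push Not at hlt
  have hΦlt : Φ (y, α, β) < m - η := by
    have h1 := hmin' x 0 0 hx0.1 (by simp) (by simp)
    have h2 : Φ (x, 0, 0) = sd u h x - κ * Real.exp (-s * ‖x - p‖ ^ 2) := by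
      simp [hΦ, sd]
    linarith
  obtain ⟨hyb, hya⟩ := mem_ann.1 hy
  have hminα : ∀ α' : E d, ‖α'‖ ≤ 1 →
      u (y + h + α) + k * ‖α‖ ^ 2 ≤ u (y + h + α') + k * ‖α'‖ ^ 2 := fun α' h1 => by
    have := hmin' y α' β hy h1 hβ
    simp only [hΦ] at this; linarith
  have hminβ : ∀ β' : E d, ‖β'‖ ≤ 1 →
      u (y - h + β) + k * ‖β‖ ^ 2 ≤ u (y - h + β') + k * ‖β'‖ ^ 2 := fun β' h1 => by
    have := hmin' y α β' hy hα h1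
    simp only [hΦ] at this; linarith
  have hLα : |u (y + h + α) - u (y + h)| ≤ Λ * ‖α‖ := by
    have := hL (y + h + α) (y + h) ?_ ?_
    · simpa using this
    · calc ‖y + h + α - p‖ = ‖(y - p) + h + α‖ := by congr 1; abel
        _ ≤ ‖y - p‖ + ‖h‖ + ‖α‖ := norm_add₃_le
        _ ≤ _ := by linarith
    · calc ‖y + h - p‖ = ‖(y - p) + h‖ := by congr 1; abel
        _ ≤ ‖y - p‖ + ‖h‖ := norm_add_le _ _
        _ ≤ _ := by linarith
  have hLβ : |u (y - h + β) - u (y - h)| ≤ Λ * ‖β‖ := by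
    have := hL (y - h + β) (y - h) ?_ ?_
    · simpa using this
    · calc ‖y - h + β - p‖ = ‖(y - p) + -h + β‖ := by congr 1; abel
        _ ≤ ‖y - p‖ + ‖-h‖ + ‖β‖ := norm_add₃_le
        _ ≤ _ := by rw [norm_neg]; linarith
    · calc ‖y - h - p‖ = ‖(y - p) - h‖ := by congr 1; abel
        _ ≤ ‖y - p‖ + ‖h‖ := norm_sub_le _ _
        _ ≤ _ := by linarith
  have hkα : k * ‖α‖ ≤ Λ := penal_small hΛ.le hLα (by simpa using hminα 0 (by simp))
  have hkβ : k * ‖β‖ ≤ Λ := penal_small hΛ.le hLβ (by simpa using hminβ 0 (by simp))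
  have hα1 : ‖α‖ < 1 := by
    by_contra hh
    push Not at hh
    have := mul_le_mul_of_nonneg_left hh hk.le
    linarith
  have hβ1 : ‖β‖ < 1 := by
    by_contra hh
    push Not at hh
    have := mul_le_mul_of_nonneg_left hh hk.le
    linarith
  -- the value is close to the second difference
  have hval : sd u h y - κ * Real.exp (-s * ‖y - p‖ ^ 2) - η ≤ Φ (y, α, β) := by
    have h1 := (abs_le.1 hLα).1
    have h2 := (abs_le.1 hLβ).1
    have h3 : Λ * ‖α‖ ≤ η / 2 := by
      have : k * (Λ * ‖α‖) ≤ k * (η / 2) := by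
        have q1 := mul_le_mul_of_nonneg_left hkα hΛ.le
        have q2 : k * (Λ * ‖α‖) = Λ * (k * ‖α‖) := by ring
        rw [q2]
        rw [pow_two] at hkη
        linarith
      exact le_of_mul_le_mul_left this hk
    have h4 : Λ * ‖β‖ ≤ η / 2 := by
      have : k * (Λ * ‖β‖) ≤ k * (η / 2) := by
        have q1 := mul_le_mul_of_nonneg_left hkβ hΛ.le
        have q2 : k * (Λ * ‖β‖) = Λ * (k * ‖β‖) := by ring
        rw [q2]
        rw [pow_two] at hkη
        linarith
      exact le_of_mul_le_mul_left this hk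
    have h5 : 0 ≤ k * (‖α‖ ^ 2 + ‖β‖ ^ 2) := by positivity
    simp only [hΦ, sd]
    linarith
  have hya' : a < ‖y - p‖ := lt_of_le_of_ne hya fun h => by
    have := hbd y (Or.inl h.symm); linarith
  have hyb' : ‖y - p‖ < b := lt_of_le_of_ne hyb fun h => by
    have := hbd y (Or.inr h); linarith
  obtain ⟨X, hXs, hFX, hXl⟩ := hX y
  obtain ⟨Y, hYs, hFY, hYl⟩ := hX (y + h + α)
  obtain ⟨Z, hZs, hFZ, hZl⟩ := hX (y - h + β)
  have hYlo := penal_bound hα1 hYl hminα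
  have hZlo := penal_bound hβ1 hZl hminβ
  have hYf : frob Y ≤ M1 := frob_bound_lo hδ hF hF0 hYs hFY (by positivity) hYlo
  have hZf : frob Z ≤ M1 := frob_bound_lo hδ hF hF0 hZs hFZ (by positivity) hZlo
  set g := Real.exp (-s * ‖y - p‖ ^ 2) with hgdef
  have key : ∀ ξ : E d, κ * (g * (4 * s ^ 2 * ⟪y - p, ξ⟫ ^ 2 - 2 * s * ‖ξ‖ ^ 2)) ≤
      qf Y ξ + qf Z ξ - 2 * qf X ξ := by
    intro ξ
    refine gauss_limit s hs κ hκ p y ξ _ _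
      (((hYl ξ).add (hZl ξ)).sub ((hXl ξ).const_mul 2)) ?_
    filter_upwards [eventually_line (ann_nhds hya' hyb') ξ, self_mem_nhdsWithin] with t ht ht0
    have ht0' : (0:ℝ) < t := ht0
    have k1 := hmin' _ α β ht.1 hα hβ
    have k2 := hmin' _ α β ht.2 hα hβ
    rw [← mul_div_assoc, ← mul_div_assoc, ← add_div, ← sub_div]
    refine div_le_div_of_nonneg_right ?_ (sq_nonneg t)
    simp only [hΦ, sd] at k1 k2 ⊢
    have e1 : y + t • ξ + h + α = y + h + α + t • ξ := by abel
    have e2 : y - t • ξ + h + α = y + h + α - t • ξ := by abel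
    have e3 : y + t • ξ - h + β = y - h + β + t • ξ := by abel
    have e4 : y - t • ξ - h + β = y - h + β - t • ξ := by abel
    rw [e1, e3] at k1
    rw [e2, e4] at k2
    linarith
  have hg : 0 < g := Real.exp_pos _
  have hg1 : g ≤ 1 := by
    rw [hgdef, Real.exp_le_one_iff]
    have : 0 ≤ s * ‖y - p‖ ^ 2 := by positivity
    linarith
  have hXhi : ∀ ξ : E d, qf X ξ ≤ (M1 + κ * s) * ‖ξ‖ ^ 2 := fun ξ => by
    have h1 := key ξ
    have h2 := (qf_le_frob Y ξ).trans (mul_le_mul_of_nonneg_right hYf (sq_nonneg ‖ξ‖))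
    have h3 := (qf_le_frob Z ξ).trans (mul_le_mul_of_nonneg_right hZf (sq_nonneg ‖ξ‖))
    have h4 : 0 ≤ κ * (g * (4 * s ^ 2 * ⟪y - p, ξ⟫ ^ 2)) := by positivity
    have h5 : κ * (g * (2 * s * ‖ξ‖ ^ 2)) ≤ κ * (1 * (2 * s * ‖ξ‖ ^ 2)) := by gcongr
    linarith
  have hXf : frob X ≤ M2 := frob_bound_hi hδ hF hF0 hXs hFX (by positivity) hXhi
  -- convexity
  have hW : Fb ((1/2 : ℝ) • Y + (1/2 : ℝ) • Z) ≤ θ * M1 := by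
    have h1 := hconv.2 (mem_univ Y) (mem_univ Z) (by norm_num : (0:ℝ) ≤ 1/2)
      (by norm_num : (0:ℝ) ≤ 1/2) (by norm_num)
    have h2 := abs_le.1 (hclose Y hYs)
    have h3 := abs_le.1 (hclose Z hZs)
    rw [hFY] at h2
    rw [hFZ] at h3
    have h4 : θ * frob Y ≤ θ * M1 := mul_le_mul_of_nonneg_left hYf hθ0.le
    have h5 : θ * frob Z ≤ θ * M1 := mul_le_mul_of_nonneg_left hZf hθ0.le
    simp only [smul_eq_mul] at h1
    linarith [h2.1, h3.1]
  have hXF : - (θ * M2) ≤ Fb X := by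
    have h2 := abs_le.1 (hclose X hXs)
    rw [hFX] at h2
    have h4 : θ * frob X ≤ θ * M2 := mul_le_mul_of_nonneg_left hXf hθ0.le
    linarith [h2.2]
  have hfin := ell_lower hδ hFb hXs ((hYs.smul (1/2 : ℝ)).add (hZs.smul (1/2 : ℝ))) (y - p)
    (l := κ * g * (2 * s ^ 2)) (μ := κ * g * s) (by positivity) (by positivity)
    (fun ξ => by rw [qf_add, qf_smul, qf_smul]; linarith [key ξ])
  have h2 : a ^ 2 ≤ ‖y - p‖ ^ 2 := by gcongr
  have h3 : δ * (κ * g * (2 * s ^ 2)) * a ^ 2 ≤ δ * (κ * g * (2 * s ^ 2)) * ‖y - p‖ ^ 2 := by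
    gcongr
  have h4 : Real.exp (-s * b ^ 2) ≤ g := by
    rw [hgdef, Real.exp_le_exp]
    have : s * ‖y - p‖ ^ 2 ≤ s * b ^ 2 := by gcongr
    linarith
  have h5 : c₀ ≤ κ * g * s * (2 * δ * s * a ^ 2 - δ⁻¹ * d) := by
    rw [hc₀]; gcongr
  linarith
lemma barrier_params {d : ℕ} (hd : 1 ≤ d) {δ : ℝ} (hδ : 0 < δ) {a : ℝ} (ha : 0 < a) :
    ∃ s : ℝ, 0 < s ∧ (d:ℝ) < 2 * δ ^ 2 * a ^ 2 * s := by
  have hd' : (0:ℝ) < d := by exact_mod_cast hd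
  refine ⟨d / (δ ^ 2 * a ^ 2), by positivity, ?_⟩
  have : 2 * δ ^ 2 * a ^ 2 * (d / (δ ^ 2 * a ^ 2)) = 2 * d := by field_simp
  rw [this]; linarith

lemma exp_gap {s T : ℝ} (hs : 0 < s) (hT : 0 < T) :
    0 < Real.exp (-s * T ^ 2) - Real.exp (-s * (T + 1) ^ 2) := by
  rw [sub_pos, Real.exp_lt_exp]
  nlinarith [mul_pos hs hT]

lemma exp_anti {s r T : ℝ} (hs : 0 < s) (hr : 0 ≤ r) (hrT : r ≤ T) :
    Real.exp (-s * T ^ 2) ≤ Real.exp (-s * r ^ 2) := by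
  rw [Real.exp_le_exp]
  have : s * r ^ 2 ≤ s * T ^ 2 := by gcongr
  linarith

lemma exp_le1 {s r : ℝ} (hs : 0 < s) : Real.exp (-s * r ^ 2) ≤ 1 := by
  rw [Real.exp_le_one_iff]
  have : 0 ≤ s * r ^ 2 := by positivity
  linarith

lemma H1 {d : ℕ} (hd : 1 ≤ d) {δ : ℝ} (hδ : 0 < δ) {σ T Λ H : ℝ} (hσ : 0 < σ) (hT : 0 < T)
    (hΛ : 0 < Λ) :
    ∃ η : ℝ, 0 < η ∧ ∃ θ : ℝ, 0 < θ ∧ ∀ u : E d → ℝ, Good δ θ u → ∀ (h x₀ : E d) (m : ℝ),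
    ‖h‖ ≤ H →
    (∀ x y : E d, ‖x - x₀‖ ≤ 2 * T + H + 2 → ‖y - x₀‖ ≤ 2 * T + H + 2 →
      |u x - u y| ≤ Λ * ‖x - y‖) →
    (∀ x, ‖x - x₀‖ ≤ 2 * T + 1 → m ≤ sd u h x) → sd u h x₀ ≤ m + η →
    ∀ x, ‖x - x₀‖ ≤ T → sd u h x ≤ m + σ := by
  set a : ℝ := min 1 (σ / (8 * Λ)) with hadef
  have ha : 0 < a := by rw [hadef]; positivity
  have ha1 : a ≤ 1 := min_le_left _ _
  have haΛ : 4 * Λ * a ≤ σ / 2 := by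
    have : 4 * Λ * a ≤ 4 * Λ * (σ / (8 * Λ)) := by
      apply mul_le_mul_of_nonneg_left (min_le_right _ _) (by positivity)
    have e : 4 * Λ * (σ / (8 * Λ)) = σ / 2 := by field_simp; norm_num
    linarith
  obtain ⟨s, hs, hsa⟩ := barrier_params hd hδ ha
  set κ0 := σ / 2 * (Real.exp (-s * T ^ 2) - Real.exp (-s * (T + 1) ^ 2)) with hκ0
  have hκ0p : 0 < κ0 := mul_pos (by positivity) (exp_gap hs hT)
  obtain ⟨θ, hθ, htr⟩ := triple (d := d) (b := T + 1) hδ hΛ ha (half_pos hσ) hs (half_pos hκ0p) hsa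
  refine ⟨min (κ0 / 4) (σ / 4), by positivity, θ, hθ, ?_⟩
  intro u hu h x₀ m hh hL hm hx₀ p hp
  by_contra hlt
  push Not at hlt
  have hη1 : min (κ0 / 4) (σ / 4) ≤ κ0 / 4 := min_le_left _ _
  have hη2 : min (κ0 / 4) (σ / 4) ≤ σ / 4 := min_le_right _ _
  have tri : ∀ x r, ‖x - p‖ ≤ r → ‖x - x₀‖ ≤ r + T := fun x r hx => by
    have : x - x₀ = (x - p) + (p - x₀) := by abel
    rw [this]
    exact (norm_add_le _ _).trans (add_le_add hx hp)
  have hnear : ∀ x, ‖x - p‖ ≤ a → m + σ / 2 ≤ sd u h x := fun x hx => by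
    have b0 := tri x a hx
    have hx1 : ‖x + h - x₀‖ ≤ 2 * T + H + 2 := by
      have : x + h - x₀ = (x - x₀) + h := by abel
      rw [this]; have := norm_add_le (x - x₀) h; linarith
    have hx2 : ‖x - h - x₀‖ ≤ 2 * T + H + 2 := by
      have : x - h - x₀ = (x - x₀) - h := by abel
      rw [this]; have := norm_sub_le (x - x₀) h; linarith
    have hp1 : ‖p + h - x₀‖ ≤ 2 * T + H + 2 := by
      have : p + h - x₀ = (p - x₀) + h := by abel
      rw [this]; have := norm_add_le (p - x₀) h; linarith
    have hp2 : ‖p - h - x₀‖ ≤ 2 * T + H + 2 := by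
      have : p - h - x₀ = (p - x₀) - h := by abel
      rw [this]; have := norm_sub_le (p - x₀) h; linarith
    have hH0 : 0 ≤ H := (norm_nonneg h).trans hh
    have l1 := hL _ _ hx1 hp1
    have l2 := hL _ _ hx2 hp2
    have l3 := hL x p (by linarith) (by linarith)
    have e1 : x + h - (p + h) = x - p := by abel
    have e2 : x - h - (p - h) = x - p := by abel
    rw [e1] at l1
    rw [e2] at l2
    have l4 : Λ * ‖x - p‖ ≤ Λ * a := mul_le_mul_of_nonneg_left hx hΛ.le
    have := (abs_le.1 l1).1
    have := (abs_le.1 l2).1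
    have := (abs_le.1 l3).2
    simp only [sd] at hlt ⊢
    linarith
  have hpx : ‖x₀ - p‖ ≤ T := by rw [norm_sub_rev]; exact hp
  rcases le_or_gt a ‖x₀ - p‖ with h1 | h1
  · have := htr u hu h p (m - σ / 2 * Real.exp (-s * (T + 1) ^ 2)) ?_ ?_ x₀ h1 (by linarith)
    · have h3 := exp_anti hs (norm_nonneg _) hpx
      have h4 : κ0 ≤ σ / 2 * (Real.exp (-s * ‖x₀ - p‖ ^ 2) - Real.exp (-s * (T + 1) ^ 2)) := by
        rw [hκ0]; gcongr
      linarith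
    · intro x y hx hy
      have := tri x _ hx
      have := tri y _ hy
      exact hL x y (by linarith) (by linarith)
    · rintro x (hx | hx)
      · have h2 := hnear x hx.le
        have h3 : σ / 2 * Real.exp (-s * ‖x - p‖ ^ 2) ≤ σ / 2 * 1 := by
          gcongr; exact exp_le1 hs
        have h4 : 0 < σ / 2 * Real.exp (-s * (T + 1) ^ 2) := by positivity
        linarith
      · rw [hx]
        have := hm x (by have := tri x _ hx.le; linarith)
        linarith
  · have := hnear x₀ h1.le
    linarith

lemma H2 {d : ℕ} (hd : 1 ≤ d) {δ : ℝ} (hδ : 0 < δ) {σ T Λ : ℝ} (hσ : 0 < σ) (hT : 0 < T)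
    (hΛ : 0 < Λ) :
    ∃ η : ℝ, 0 < η ∧ ∀ (θ : ℝ) (u : E d → ℝ), Good δ θ u → ∀ (x₀ : E d) (m : ℝ),
    (∀ x y : E d, ‖x - x₀‖ ≤ 2 * T + 1 → ‖y - x₀‖ ≤ 2 * T + 1 →
      |u x - u y| ≤ Λ * ‖x - y‖) →
    (∀ x, ‖x - x₀‖ ≤ 2 * T + 1 → m ≤ u x) → u x₀ ≤ m + η →
    ∀ x, ‖x - x₀‖ ≤ T → u x ≤ m + σ := by
  set a : ℝ := min 1 (σ / (2 * Λ)) with hadef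
  have ha : 0 < a := by rw [hadef]; positivity
  have ha1 : a ≤ 1 := min_le_left _ _
  have haΛ : Λ * a ≤ σ / 2 := by
    have : Λ * a ≤ Λ * (σ / (2 * Λ)) := by
      apply mul_le_mul_of_nonneg_left (min_le_right _ _) (by positivity)
    have e : Λ * (σ / (2 * Λ)) = σ / 2 := by field_simp
    linarith
  obtain ⟨s, hs, hsa⟩ := barrier_params hd hδ ha
  set κ0 := σ / 2 * (Real.exp (-s * T ^ 2) - Real.exp (-s * (T + 1) ^ 2)) with hκ0
  have hκ0p : 0 < κ0 := mul_pos (by positivity) (exp_gap hs hT)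
  refine ⟨min (κ0 / 4) (σ / 4), by positivity, ?_⟩
  intro θ u hu x₀ m hL hm hx₀ p hp
  by_contra hlt
  push Not at hlt
  have hη1 : min (κ0 / 4) (σ / 4) ≤ κ0 / 4 := min_le_left _ _
  have hη2 : min (κ0 / 4) (σ / 4) ≤ σ / 4 := min_le_right _ _
  have tri : ∀ x r, ‖x - p‖ ≤ r → ‖x - x₀‖ ≤ r + T := fun x r hx => by
    have : x - x₀ = (x - p) + (p - x₀) := by abel
    rw [this]
    exact (norm_add_le _ _).trans (add_le_add hx hp)
  have hnear : ∀ x, ‖x - p‖ ≤ a → m + σ / 2 ≤ u x := fun x hx => by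
    have b0 := tri x a hx
    have l3 := hL x p (by linarith) (by linarith)
    have l4 : Λ * ‖x - p‖ ≤ Λ * a := mul_le_mul_of_nonneg_left hx hΛ.le
    have := (abs_le.1 l3).1
    linarith
  have hpx : ‖x₀ - p‖ ≤ T := by rw [norm_sub_rev]; exact hp
  rcases le_or_gt a ‖x₀ - p‖ with h1 | h1
  · have := single_cmp (b := T + 1) hδ ha (half_pos hσ) hs hsa hu p
      (m - σ / 2 * Real.exp (-s * (T + 1) ^ 2)) ?_ x₀ h1 (by linarith)
    · have h3 := exp_anti hs (norm_nonneg _) hpx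
      have h4 : κ0 ≤ σ / 2 * (Real.exp (-s * ‖x₀ - p‖ ^ 2) - Real.exp (-s * (T + 1) ^ 2)) := by
        rw [hκ0]; gcongr
      linarith
    · rintro x (hx | hx)
      · have h2 := hnear x hx.le
        have h3 : σ / 2 * Real.exp (-s * ‖x - p‖ ^ 2) ≤ σ / 2 * 1 := by
          gcongr; exact exp_le1 hs
        have h4 : 0 < σ / 2 * Real.exp (-s * (T + 1) ^ 2) := by positivity
        linarith
      · rw [hx]
        have := hm x (by have := tri x _ hx.le; linarith)
        linarith
  · have := hnear x₀ h1.le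
    linarith
open Topology

/-- contraction ratio of the dyadic telescoping -/
def qb (β : ℝ) : ℝ := 2 * (1 / 2 : ℝ) ^ β

lemma qb_pos (β : ℝ) : 0 < qb β := by unfold qb; positivity

lemma qb_lt {β : ℝ} (hβ : 1 < β) : qb β < 1 := by
  unfold qb
  have := Real.rpow_lt_rpow_of_exponent_gt (by norm_num : (0:ℝ) < 1/2) (by norm_num) hβ
  rw [Real.rpow_one] at this
  linarith

/-- constant in the dyadic telescoping -/
def C1 (β : ℝ) : ℝ := 1 / (1 - qb β)

lemma C1_pos {β : ℝ} (hβ : 1 < β) : 0 < C1 β := by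
  have := qb_lt hβ
  unfold C1
  have : 0 < 1 - qb β := by linarith
  positivity

lemma dyadic_rpow {β : ℝ} (k : ℕ) {r : ℝ} (hr : 0 ≤ r) :
    2 ^ k * (((2:ℝ) ^ k)⁻¹ * r) ^ β = qb β ^ k * r ^ β := by
  rw [Real.mul_rpow (by positivity) hr, qb, mul_pow]
  have : (((2:ℝ) ^ k)⁻¹) ^ β = ((1 / 2 : ℝ) ^ β) ^ k := by
    have e : ((2:ℝ) ^ k)⁻¹ = (1 / 2 : ℝ) ^ k := by rw [one_div, inv_pow]
    rw [e, ← Real.rpow_natCast, ← Real.rpow_mul (by norm_num), mul_comm, Real.rpow_mul (by norm_num),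
      Real.rpow_natCast]
  rw [this]; ring

lemma L1 {d : ℕ} {β A : ℝ} (hβ : 1 < β) (hA : 0 ≤ A) {u : E d → ℝ} (hu : Differentiable ℝ u)
    (x h : E d)
    (hZ : ∀ z g : E d, ‖z - x‖ ≤ ‖h‖ → ‖g‖ ≤ ‖h‖ → |sd u g z| ≤ A * ‖g‖ ^ β) :
    |u (x + h) - u x - fderiv ℝ u x h| ≤ C1 β * A * ‖h‖ ^ β := by
  set a : ℕ → ℝ := fun k => (2:ℝ) ^ k * (u (x + ((2:ℝ) ^ k)⁻¹ • h) - u x) with ha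
  have hq := qb_lt hβ
  have hq0 := qb_pos β
  have hC := C1_pos hβ
  have hCq : C1 β * (1 - qb β) = 1 := by
    unfold C1
    have : 1 - qb β ≠ 0 := by linarith
    field_simp
  have hstep : ∀ k, |a k - a (k + 1)| ≤ A * ‖h‖ ^ β * qb β ^ k := by
    intro k
    set g : E d := ((2:ℝ) ^ (k+1))⁻¹ • h with hg
    have hg2 : ((2:ℝ) ^ k)⁻¹ • h = g + g := by
      rw [hg, ← add_smul]
      congr 1
      rw [pow_succ]
      field_simp
      norm_num
    have hgn : ‖g‖ = ((2:ℝ) ^ (k+1))⁻¹ * ‖h‖ := by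
      rw [hg, norm_smul, Real.norm_eq_abs, abs_of_pos (by positivity)]
    have hgle : ‖g‖ ≤ ‖h‖ := by
      rw [hgn]
      refine mul_le_of_le_one_left (norm_nonneg _) (inv_le_one_of_one_le₀ ?_)
      exact one_le_pow₀ (by norm_num)
    have e : a k - a (k+1) = 2 ^ k * sd u g (x + g) := by
      simp only [ha, sd]
      rw [← hg, hg2, add_sub_cancel_right, add_assoc x g g, pow_succ]
      ring
    rw [e, abs_mul, abs_of_pos (by positivity : (0:ℝ) < 2 ^ k)]
    have h1 := hZ (x + g) g (by simpa using hgle) hgle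
    have h2 : ‖g‖ ^ β ≤ (((2:ℝ) ^ k)⁻¹ * ‖h‖) ^ β := by
      apply Real.rpow_le_rpow (norm_nonneg _) _ (by linarith)
      rw [hgn]
      gcongr
      · norm_num
      · omega
    calc 2 ^ k * |sd u g (x + g)| ≤ 2 ^ k * (A * (((2:ℝ) ^ k)⁻¹ * ‖h‖) ^ β) := by
          gcongr; exact h1.trans (by gcongr)
      _ = A * (2 ^ k * (((2:ℝ) ^ k)⁻¹ * ‖h‖) ^ β) := by ring
      _ = _ := by rw [dyadic_rpow k (norm_nonneg h)]; ring
  have hsum : ∀ n, |a 0 - a n| ≤ C1 β * A * ‖h‖ ^ β * (1 - qb β ^ n) := by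
    intro n
    induction n with
    | zero => simp
    | succ n ih =>
      have h1 := hstep n
      have h2 : |a 0 - a (n+1)| ≤ |a 0 - a n| + |a n - a (n+1)| := abs_sub_le _ _ _
      have h3 : A * ‖h‖ ^ β * qb β ^ n = (C1 β * (1 - qb β)) * (A * ‖h‖ ^ β * qb β ^ n) := by
        rw [hCq, one_mul]
      have h4 : C1 β * A * ‖h‖ ^ β * (1 - qb β ^ (n+1)) = C1 β * A * ‖h‖ ^ β * (1 - qb β ^ n)
          + (C1 β * (1 - qb β)) * (A * ‖h‖ ^ β * qb β ^ n) := by ring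
      rw [h4]
      linarith
  have hlim : Tendsto a atTop (𝓝 (fderiv ℝ u x h)) := by
    have := (hu x).hasFDerivAt.lim h (c := fun n : ℕ => (2:ℝ) ^ n) (l := atTop) ?_
    · simpa only [smul_eq_mul] using this
    · simp only [norm_pow, Real.norm_ofNat]
      exact tendsto_pow_atTop_atTop_of_one_lt (by norm_num)
  have ha0 : a 0 = u (x + h) - u x := by simp [ha]
  rw [← ha0]
  refine le_of_tendsto ((tendsto_const_nhds.sub hlim).abs) (Eventually.of_forall fun n => ?_)
  refine (hsum n).trans ?_
  have h5 : 0 ≤ qb β ^ n := by positivity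
  have h6 : 0 ≤ C1 β * A * ‖h‖ ^ β := by positivity
  nlinarith

lemma affine_of_sd_zero {d : ℕ} {u : E d → ℝ} (hu : Differentiable ℝ u)
    (h : ∀ g x : E d, sd u g x = 0) : ∃ (a : ℝ) (v : E d), ∀ x : E d, u x = a + ⟪v, x⟫ := by
  refine ⟨u 0, (InnerProductSpace.toDual ℝ (E d)).symm (fderiv ℝ u 0), fun x => ?_⟩
  have := L1 (β := 3/2) (A := 0) (by norm_num) le_rfl hu 0 x (fun z g _ _ => by rw [h]; simp)
  rw [InnerProductSpace.toDual_symm_apply]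
  simp only [zero_add, mul_zero, zero_mul, abs_nonpos_iff] at this
  linarith

/-- Normalisation by an affine function and the resulting Lipschitz bound. -/
lemma L2 {d : ℕ} {β A ρ : ℝ} (hβ : 1 < β) (hβ2 : β ≤ 2) (hA : 0 ≤ A) (hρ : 0 < ρ) :
    ∃ Λ : ℝ, 0 < Λ ∧ ∀ (u : E d → ℝ), ContDiff ℝ 2 u → ∀ x₀ : E d,
    (∀ z g : E d, ‖z - x₀‖ ≤ 2 * ρ → ‖g‖ ≤ 2 * ρ → |sd u g z| ≤ A * ‖g‖ ^ β) →
    ∃ (a : ℝ) (w : E d), (u x₀ - (a + ⟪w, x₀⟫) = 0) ∧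
      (∀ x, ‖x - x₀‖ ≤ 2 * ρ → |u x - (a + ⟪w, x⟫)| ≤ C1 β * A * ‖x - x₀‖ ^ β) ∧
      ∀ x y : E d, ‖x - x₀‖ ≤ ρ → ‖y - x₀‖ ≤ ρ →
        |(u x - (a + ⟪w, x⟫)) - (u y - (a + ⟪w, y⟫))| ≤ Λ * ‖x - y‖ := by
  have hC := C1_pos hβ
  set D : ℝ := C1 β * A * (2 * ρ) ^ β with hD
  have hD0 : 0 ≤ D := by positivity
  refine ⟨3 * D / ρ + 1, by positivity, ?_⟩
  intro u hu x₀ hZ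
  have hdu : Differentiable ℝ u := hu.differentiable (by norm_num)
  set w : E d := (InnerProductSpace.toDual ℝ (E d)).symm (fderiv ℝ u x₀) with hw
  have hwi : ∀ y, ⟪w, y⟫ = fderiv ℝ u x₀ y := fun y => by
    rw [hw, InnerProductSpace.toDual_symm_apply]
  set v : E d → ℝ := fun x => u x - (u x₀ - ⟪w, x₀⟫ + ⟪w, x⟫) with hv
  have hvd : Differentiable ℝ v := by
    refine hdu.sub ?_
    exact (differentiable_const _).add ((differentiable_const _).inner ℝ differentiable_id)
  have hvZ : ∀ z g : E d, ‖z - x₀‖ ≤ 2 * ρ → ‖g‖ ≤ 2 * ρ → |sd v g z| ≤ A * ‖g‖ ^ β := by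
    intro z g h1 h2
    rw [hv, sd_affine]; exact hZ z g h1 h2
  have hbd : ∀ x, ‖x - x₀‖ ≤ 2 * ρ → |v x| ≤ C1 β * A * ‖x - x₀‖ ^ β := by
    intro x hx
    have := L1 hβ hA hdu x₀ (x - x₀) (fun z g h1 h2 => hZ z g (h1.trans hx) (h2.trans hx))
    rw [add_sub_cancel, ← hwi, inner_sub_right] at this
    convert this using 2
    simp only [hv]; ring
  have hbD : ∀ x, ‖x - x₀‖ ≤ 2 * ρ → |v x| ≤ D := fun x hx => by
    refine (hbd x hx).trans ?_
    rw [hD]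
    gcongr
  refine ⟨u x₀ - ⟪w, x₀⟫, w, by ring, hbd, ?_⟩
  have hgrad : ∀ x, ‖x - x₀‖ ≤ ρ → ‖fderiv ℝ v x‖ ≤ 3 * D / ρ + 1 := by
    intro x hx
    refine ContinuousLinearMap.opNorm_le_bound _ (by positivity) fun y => ?_
    rcases eq_or_ne y 0 with rfl | hy
    · simp
    have hyp : 0 < ‖y‖ := norm_pos_iff.2 hy
    set t := ρ / ‖y‖ with ht
    have htp : 0 < t := by positivity
    have hty : ‖t • y‖ = ρ := by
      rw [norm_smul, Real.norm_eq_abs, abs_of_pos htp, ht]; field_simp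
    have h1 := L1 hβ hA hvd x (t • y) (fun z g h1 h2 => by
      rw [hty] at h1 h2
      refine hvZ z g ?_ (by linarith)
      have : z - x₀ = (z - x) + (x - x₀) := by abel
      rw [this]
      have := norm_add_le (z - x) (x - x₀)
      linarith)
    have h2 := hbD x (by linarith)
    have h3 := hbD (x + t • y) (by
      have : x + t • y - x₀ = (x - x₀) + t • y := by abel
      rw [this]
      have := norm_add_le (x - x₀) (t • y)
      linarith)
    have h4 : C1 β * A * ‖t • y‖ ^ β ≤ D := by
      rw [hty, hD]; gcongr; linarith
    rw [map_smul, smul_eq_mul] at h1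
    have h5 : |t * fderiv ℝ v x y| ≤ 3 * D := by
      rw [abs_le] at *
      constructor <;> linarith [h1.1, h1.2, h2.1, h2.2, h3.1, h3.2]
    rw [abs_mul, abs_of_pos htp] at h5
    rw [Real.norm_eq_abs]
    have h6 : |fderiv ℝ v x y| ≤ 3 * D / ρ * ‖y‖ := by
      have : 3 * D / ρ * ‖y‖ = 3 * D / t := by rw [ht]; field_simp
      rw [this, le_div_iff₀ htp]; linarith
    nlinarith
  intro x y hx hy
  have := (convex_closedBall x₀ ρ).norm_image_sub_le_of_norm_fderiv_le (𝕜 := ℝ) (f := v)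
    (C := 3 * D / ρ + 1) (fun z _ => hvd z) (fun z hz => hgrad z (by simpa [dist_eq_norm] using hz))
    (x := y) (y := x) (by simpa [dist_eq_norm] using hy) (by simpa [dist_eq_norm] using hx)
  rw [Real.norm_eq_abs] at this
  exact this
open Topology

lemma sd_iter {d : ℕ} {u : E d → ℝ} {x h : E d} {c : ℝ} (n : ℕ) (hc : ∀ k : ℝ, |k| ≤ n →
    sd u h (x + k • h) ≤ -c) : sd u ((n:ℝ) • h) x ≤ - (c * (n:ℝ) ^ 2) := by
  have key : ∀ k : ℕ, k ≤ n → sd u ((k:ℝ) • h) x ≤ -(c * (k:ℝ) ^ 2) ∧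
      sd u (((k:ℝ) + 1) • h) x - sd u ((k:ℝ) • h) x ≤ -(c * (2 * k + 1)) := by
    intro k
    induction k with
    | zero =>
      intro _
      have := hc 0 (by simp)
      simp only [zero_smul, add_zero] at this
      refine ⟨by simp [sd]; ring_nf; rfl, ?_⟩
      have e : sd u (((0:ℕ):ℝ) • h) x = 0 := by simp [sd]; ring
      rw [e]
      simpa using this
    | succ k ih =>
      intro hk
      obtain ⟨i1, i2⟩ := ih (by omega)
      have hk' : ((k + 1 : ℕ) : ℝ) ≤ n := by exact_mod_cast hk
      push_cast at hk' ⊢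
      have hk0 : (0:ℝ) ≤ k := by positivity
      have c1 := hc ((k:ℝ) + 1) (by rw [abs_of_nonneg (by positivity)]; exact hk')
      have c2 := hc (-((k:ℝ) + 1)) (by rw [abs_neg, abs_of_nonneg (by positivity)]; exact hk')
      refine ⟨by linarith, ?_⟩
      simp only [sd] at *
      have e1 : x + ((k:ℝ) + 1) • h + h = x + ((k:ℝ) + 1 + 1) • h := by module
      have e2 : x + ((k:ℝ) + 1) • h - h = x + (k:ℝ) • h := by module
      have e3 : x + (-((k:ℝ) + 1)) • h - h = x - ((k:ℝ) + 1 + 1) • h := by module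
      have e4 : x + (-((k:ℝ) + 1)) • h + h = x - (k:ℝ) • h := by module
      have e5 : x + (-((k:ℝ) + 1)) • h = x - ((k:ℝ) + 1) • h := by module
      rw [e1, e2] at c1
      rw [e3, e4, e5] at c2
      linarith
  exact (key n le_rfl).1

lemma propP {d : ℕ} (hd : 1 ≤ d) {δ : ℝ} (hδ : 0 < δ) {β A ε H : ℝ} (hβ : 1 < β) (hβ2 : β < 2)
    (hA : 0 ≤ A) (hε : 0 < ε) (hH : 0 < H) :
    ∃ K : ℝ, 0 < K ∧ ∃ θ : ℝ, 0 < θ ∧ ∀ u : E d → ℝ, Good δ θ u →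
      (∀ x h : E d, ‖x‖ ≤ K → ‖h‖ ≤ K → |sd u h x| ≤ A * ‖h‖ ^ β) →
      ∀ x h : E d, ‖x‖ ≤ H → ‖h‖ ≤ H → -ε ≤ sd u h x := by
  -- the number of steps
  obtain ⟨n, hn1, hn⟩ : ∃ n : ℕ, 1 ≤ n ∧ A * ((n:ℝ) * H) ^ β < ε / 2 * (n:ℝ) ^ 2 := by
    have h1 : Tendsto (fun n : ℕ => (n:ℝ) ^ (2 - β)) atTop atTop :=
      (tendsto_rpow_atTop (by linarith)).comp tendsto_natCast_atTop_atTop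
    obtain ⟨n, hn, hn1⟩ := ((h1.eventually_gt_atTop (A * H ^ β / (ε / 2))).and
      (eventually_ge_atTop 1)).exists
    refine ⟨n, hn1, ?_⟩
    have hn0 : (0:ℝ) < n := by exact_mod_cast hn1
    rw [div_lt_iff₀ (by positivity)] at hn
    have e : (n:ℝ) ^ (2:ℕ) = (n:ℝ) ^ β * (n:ℝ) ^ (2 - β) := by
      rw [← Real.rpow_add hn0, ← Real.rpow_natCast]; congr 1; push_cast; ring
    rw [e, Real.mul_rpow hn0.le hH.le]
    have := mul_lt_mul_of_pos_left hn (Real.rpow_pos_of_pos hn0 β)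
    linarith
  have hn0 : (0:ℝ) < n := by exact_mod_cast hn1
  set T : ℝ := n * H with hT
  have hT0 : 0 < T := by positivity
  set ρ : ℝ := 2 * T + H + 2 with hρ
  have hρ0 : 0 < ρ := by positivity
  obtain ⟨Λ, hΛ, hL2⟩ := L2 (d := d) hβ hβ2.le hA hρ0
  obtain ⟨η, hη, θ, hθ, hH1⟩ := H1 (H := H) hd hδ (half_pos hε) hT0 hΛ
  obtain ⟨J, hJ⟩ := exists_nat_gt (A * H ^ β / η)
  rw [div_lt_iff₀ hη] at hJ
  set R1 : ℝ := 2 * T + 2 with hR1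
  have hR10 : 0 < R1 := by positivity
  refine ⟨H + J * R1 + 2 * ρ, by positivity, θ, hθ, ?_⟩
  intro u hu hZ x h hx hh
  by_contra hlt
  push Not at hlt
  have hcu : Continuous u := hu.cd.continuous
  have hcs : Continuous (sd u h) := by unfold sd; fun_prop
  have hmin : ∀ j : ℕ, ∃ y : E d, ‖y‖ ≤ H + j * R1 ∧
      ∀ z : E d, ‖z‖ ≤ H + j * R1 → sd u h y ≤ sd u h z := by
    intro j
    obtain ⟨y, hy, hm⟩ := (isCompact_closedBall (0 : E d) (H + j * R1)).exists_isMinOn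
      ⟨0, by simp; positivity⟩ hcs.continuousOn
    exact ⟨y, by simpa using hy, fun z hz => hm (by simpa using hz)⟩
  choose y hy hym using hmin
  have hpig : ∃ j, j < J ∧ sd u h (y j) - η ≤ sd u h (y (j+1)) := by
    by_contra hno
    push Not at hno
    have hdec : ∀ j : ℕ, j ≤ J → sd u h (y j) ≤ -ε - j * η := by
      intro j
      induction j with
      | zero =>
        intro _
        have := hym 0 x (by simpa using hx)
        simp; linarith
      | succ j ih =>
        intro hj
        have := ih (by omega)
        have := hno j (by omega)
        push_cast
        linarith
    have h1 := hdec J le_rfl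
    have h2 := hZ (y J) h ((hy J).trans (by linarith)) (by
      have : 0 ≤ (J:ℝ) * R1 := by positivity
      linarith)
    have h3 : A * ‖h‖ ^ β ≤ A * H ^ β := by gcongr
    have := (abs_le.1 h2).1
    linarith
  obtain ⟨j, hjJ, hj⟩ := hpig
  have hjR : (j:ℝ) * R1 + R1 ≤ J * R1 := by
    have : ((j + 1 : ℕ) : ℝ) ≤ J := by exact_mod_cast hjJ
    push_cast at this
    nlinarith
  have hJR0 : 0 ≤ (J:ℝ) * R1 := by positivity
  have hyj := hy j
  have htri : ∀ z r, ‖z - y j‖ ≤ r → ‖z‖ ≤ H + j * R1 + r := fun z r hz => by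
    have : z = (z - y j) + y j := by abel
    rw [this]
    have := norm_add_le (z - y j) (y j)
    linarith
  obtain ⟨a, w, -, -, hLip⟩ := hL2 u hu.cd (y j) (fun z g hz hg => by
    have := htri z _ hz
    exact hZ z g (by linarith) (by linarith))
  have hm1 : sd u h (y (j+1)) < -ε := by
    refine lt_of_le_of_lt (hym (j+1) x ?_) hlt
    have : 0 ≤ ((j+1 : ℕ):ℝ) * R1 := by positivity
    linarith
  have hup : ∀ z, ‖z - y j‖ ≤ T → sd u h z ≤ - (ε / 2) := by
    intro z hz
    have := hH1 _ (hu.affine a w) h (y j) (sd u h (y (j+1))) hh hLip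
      (fun z hz => by
        rw [sd_affine]
        refine hym (j+1) z ?_
        have := htri z _ hz
        push_cast
        linarith)
      (by rw [sd_affine]; linarith) z hz
    rw [sd_affine] at this
    linarith
  have h1 := sd_iter (u := u) (x := y j) (h := h) (c := ε / 2) n (fun k hk => by
    refine hup _ ?_
    rw [add_sub_cancel_left, norm_smul, Real.norm_eq_abs, hT]
    gcongr)
  have hnh : ‖(n:ℝ) • h‖ ≤ T := by
    rw [norm_smul, Real.norm_eq_abs, abs_of_pos hn0, hT]; gcongr
  have h2 := hZ (y j) ((n:ℝ) • h) (by linarith) (by linarith)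
  have h3 : A * ‖(n:ℝ) • h‖ ^ β ≤ A * T ^ β := by gcongr
  have := (abs_le.1 h2).1
  linarith
open Topology

lemma propQ {d : ℕ} (hd : 1 ≤ d) {δ : ℝ} (hδ : 0 < δ) {β A : ℝ} (hβ : 1 < β) (hβ2 : β < 2)
    (hA : 0 ≤ A) :
    ∃ K : ℝ, 0 < K ∧ ∃ θ : ℝ, 0 < θ ∧ ∀ u : E d → ℝ, Good δ θ u →
      (∀ x h : E d, ‖x‖ ≤ K → ‖h‖ ≤ K → |sd u h x| ≤ A * ‖h‖ ^ β) →
      ∀ e : E d, ‖e‖ = 1 → |sd u e 0| < 1 := by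
  obtain ⟨Λ, hΛ, hL2⟩ := L2 (d := d) (ρ := 3) hβ hβ2.le hA (by norm_num)
  obtain ⟨η₀, hη₀, hH2⟩ := H2 (d := d) (σ := 1 / 4) (T := 1) hd hδ (by norm_num) (by norm_num) hΛ
  set η : ℝ := min η₀ (1 / 4) with hηdef
  have hη : 0 < η := by rw [hηdef]; positivity
  have hη1 : η ≤ η₀ := min_le_left _ _
  have hη2 : η ≤ 1 / 4 := min_le_right _ _
  have hC := C1_pos hβ
  have hq0 := qb_pos β
  obtain ⟨k, hk⟩ : ∃ k : ℕ, C1 β * A * (qb β ^ k * 3 ^ β) ≤ η / 2 := by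
    have h1 : Tendsto (fun k : ℕ => C1 β * A * (qb β ^ k * 3 ^ β)) atTop
        (𝓝 (C1 β * A * (0 * 3 ^ β))) :=
      ((tendsto_pow_atTop_nhds_zero_of_lt_one hq0.le (qb_lt hβ)).mul_const _).const_mul _
    rw [zero_mul, mul_zero] at h1
    exact (h1.eventually_le_const (half_pos hη)).exists
  set ε : ℝ := η / 2 / 2 ^ k with hε
  have hε0 : 0 < ε := by positivity
  have hεk : 2 ^ k * ε = η / 2 := by rw [hε]; field_simp
  obtain ⟨K, hK, θ, hθ, hP⟩ := propP (H := 3) hd hδ hβ hβ2 hA hε0 (by norm_num)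
  refine ⟨max K 6, by positivity, θ, hθ, ?_⟩
  intro u hu hZ e he
  obtain ⟨a, w, h0, hgr, hLip⟩ := hL2 u hu.cd 0 (fun z g hz hg => by
    rw [sub_zero] at hz
    exact hZ z g (hz.trans (le_trans (by norm_num) (le_max_right _ _)))
      (hg.trans (le_trans (by norm_num) (le_max_right _ _))))
  have hP' := hP u hu (fun x h hx hh => hZ x h (hx.trans (le_max_left _ _))
    (hh.trans (le_max_left _ _)))
  set v : E d → ℝ := fun x => u x - (a + ⟪w, x⟫) with hv
  have hsdv : ∀ g z, sd v g z = sd u g z := fun g z => sd_affine u a w g z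
  have hv0 : v 0 = 0 := h0
  have hhalf : ∀ y : E d, ‖y‖ ≤ 3 → 2 * v y - ε ≤ v (y + y) := by
    intro y hy
    have := hP' y y hy hy
    rw [← hsdv] at this
    simp only [sd, sub_self, hv0] at this
    linarith
  have hlow : ∀ x : E d, ‖x‖ ≤ 3 → -η ≤ v x := by
    intro x hx
    have hit : ∀ i : ℕ, 2 ^ i * v (((2:ℝ) ^ i)⁻¹ • x) - (2 ^ i - 1) * ε ≤ v x := by
      intro i
      induction i with
      | zero => simp
      | succ i ih =>
        have e2 : ((2:ℝ) ^ i)⁻¹ • x = ((2:ℝ) ^ (i+1))⁻¹ • x + ((2:ℝ) ^ (i+1))⁻¹ • x := by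
          rw [← add_smul]
          congr 1
          rw [pow_succ]
          field_simp
          norm_num
        have h1 := hhalf (((2:ℝ) ^ (i+1))⁻¹ • x) (by
          rw [norm_smul, Real.norm_eq_abs, abs_of_pos (by positivity)]
          refine (mul_le_of_le_one_left (norm_nonneg _) (inv_le_one_of_one_le₀ ?_)).trans hx
          exact one_le_pow₀ (by norm_num))
        rw [← e2] at h1
        have h2 := mul_le_mul_of_nonneg_left h1 (by positivity : (0:ℝ) ≤ 2 ^ i)
        rw [pow_succ 2 i]
        rw [pow_succ 2 i] at h2
        linarith
    have h1 := hit k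
    have hxk : ‖((2:ℝ) ^ k)⁻¹ • x‖ = ((2:ℝ) ^ k)⁻¹ * ‖x‖ := by
      rw [norm_smul, Real.norm_eq_abs, abs_of_pos (by positivity)]
    have hxk' : ‖((2:ℝ) ^ k)⁻¹ • x‖ ≤ ‖x‖ := by
      rw [hxk]
      refine mul_le_of_le_one_left (norm_nonneg _) (inv_le_one_of_one_le₀ ?_)
      exact one_le_pow₀ (by norm_num)
    have h2 := hgr (((2:ℝ) ^ k)⁻¹ • x) (by rw [sub_zero]; linarith)
    rw [sub_zero, hxk] at h2
    have h3 := (abs_le.1 h2).1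
    have h4 := mul_le_mul_of_nonneg_left h3 (by positivity : (0:ℝ) ≤ 2 ^ k)
    have h5 : (2:ℝ) ^ k * -(C1 β * A * (((2:ℝ) ^ k)⁻¹ * ‖x‖) ^ β)
        = -(C1 β * A * (qb β ^ k * ‖x‖ ^ β)) := by
      rw [← dyadic_rpow k (norm_nonneg x)]; ring
    rw [h5] at h4
    have h6 : C1 β * A * (qb β ^ k * ‖x‖ ^ β) ≤ C1 β * A * (qb β ^ k * 3 ^ β) := by gcongr
    have h7 : (2:ℝ) ^ k * v (((2:ℝ) ^ k)⁻¹ • x) = 2 ^ k * (u (((2:ℝ) ^ k)⁻¹ • x) - (a + ⟪w, ((2:ℝ) ^ k)⁻¹ • x⟫)) := rfl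
    linarith
  have hup := hH2 θ v (hu.affine a w) 0 (-η)
    (fun x y hx hy => hLip x y (by linarith) (by linarith))
    (fun x hx => hlow x (by rw [sub_zero] at hx; linarith)) (by rw [hv0]; linarith)
  have u1 := hup e (by rw [sub_zero, he])
  have u2 := hup (-e) (by rw [sub_zero, norm_neg, he])
  have l1 := hlow e (by rw [he]; norm_num)
  have l2 := hlow (-e) (by rw [norm_neg, he]; norm_num)
  rw [← hsdv, abs_lt]
  simp only [sd, zero_add, zero_sub, hv0]
  constructor <;> linarith
open Topology

lemma sd_C2 {d : ℕ} {u : E d → ℝ} (hu : ContDiff ℝ 2 u) (N : ℝ) :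
    ∃ C : ℝ, 0 ≤ C ∧ ∀ x h : E d, ‖x‖ + ‖h‖ ≤ N → |sd u h x| ≤ C * ‖h‖ ^ 2 := by
  have hd1 : Differentiable ℝ u := hu.differentiable (by norm_num)
  have hc2 : ContDiff ℝ 1 (fderiv ℝ u) := hu.fderiv_right (by norm_num)
  have hd2 : Differentiable ℝ (fderiv ℝ u) := hc2.differentiable (by norm_num)
  have hc3 : Continuous (fderiv ℝ (fderiv ℝ u)) := hc2.continuous_fderiv (by norm_num)
  obtain ⟨C, hC⟩ := (isCompact_closedBall (0 : E d) N).exists_bound_of_continuousOn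
    (f := fderiv ℝ (fderiv ℝ u)) hc3.continuousOn
  have hC' : ∀ z : E d, ‖z‖ ≤ N → ‖fderiv ℝ (fderiv ℝ u) z‖ ≤ max C 0 := fun z hz =>
    (hC z (by simpa using hz)).trans (le_max_left _ _)
  refine ⟨max C 0, le_max_right _ _, fun x h hxh => ?_⟩
  have hx : ‖x‖ ≤ N := by linarith [norm_nonneg h]
  have hLip : ∀ y z : E d, ‖y‖ ≤ N → ‖z‖ ≤ N →
      ‖fderiv ℝ u z - fderiv ℝ u y‖ ≤ max C 0 * ‖z - y‖ := fun y z hy hz =>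
    (convex_closedBall (0 : E d) N).norm_image_sub_le_of_norm_fderiv_le (𝕜 := ℝ)
      (fun z _ => hd2 z) (fun z hz => hC' z (by simpa using hz)) (by simpa using hy)
      (by simpa using hz)
  set s : Set (E d) := closedBall 0 N ∩ closedBall (-h) N with hs
  have hconv : Convex ℝ s := (convex_closedBall _ _).inter (convex_closedBall _ _)
  set g : E d → ℝ := fun y => u (y + h) - u y with hg
  have hgd : ∀ y, HasFDerivAt g (fderiv ℝ u (y + h) - fderiv ℝ u y) y := fun y => by
    have h1 : HasFDerivAt (fun y => u (y + h)) (fderiv ℝ u (y + h)) y := by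
      have := (hd1 (y + h)).hasFDerivAt.comp y ((hasFDerivAt_id y).add_const h)
      rw [ContinuousLinearMap.comp_id] at this
      exact this
    exact h1.sub (hd1 y).hasFDerivAt
  have := hconv.norm_image_sub_le_of_norm_fderiv_le (𝕜 := ℝ) (f := g) (C := max C 0 * ‖h‖)
    (fun y _ => (hgd y).differentiableAt) (fun y hy => by
      rw [(hgd y).fderiv]
      have h1 : ‖y‖ ≤ N := by simpa using hy.1
      have h2 : ‖y + h‖ ≤ N := by simpa [dist_eq_norm] using hy.2
      simpa using hLip y (y + h) h1 h2) (x := x - h) (y := x)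
    ⟨by simpa using (norm_sub_le x h).trans hxh, by simpa [dist_eq_norm] using hx⟩
    ⟨by simpa using hx, by simpa [dist_eq_norm] using (norm_add_le x h).trans hxh⟩
  simp only [hg, sub_add_cancel, sub_sub_cancel, Real.norm_eq_abs] at this
  have e : sd u h x = u (x + h) - u x - (u x - u (x - h)) := by simp only [sd]; ring
  rw [e, pow_two, ← mul_assoc]
  exact this

lemma pick {d : ℕ} {u : E d → ℝ} (hu : ContDiff ℝ 2 u) {N β : ℝ} (hβ : 0 < β) (hβ2 : β < 2)
    (x₁ h₁ : E d) (hh₁ : 0 < ‖h₁‖) (hN : ‖x₁‖ + ‖h₁‖ < N) (hne : sd u h₁ x₁ ≠ 0) :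
    ∃ x₀ h₀ : E d, 0 < ‖h₀‖ ∧ ‖x₀‖ + ‖h₀‖ < N ∧ sd u h₀ x₀ ≠ 0 ∧
      ∀ x h : E d, 0 < ‖h‖ → ‖x‖ + ‖h‖ < N →
        |sd u h x| * ((N - ‖x‖) / ‖h‖) ^ β ≤ 2 * (|sd u h₀ x₀| * ((N - ‖x₀‖) / ‖h₀‖) ^ β) := by
  set S : Set ℝ := {q | ∃ x h : E d, 0 < ‖h‖ ∧ ‖x‖ + ‖h‖ < N ∧
    q = |sd u h x| * ((N - ‖x‖) / ‖h‖) ^ β} with hS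
  obtain ⟨C, hC0, hC⟩ := sd_C2 hu N
  have hbdd : BddAbove S := by
    refine ⟨C * N ^ 2, ?_⟩
    rintro q ⟨x, h, h0, hxh, rfl⟩
    have hD : ‖h‖ ≤ N - ‖x‖ := by linarith
    have h1 : 1 ≤ (N - ‖x‖) / ‖h‖ := by rw [le_div_iff₀ h0]; linarith
    have h2 : ((N - ‖x‖) / ‖h‖) ^ β ≤ ((N - ‖x‖) / ‖h‖) ^ 2 := by
      rw [← Real.rpow_natCast]
      exact Real.rpow_le_rpow_of_exponent_le h1 (by push_cast; linarith)
    have hx0 := norm_nonneg x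
    have h3 : 0 ≤ N - ‖x‖ := by linarith
    calc |sd u h x| * ((N - ‖x‖) / ‖h‖) ^ β ≤ (C * ‖h‖ ^ 2) * ((N - ‖x‖) / ‖h‖) ^ 2 := by
          gcongr
          exact hC x h hxh.le
      _ = C * (N - ‖x‖) ^ 2 := by field_simp
      _ ≤ C * N ^ 2 := by gcongr; linarith
  have hmem : |sd u h₁ x₁| * ((N - ‖x₁‖) / ‖h₁‖) ^ β ∈ S := ⟨x₁, h₁, hh₁, hN, rfl⟩
  have hpos : 0 < |sd u h₁ x₁| * ((N - ‖x₁‖) / ‖h₁‖) ^ β := by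
    have : 0 < N - ‖x₁‖ := by linarith
    have := abs_pos.2 hne
    positivity
  have hS0 : 0 < sSup S := hpos.trans_le (le_csSup hbdd hmem)
  obtain ⟨q, ⟨x₀, h₀, h0, hxh, rfl⟩, hq⟩ := exists_lt_of_lt_csSup ⟨_, hmem⟩ (half_lt_self hS0)
  refine ⟨x₀, h₀, h0, hxh, ?_, ?_⟩
  · intro hz
    rw [hz, abs_zero, zero_mul] at hq
    linarith
  · intro x h h0' hxh'
    have := le_csSup hbdd (show _ ∈ S from ⟨x, h, h0', hxh', rfl⟩)
    linarith

lemma propR {d : ℕ} {δ θ β K : ℝ} (hβ : 1 < β) (hβ2 : β < 2) (hK : 0 < K)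
    (hQ : ∀ u : E d → ℝ, Good δ θ u →
      (∀ x h : E d, ‖x‖ ≤ K → ‖h‖ ≤ K → |sd u h x| ≤ 8 * ‖h‖ ^ β) →
      ∀ e : E d, ‖e‖ = 1 → |sd u e 0| < 1)
    {u : E d → ℝ} (hu : Good δ θ u) (φ : ℝ → ℝ)
    (hφ : ∀ R, ∀ x h : E d, ‖x‖ + ‖h‖ < R → |sd u h x| ≤ 4 * φ R)
    (hlim : ∀ c : ℝ, 0 < c → ∀ᶠ R in atTop, φ R ≤ c * R ^ β) (h₁ x₁ : E d) :
    sd u h₁ x₁ = 0 := by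
  by_contra hne
  have hh₁ : 0 < ‖h₁‖ := by
    rw [norm_pos_iff]
    rintro rfl
    apply hne
    simp [sd]; ring
  have hc1 : 0 < |sd u h₁ x₁| := abs_pos.2 hne
  set c : ℝ := |sd u h₁ x₁| * (1 / (2 * ‖h₁‖)) ^ β / (16 * (4 * K) ^ β) with hc
  have hc0 : 0 < c := by positivity
  obtain ⟨N, hNφ, hN1, hN2⟩ := ((hlim c hc0).and ((eventually_gt_atTop (‖x₁‖ + ‖h₁‖)).and
    (eventually_gt_atTop (2 * ‖x₁‖)))).exists
  have hN0 : 0 < N := by linarith [norm_nonneg x₁]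
  obtain ⟨x₀, h₀, hh₀, hx₀, hne₀, hmax⟩ := pick hu.cd (by linarith) hβ2 x₁ h₁ hh₁ hN1 hne
  set r := ‖h₀‖ with hr
  set D := N - ‖x₀‖ with hD
  set M := |sd u h₀ x₀| with hM
  have hM0 : 0 < M := abs_pos.2 hne₀
  have hD0 : 0 < D := by rw [hD]; linarith
  have hfar : 4 * K * r ≤ D := by
    by_contra hlt
    push Not at hlt
    have h1 := hmax x₁ h₁ hh₁ hN1
    have h2 : |sd u h₁ x₁| * (1 / (2 * ‖h₁‖) * N) ^ β ≤
        |sd u h₁ x₁| * ((N - ‖x₁‖) / ‖h₁‖) ^ β := by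
      gcongr
      rw [le_div_iff₀ hh₁]
      have : 1 / (2 * ‖h₁‖) * N * ‖h₁‖ = N / 2 := by field_simp
      rw [this]; linarith
    have h3 : M * (D / r) ^ β ≤ (4 * φ N) * (4 * K) ^ β := by
      have h5 := hφ N x₀ h₀ hx₀
      have h6 : 0 ≤ 4 * φ N := (abs_nonneg _).trans h5
      have h7 : D / r ≤ 4 * K := by rw [div_le_iff₀ hh₀]; exact hlt.le
      gcongr
    have h4 : (4 * φ N) * (4 * K) ^ β ≤ (4 * (c * N ^ β)) * (4 * K) ^ β := by gcongr
    have h5 : (4 * (c * N ^ β)) * (4 * K) ^ β =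
        |sd u h₁ x₁| * (1 / (2 * ‖h₁‖)) ^ β * N ^ β / 4 := by
      rw [hc]; field_simp; norm_num
    rw [Real.mul_rpow (by positivity) hN0.le] at h2
    have h6 : 0 < |sd u h₁ x₁| * (1 / (2 * ‖h₁‖)) ^ β * N ^ β := by positivity
    linarith
  have hlt := hQ _ (hu.scale (c := M⁻¹) (r := r) (by positivity) hh₀ x₀) ?_ (r⁻¹ • h₀) ?_
  · rw [sd_scale, smul_smul, mul_inv_cancel₀ hh₀.ne', one_smul, smul_zero, add_zero, abs_mul,
      abs_of_pos (by positivity : 0 < M⁻¹), ← hM, inv_mul_cancel₀ hM0.ne'] at hlt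
    exact lt_irrefl _ hlt
  · intro y h hy hh
    rw [sd_scale]
    rcases eq_or_ne h 0 with rfl | hh0
    · have : sd u (r • (0 : E d)) (x₀ + r • y) = 0 := by simp [sd]; ring
      rw [this, mul_zero, abs_zero]
      positivity
    have hhp : 0 < ‖h‖ := norm_pos_iff.2 hh0
    have n1 : ‖r • h‖ = r * ‖h‖ := by rw [norm_smul, Real.norm_eq_abs, abs_of_pos hh₀]
    have n2 : ‖x₀ + r • y‖ ≤ ‖x₀‖ + r * K := by
      refine (norm_add_le _ _).trans ?_
      rw [norm_smul, Real.norm_eq_abs, abs_of_pos hh₀]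
      gcongr
    have n3 : r * ‖h‖ ≤ r * K := by gcongr
    have n4 : 0 < r * K := by positivity
    have h1 := hmax (x₀ + r • y) (r • h) (by rw [n1]; positivity) (by rw [n1]; linarith)
    rw [n1] at h1
    have h2 : (D / r * (1 / (2 * ‖h‖))) ^ β ≤ ((N - ‖x₀ + r • y‖) / (r * ‖h‖)) ^ β := by
      gcongr
      rw [le_div_iff₀ (by positivity)]
      have : D / r * (1 / (2 * ‖h‖)) * (r * ‖h‖) = D / 2 := by field_simp
      rw [this]; linarith
    have h3 := (mul_le_mul_of_nonneg_left h2 (abs_nonneg (sd u (r • h) (x₀ + r • y)))).trans h1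
    have hDr : 0 < (D / r) ^ β := by positivity
    have h2e : (1 / (2 * ‖h‖)) ^ β = 1 / (2 ^ β * ‖h‖ ^ β) := by
      rw [Real.div_rpow (by norm_num) (by positivity), Real.one_rpow,
        Real.mul_rpow (by norm_num) hhp.le]
    rw [Real.mul_rpow (by positivity) (by positivity), h2e] at h3
    have h24 : (2:ℝ) ^ β ≤ 4 := by
      have := Real.rpow_le_rpow_of_exponent_le (by norm_num : (1:ℝ) ≤ 2) hβ2.le
      norm_num at this
      exact this
    have hhβ : 0 < ‖h‖ ^ β := by positivity
    have h4 : |sd u (r • h) (x₀ + r • y)| ≤ 2 * M * (2 ^ β * ‖h‖ ^ β) := by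
      have h5 : |sd u (r • h) (x₀ + r • y)| / (2 ^ β * ‖h‖ ^ β) ≤ 2 * M := by
        refine le_of_mul_le_mul_right ?_ hDr
        calc _ = |sd u (r • h) (x₀ + r • y)| * ((D / r) ^ β * (1 / (2 ^ β * ‖h‖ ^ β))) := by ring
          _ ≤ _ := h3
          _ = _ := by ring
      rwa [div_le_iff₀ (by positivity)] at h5
    rw [abs_mul, abs_of_pos (by positivity : 0 < M⁻¹), inv_mul_le_iff₀ hM0]
    refine h4.trans ?_
    calc 2 * M * (2 ^ β * ‖h‖ ^ β) ≤ 2 * M * (4 * ‖h‖ ^ β) := by gcongr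
      _ = _ := by ring
  · rw [norm_smul, Real.norm_eq_abs, abs_of_pos (by positivity), ← hr, inv_mul_cancel₀ hh₀.ne']

lemma sd_le_dev {d : ℕ} {u : E d → ℝ} (hu : Continuous u) (R : ℝ) (x h : E d)
    (hR : ‖x‖ + ‖h‖ < R) :
    |sd u h x| ≤ 4 * ⨅ (a : ℝ) (v : E d), ⨆ x ∈ ball (0 : E d) R, |u x - (a + ⟪v, x⟫)| := by
  have key : ∀ (a : ℝ) (v : E d),
      |sd u h x| / 4 ≤ ⨆ x ∈ ball (0 : E d) R, |u x - (a + ⟪v, x⟫)| := by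
    intro a v
    set f : E d → ℝ := fun x => u x - (a + ⟪v, x⟫) with hf
    have hfc : Continuous f := by fun_prop
    obtain ⟨B, hB⟩ := (isCompact_closedBall (0 : E d) R).exists_bound_of_continuousOn
      hfc.continuousOn
    have hbdd : BddAbove (range fun y : E d => ⨆ (_ : y ∈ ball (0 : E d) R), |f y|) := by
      refine ⟨max B 0, ?_⟩
      rintro _ ⟨y, rfl⟩
      by_cases hy : y ∈ ball (0 : E d) R
      · simp only [hy, ciSup_unique]
        exact (hB y (ball_subset_closedBall hy)).trans (le_max_left _ _)
      · simp [hy]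
    have hle : ∀ y : E d, ‖y‖ < R → |f y| ≤ ⨆ x ∈ ball (0 : E d) R, |f x| := by
      intro y hy
      have hy' : y ∈ ball (0 : E d) R := by simpa using hy
      have := le_ciSup hbdd y
      simpa only [hy', ciSup_unique] using this
    have l1 := hle (x + h) ((norm_add_le _ _).trans_lt hR)
    have l2 := hle (x - h) ((norm_sub_le _ _).trans_lt hR)
    have l3 := hle x (by linarith [norm_nonneg h])
    have e : sd u h x = f (x + h) + f (x - h) - 2 * f x := (sd_affine u a v h x).symm
    rw [e]
    have : |f (x + h) + f (x - h) - 2 * f x| ≤ |f (x + h)| + |f (x - h)| + 2 * |f x| := by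
      rw [abs_le]
      constructor <;> linarith [abs_le.1 (le_refl |f (x + h)|), abs_le.1 (le_refl |f (x - h)|),
        abs_le.1 (le_refl |f x|), neg_abs_le (f (x+h)), le_abs_self (f (x+h)),
        neg_abs_le (f (x-h)), le_abs_self (f (x-h)), neg_abs_le (f x), le_abs_self (f x)]
    linarith
  have : |sd u h x| / 4 ≤ ⨅ (a : ℝ) (v : E d), ⨆ x ∈ ball (0 : E d) R, |u x - (a + ⟪v, x⟫)| :=
    le_ciInf fun a => le_ciInf fun v => key a v
  linarith

/-- Corollary 4.2 of the paper: Liouville property for `x`-independent `F`. -/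
theorem stmt_5 (d : ℕ) (hd : 1 ≤ d) (δ : ℝ) (hδ : δ ∈ Set.Ioc (0 : ℝ) 1) :
    ∃ d₀ : ℝ, d₀ ∈ Set.Ioo ((d : ℝ) / 2) (d : ℝ) ∧
      ∀ p : ℝ, d₀ < p →
        ∀ α : ℝ, 0 < α →
          ∃ θ : ℝ, 0 < θ ∧
            ∀ (F Fb : Matrix (Fin d) (Fin d) ℝ → ℝ) (u : E d → ℝ),
              Elliptic δ F → F 0 = 0 →
              ConvexOn ℝ Set.univ Fb → Elliptic δ Fb → Fb 0 = 0 →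
              (∀ m : Matrix (Fin d) (Fin d) ℝ, m.IsSymm → frob m = 1 →
                ∀ τ : ℝ, 0 < τ → τ⁻¹ * |F (τ • m) - Fb (τ • m)| ≤ θ) →
              ContDiff ℝ 2 u →
              (∀ x : E d, F (hess u x) = 0) →
              Filter.Tendsto
                (fun R : ℝ => R ^ (α - 2) *
                  ⨅ (a : ℝ) (v : E d), ⨆ x ∈ ball (0 : E d) R, |u x - (a + ⟪v, x⟫)|)
                Filter.atTop (nhds 0) →
              ∃ (a : ℝ) (v : E d), ∀ x : E d, u x = a + ⟪v, x⟫ := by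
  have hd0 : (0:ℝ) < d := by exact_mod_cast hd
  refine ⟨3 / 4 * d, ⟨by linarith, by linarith⟩, ?_⟩
  intro p _ α hα
  obtain ⟨β, hβ, hβ2, hβα⟩ : ∃ β : ℝ, 1 < β ∧ β < 2 ∧ 2 - α ≤ β := by
    refine ⟨2 - min α (1/2), ?_, ?_, ?_⟩
    · have := min_le_right α (1/2); linarith
    · have : 0 < min α (1/2) := lt_min hα (by norm_num)
      linarith
    · have := min_le_left α (1/2); linarith
  obtain ⟨K, hK, θ, hθ, hQ⟩ := propQ (A := 8) hd hδ.1 hβ hβ2 (by norm_num)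
  refine ⟨θ, hθ, ?_⟩
  intro F Fb u hF hF0 hFbc hFb hFb0 hclose hu heq hlim
  have hgood : Good δ θ u := good_of hF hF0 hFbc hFb hFb0 hclose hu heq
  refine affine_of_sd_zero (hu.differentiable (by norm_num)) ?_
  refine propR hβ hβ2 hK hQ hgood _ (fun R x h hR => sd_le_dev hu.continuous R x h hR) ?_
  intro c hc
  filter_upwards [hlim.eventually_lt_const hc, Filter.eventually_ge_atTop (1:ℝ)] with R h1 hR
  have hR0 : 0 < R := by linarith
  have h2 := (mul_lt_mul_of_pos_left h1 (Real.rpow_pos_of_pos hR0 (2 - α))).le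
  rw [← mul_assoc, ← Real.rpow_add hR0] at h2
  have e : 2 - α + (α - 2) = 0 := by ring
  rw [e, Real.rpow_zero, one_mul] at h2
  refine h2.trans ?_
  rw [mul_comm]
  have := Real.rpow_le_rpow_of_exponent_le hR hβα
  gcongr
end
end

section
/- Let d ≥ 1 be an integer, p ∈ (1,∞), 0 < μ ≤ d/p, R ∈ (0,∞), and x₀ ∈ B_R. There is a constant N = N(d,p,μ) such that for every function u that is twice continuously differentiable on B̄_R, every ε ∈ (0,1], every r ≤ 2R, and every constant c ∈ ℝ: r^μ #‖1_{B_R} Du‖_{L_p(B_r(x₀))} ≤ N ε R · sup_{r ≤ s ≤ 2R} s^μ #‖1_{B_R} D²u‖_{L_p(B_s(x₀))} + N ε^{−1} R^{−1} · sup_{r ≤ s ≤ 2R} s^μ #‖1_{B_R}(u − c)‖_{L_p(B_s(x₀))}. -/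
open MeasureTheory Metric Set Filter
open scoped ENNReal RealInnerProductSpace

noncomputable section

lemma aux_cov {d : ℕ} (F : E d → ℝ≥0∞) (hF : Measurable F) (α : ℝ) (hα : 0 < α) (v : E d) :
    ∫⁻ x, F (α • x + v) = ENNReal.ofReal ((α ^ d)⁻¹) * ∫⁻ x, F x := by
  have h1 : ∫⁻ x, F (α • x + v)
      = ∫⁻ y, F (y + v) ∂(Measure.map (fun x : E d => α • x) volume) := by
    exact (lintegral_map (hF.comp (measurable_add_const v)) (measurable_const_smul α)).symm
  rw [h1, Measure.map_addHaar_smul volume hα.ne', lintegral_smul_measure,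
    lintegral_add_right_eq_self]
  simp [abs_of_pos (pow_pos hα d)]

lemma aux_ball {d : ℕ} (x : E d) (r : ℝ) (hr : 0 < r) :
    volume (ball x r) = ENNReal.ofReal (r ^ d) * volume (ball (0 : E d) 1) := by
  have := Measure.addHaar_ball_of_pos (volume : Measure (E d)) x hr
  simpa using this

lemma aux_J {d : ℕ} (F : E d → ℝ≥0∞) (hF : Measurable F) (α β r s : ℝ) (hα : 0 < α)
    (hβ : 0 ≤ β) (hαβ : α + β = 1) (x₀ a : E d) (ha : a ∈ ball x₀ s) :
    ∫⁻ x in ball x₀ r, F (α • x + β • a) ≤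
      ENNReal.ofReal ((α ^ d)⁻¹) * ∫⁻ x in ball x₀ (α * r + β * s), F x := by
  rw [← lintegral_indicator measurableSet_ball, ← lintegral_indicator measurableSet_ball,
    ← aux_cov _ (hF.indicator measurableSet_ball) α hα (β • a)]
  refine lintegral_mono fun x => ?_
  by_cases hx : x ∈ ball x₀ r
  · have : α • x + β • a ∈ ball x₀ (α * r + β * s) := by
      rw [mem_ball_iff_norm] at *
      have e : α • x + β • a - x₀ = α • (x - x₀) + β • (a - x₀) := by
        have : x₀ = (α + β) • x₀ := by rw [hαβ, one_smul]
        nth_rw 1 [this]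
        module
      rw [e]
      refine (norm_add_le _ _).trans_lt ?_
      rw [norm_smul, norm_smul, Real.norm_of_nonneg hα.le, Real.norm_of_nonneg hβ]
      have := mul_lt_mul_of_pos_left hx hα
      have := mul_le_mul_of_nonneg_left ha.le hβ
      linarith
    rw [indicator_of_mem hx, indicator_of_mem this]
  · rw [indicator_of_notMem hx]; exact zero_le

lemma aux_I0 {d : ℕ} (F : E d → ℝ≥0∞) (hF : Measurable F) (α β r s : ℝ) (hα : 0 < α)
    (hr : 0 < r) (hs : 0 < s)
    (hβ : 0 ≤ β) (hαβ : α + β = 1) (x₀ : E d) (h : β * s ≤ α * r) :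
    volume (ball x₀ (α * r + β * s)) *
      ∫⁻ a in ball x₀ s, ∫⁻ x in ball x₀ r, F (α • x + β • a) ≤
      2 ^ d * volume (ball x₀ r) * volume (ball x₀ s) *
        ∫⁻ x in ball x₀ (α * r + β * s), F x := by
  have h1 : ∫⁻ a in ball x₀ s, ∫⁻ x in ball x₀ r, F (α • x + β • a) ≤
      (ENNReal.ofReal ((α ^ d)⁻¹) * ∫⁻ x in ball x₀ (α * r + β * s), F x)
        * volume (ball x₀ s) := by
    rw [← setLIntegral_const]
    exact setLIntegral_mono measurable_const fun a ha => aux_J F hF α β r s hα hβ hαβ x₀ a ha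
  have h2 : volume (ball x₀ (α * r + β * s)) * ENNReal.ofReal ((α ^ d)⁻¹) ≤
      2 ^ d * volume (ball x₀ r) := by
    rw [aux_ball _ _ hr, aux_ball _ (α * r + β * s) (by positivity)]
    have e : (2 : ℝ≥0∞) ^ d = ENNReal.ofReal (2 ^ d) := by
      rw [ENNReal.ofReal_pow (by norm_num)]; simp
    rw [mul_right_comm, ← mul_assoc, e, ← ENNReal.ofReal_mul (by positivity),
      ← ENNReal.ofReal_mul (by positivity)]
    refine mul_le_mul_left (ENNReal.ofReal_le_ofReal ?_) _
    rw [← div_eq_mul_inv, div_le_iff₀ (by positivity), ← mul_pow, ← mul_pow]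
    gcongr
    linarith
  calc _ ≤ volume (ball x₀ (α * r + β * s)) * ((ENNReal.ofReal ((α ^ d)⁻¹) *
          ∫⁻ x in ball x₀ (α * r + β * s), F x) * volume (ball x₀ s)) := by gcongr
    _ = (volume (ball x₀ (α * r + β * s)) * ENNReal.ofReal ((α ^ d)⁻¹)) *
          (volume (ball x₀ s) * ∫⁻ x in ball x₀ (α * r + β * s), F x) := by ring
    _ ≤ (2 ^ d * volume (ball x₀ r)) *
          (volume (ball x₀ s) * ∫⁻ x in ball x₀ (α * r + β * s), F x) := by gcongr
    _ = _ := by ring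

lemma aux_I {d : ℕ} (F : E d → ℝ≥0∞) (hF : Measurable F) (r s t : ℝ)
    (hr : 0 < r) (hs : 0 < s) (ht0 : 0 ≤ t) (ht1 : t ≤ 1) (x₀ : E d) :
    volume (ball x₀ ((1 - t) * r + t * s)) *
      ∫⁻ x in ball x₀ r, ∫⁻ a in ball x₀ s, F ((1 - t) • x + t • a) ≤
      2 ^ d * volume (ball x₀ r) * volume (ball x₀ s) *
        ∫⁻ x in ball x₀ ((1 - t) * r + t * s), F x := by
  rcases le_total (t * s) ((1 - t) * r) with h | h
  · rw [lintegral_lintegral_swap]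
    · refine aux_I0 F hF (1 - t) t r s ?_ hr hs ht0 (by ring) x₀ h
      by_contra hc
      have : t = 1 := by linarith
      subst this; linarith
    · exact (hF.comp (by fun_prop : Measurable fun z : E d × E d =>
        (1 - t) • z.1 + t • z.2)).aemeasurable
  · have := aux_I0 F hF t (1 - t) s r (by
      by_contra hc
      have : t = 0 := by linarith
      subst this; linarith) hs hr (by linarith) (by ring) x₀ h
    simp only [add_comm (t • _), add_comm (t * s)] at this
    refine this.trans_eq ?_
    ring

lemma aux_I' {d : ℕ} (p μ : ℝ) (hp : 1 < p) (hμ : 0 < μ) (g : E d → ℝ)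
    (hF : Measurable fun y => ENNReal.ofReal (|g y| ^ p)) (r s t T : ℝ) (M : ℝ≥0∞)
    (hr : 0 < r) (hrs : r ≤ s) (hsT : s ≤ T) (ht0 : 0 ≤ t) (ht1 : t ≤ 1) (x₀ : E d)
    (hM : ∀ σ ∈ Icc r T, ENNReal.ofReal (σ ^ μ) * nLp p (ball x₀ σ) g ≤ M) :
    ENNReal.ofReal (r ^ μ) ^ p * ∫⁻ x in ball x₀ r, ∫⁻ a in ball x₀ s,
        ENNReal.ofReal (|g ((1 - t) • x + t • a)| ^ p) ≤
      2 ^ d * volume (ball x₀ r) * volume (ball x₀ s) * M ^ p := by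
  have hs : 0 < s := hr.trans_le hrs
  have h := aux_I _ hF r s t hr hs ht0 ht1 x₀
  set σ := (1 - t) * r + t * s with hσ
  have hσr : r ≤ σ := by nlinarith
  have hσs : σ ≤ s := by nlinarith
  have hV0 : volume (ball x₀ σ) ≠ 0 := (measure_ball_pos _ _ (hr.trans_le hσr)).ne'
  have hVt : volume (ball x₀ σ) ≠ ⊤ := measure_ball_lt_top.ne
  have h2 : ∫⁻ x in ball x₀ r, ∫⁻ a in ball x₀ s,
        ENNReal.ofReal (|g ((1 - t) • x + t • a)| ^ p) ≤
      2 ^ d * volume (ball x₀ r) * volume (ball x₀ s) * nLp p (ball x₀ σ) g ^ p := by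
    rw [nLp, ← ENNReal.rpow_mul, one_div, inv_mul_cancel₀ (by linarith), ENNReal.rpow_one]
    calc _ = (volume (ball x₀ σ))⁻¹ * (volume (ball x₀ σ) * _) := by
          rw [← mul_assoc, ENNReal.inv_mul_cancel hV0 hVt, one_mul]
      _ ≤ _ := mul_le_mul_right h _
      _ = _ := by ring
  have h3 : ENNReal.ofReal (r ^ μ) * nLp p (ball x₀ σ) g ≤ M := by
    refine le_trans ?_ (hM σ ⟨hσr, hσs.trans hsT⟩)
    gcongr
  calc _ ≤ ENNReal.ofReal (r ^ μ) ^ p * (2 ^ d * volume (ball x₀ r) * volume (ball x₀ s) *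
          nLp p (ball x₀ σ) g ^ p) := by gcongr
    _ = 2 ^ d * volume (ball x₀ r) * volume (ball x₀ s) *
        (ENNReal.ofReal (r ^ μ) * nLp p (ball x₀ σ) g) ^ p := by
      rw [ENNReal.mul_rpow_of_nonneg _ _ (by linarith)]; ring
    _ ≤ _ := by gcongr

lemma aux_geom {d : ℕ} (ξ : E d →L[ℝ] ℝ) (x z : E d) (ρ : ℝ) (hρ : 0 < ρ) :
    ∃ w : E d, ball w (ρ / 4) ⊆ ball z ρ ∧
      ∀ a ∈ ball w (ρ / 4), ρ / 4 * ‖ξ‖ ≤ |ξ (a - x)| := by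
  obtain ⟨e, he1, he2⟩ : ∃ e : E d, ‖e‖ ≤ 1 ∧ ξ e = ‖ξ‖ := by
    set v := (InnerProductSpace.toDual ℝ (E d)).symm ξ with hv
    have h1 : ‖v‖ = ‖ξ‖ := by simp [hv]
    have h2 : ξ v = ‖v‖ ^ 2 := by
      have := InnerProductSpace.toDual_symm_apply (𝕜 := ℝ) (x := v) (y := ξ)
      rw [← this, ← hv, real_inner_self_eq_norm_sq]
    by_cases h : ‖ξ‖ = 0
    · exact ⟨0, by simp, by simp [h]⟩
    · refine ⟨‖ξ‖⁻¹ • v, ?_, ?_⟩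
      · rw [norm_smul, h1]; simp [h]
      · rw [map_smul, h2, h1, smul_eq_mul]; field_simp
  have key : ∀ w a : E d, a ∈ ball w (ρ / 4) → |ξ (a - w)| ≤ ρ / 4 * ‖ξ‖ := by
    intro w a ha
    rw [mem_ball_iff_norm] at ha
    have := ξ.le_opNorm (a - w)
    rw [Real.norm_eq_abs] at this
    nlinarith [norm_nonneg ξ]
  have sub : ∀ σ : ℝ, |σ| = ρ / 2 → ball (z + σ • e) (ρ / 4) ⊆ ball z ρ := by
    intro σ hσ
    apply ball_subset_ball'
    rw [dist_eq_norm, add_sub_cancel_left, norm_smul, Real.norm_eq_abs, hσ]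
    nlinarith
  rcases le_total 0 (ξ (z - x)) with h | h
  · refine ⟨z + (ρ / 2) • e, sub _ (abs_of_pos (by positivity)), fun a ha => ?_⟩
    have h1 := abs_le.1 (key _ a ha)
    have h2 : ξ (a - x) = ξ (a - (z + (ρ / 2) • e)) + ξ (z - x) + ρ / 2 * ‖ξ‖ := by
      simp only [map_sub, map_add, map_smul, he2, smul_eq_mul]; ring
    refine le_trans ?_ (le_abs_self _)
    rw [h2]; linarith
  · refine ⟨z + (-(ρ / 2)) • e, sub _ (by rw [abs_neg, abs_of_pos (by positivity)]),
      fun a ha => ?_⟩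
    have h1 := abs_le.1 (key _ a ha)
    have h2 : ξ (a - x) = ξ (a - (z + (-(ρ / 2)) • e)) + ξ (z - x) - ρ / 2 * ‖ξ‖ := by
      simp only [map_sub, map_add, map_smul, he2, smul_eq_mul]; ring
    refine le_trans ?_ (neg_le_abs _)
    rw [h2]; linarith

lemma aux_geom2 {d : ℕ} (R s : ℝ) (hs : 0 < s) (hsR : s ≤ 2 * R) (x₀ : E d)
    (hx : x₀ ∈ ball (0 : E d) R) :
    ∃ z : E d, ball z (s / 4) ⊆ ball x₀ s ∧ ball z (s / 4) ⊆ ball 0 R := by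
  have hR : 0 < R := by linarith
  rw [mem_ball_zero_iff] at hx
  have h0 : s / (4 * R) ≤ 1 := by rw [div_le_one (by positivity)]; linarith
  have e : s / (4 * R) * R = s / 4 := by field_simp
  refine ⟨(1 - s / (4 * R)) • x₀, ball_subset_ball' ?_, ball_subset_ball' ?_⟩
  · rw [dist_eq_norm]
    have : (1 - s / (4 * R)) • x₀ - x₀ = (-(s / (4 * R))) • x₀ := by module
    rw [this, norm_smul, norm_neg, Real.norm_of_nonneg (by positivity)]
    have : s / (4 * R) * ‖x₀‖ ≤ s / (4 * R) * R := by gcongr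
    linarith
  · rw [dist_zero_right, norm_smul, Real.norm_of_nonneg (by linarith)]
    have : (1 - s / (4 * R)) * ‖x₀‖ ≤ (1 - s / (4 * R)) * R :=
      mul_le_mul_of_nonneg_left hx.le (by linarith)
    linarith

lemma aux_frob {d : ℕ} (m : Matrix (Fin d) (Fin d) ℝ) (v : E d) :
    |∑ i, ∑ j, v i * v j * m i j| ≤ frob m * ‖v‖ ^ 2 := by
  have h1 : (∑ i, ∑ j, v i * v j * m i j) ^ 2 ≤
      (∑ i, ∑ j, (v i * v j) ^ 2) * (∑ i, ∑ j, (m i j) ^ 2) := by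
    simp only [← Finset.sum_product']
    exact Finset.sum_mul_sq_le_sq_mul_sq _ _ _
  have h2 : (∑ i, ∑ j, (v i * v j) ^ 2) = (‖v‖ ^ 2) ^ 2 := by
    rw [EuclideanSpace.real_norm_sq_eq, sq (∑ i, _), Finset.sum_mul_sum]
    simp only [mul_pow]
  rw [h2, mul_comm] at h1
  rw [← Real.sqrt_sq_eq_abs]
  refine (Real.sqrt_le_sqrt h1).trans_eq ?_
  have h3 : 0 ≤ ∑ i, ∑ j, (m i j) ^ 2 :=
    Finset.sum_nonneg fun i _ => Finset.sum_nonneg fun j _ => sq_nonneg _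
  rw [frob]
  generalize ∑ i, ∑ j, (m i j) ^ 2 = q at *
  rw [Real.sqrt_mul h3, Real.sqrt_sq (by positivity)]

lemma aux_contD {d : ℕ} (R : ℝ) (u : E d → ℝ) (hu : ContDiffOn ℝ 2 u (ball (0 : E d) R))
    (v : E d) : ContDiffOn ℝ 1 (fun y => fderiv ℝ u y v) (ball (0 : E d) R) := by
  have : ContDiffOn ℝ 1 (fderiv ℝ u) (ball (0 : E d) R) :=
    hu.fderiv_of_isOpen isOpen_ball (by norm_num)
  exact this.clm_apply contDiffOn_const

lemma aux_hess {d : ℕ} (R : ℝ) (u : E d → ℝ) (hu : ContDiffOn ℝ 2 u (ball (0 : E d) R))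
    (v y : E d) (hy : y ∈ ball (0 : E d) R) :
    |fderiv ℝ (fun y => fderiv ℝ u y v) y v| ≤ frob (hess u y) * ‖v‖ ^ 2 := by
  have hv : v = ∑ i, v i • EuclideanSpace.single i (1 : ℝ) := by
    ext j; simp [Finset.sum_apply, Pi.single_apply]
  have hd : ∀ w : E d, DifferentiableAt ℝ (fun y => fderiv ℝ u y w) y := fun w =>
    ((aux_contD R u hu w).differentiableOn (by norm_num)).differentiableAt
      (isOpen_ball.mem_nhds hy)
  have h1 : (fun y => fderiv ℝ u y v) =
      fun y => ∑ j, v j • fderiv ℝ u y (EuclideanSpace.single j (1 : ℝ)) := by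
    funext z
    conv_lhs => rw [hv]
    simp only [map_sum, map_smul]
  have h2 : fderiv ℝ (fun y => fderiv ℝ u y v) y v = ∑ i, ∑ j, v i * v j * hess u y i j := by
    have hh := HasFDerivAt.fun_sum (u := Finset.univ) fun j _ =>
      ((hd (EuclideanSpace.single j (1 : ℝ))).hasFDerivAt.fun_const_smul (v j))
    have hL : ∀ L : E d →L[ℝ] ℝ, L v = ∑ i, v i * L (EuclideanSpace.single i (1 : ℝ)) := by
      intro L
      conv_lhs => rw [hv]
      simp only [map_sum, map_smul, smul_eq_mul]
    rw [h1, hh.fderiv, hL]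
    refine Finset.sum_congr rfl fun i _ => ?_
    simp only [FunLike.coe_sum, Finset.sum_apply, FunLike.coe_smul, Pi.smul_apply, smul_eq_mul,
      Finset.mul_sum, hess, Matrix.of_apply, mul_assoc]
  rw [h2]
  exact aux_frob _ _

lemma aux_frob_cont {d : ℕ} (R : ℝ) (u : E d → ℝ) (hu : ContDiffOn ℝ 2 u (ball (0 : E d) R)) :
    ContinuousOn (fun z => frob (hess u z)) (ball (0 : E d) R) := by
  unfold frob
  refine Real.continuous_sqrt.comp_continuousOn ?_
  refine continuousOn_finsetSum _ fun i _ => continuousOn_finsetSum _ fun j _ => ?_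
  refine ContinuousOn.pow ?_ 2
  simp only [hess, Matrix.of_apply]
  exact (((aux_contD R u hu _).continuousOn_fderiv_of_isOpen isOpen_ball (by norm_num))).clm_apply
    continuousOn_const

lemma aux_taylor (g g' g'' b : ℝ → ℝ) (τ : ℝ) (hτ : 0 < τ)
    (h1 : ∀ t ∈ Icc 0 τ, HasDerivAt g (g' t) t) (h2 : ∀ t ∈ Icc 0 τ, HasDerivAt g' (g'' t) t)
    (hb : ContinuousOn b (Icc 0 τ)) (hgb : ∀ t ∈ Icc 0 τ, |g'' t| ≤ b t) :
    τ * |g' 0| ≤ |g τ| + |g 0| + τ * ∫ t in Ioc 0 τ, b t := by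
  set K := ∫ t in Ioc 0 τ, b t with hK
  have hbi : IntegrableOn b (Icc 0 τ) := hb.integrableOn_Icc
  have hb0 : ∀ t ∈ Icc 0 τ, 0 ≤ b t := fun t ht => (abs_nonneg _).trans (hgb t ht)
  have hle : ∀ t ∈ Icc 0 τ, |g' t - g' 0| ≤ K := by
    intro t ht
    have hsub : Icc 0 t ⊆ Icc 0 τ := Icc_subset_Icc_right ht.2
    have hI : ∫ y in (0)..t, b y ≤ K := by
      rw [intervalIntegral.integral_of_le ht.1]
      refine setIntegral_mono_set (hbi.mono_set Ioc_subset_Icc_self) ?_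
        (Ioc_subset_Ioc_right ht.2).eventuallyLE
      exact (ae_restrict_mem measurableSet_Ioc).mono fun y hy => hb0 y (Ioc_subset_Icc_self hy)
    have a1 := intervalIntegral.sub_le_integral_of_hasDeriv_right_of_le (g := g') (g' := g'')
      (φ := b) ht.1 (fun y hy => (h2 y (hsub hy)).continuousAt.continuousWithinAt)
      (fun y hy => (h2 y (hsub (Ioo_subset_Icc_self hy))).hasDerivWithinAt)
      (hbi.mono_set hsub)
      (fun y hy => (le_abs_self _).trans (hgb y (hsub (Ioo_subset_Icc_self hy))))
    have a2 := intervalIntegral.sub_le_integral_of_hasDeriv_right_of_le (g := fun y => - g' y)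
      (g' := fun y => - g'' y)
      (φ := b) ht.1 (fun y hy => (h2 y (hsub hy)).neg.continuousAt.continuousWithinAt)
      (fun y hy => (h2 y (hsub (Ioo_subset_Icc_self hy))).neg.hasDerivWithinAt)
      (hbi.mono_set hsub)
      (fun y hy => (neg_le_abs _).trans (hgb y (hsub (Ioo_subset_Icc_self hy))))
    rw [abs_le]; constructor <;> linarith
  have hmv := norm_image_sub_le_of_norm_deriv_le_segment' (f := fun t => g t - t * g' 0)
    (f' := fun t => g' t - 1 * g' 0) (a := 0) (b := τ) (C := K)
    (fun t ht => ((h1 t ht).sub ((hasDerivAt_id t).mul_const _)).hasDerivWithinAt)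
    (fun t ht => by rw [one_mul, Real.norm_eq_abs]; exact hle t (Ico_subset_Icc_self ht))
    τ ⟨hτ.le, le_rfl⟩
  rw [Real.norm_eq_abs] at hmv
  have e : τ * |g' 0| = |τ * g' 0| := by rw [abs_mul, abs_of_pos hτ]
  rw [e]
  have t1 : τ * g' 0 = g τ - g 0 - (g τ - τ * g' 0 - (g 0 - 0 * g' 0)) := by ring
  rw [t1]
  refine (abs_sub _ _).trans ?_
  have := abs_sub (g τ) (g 0)
  linarith

lemma aux_point {d : ℕ} (R : ℝ) (u : E d → ℝ) (hu : ContDiffOn ℝ 2 u (ball (0 : E d) R))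
    (x a : E d) (hx : x ∈ ball (0 : E d) R) (ha : a ∈ ball (0 : E d) R) (c τ : ℝ) (hτ : 0 < τ)
    (hτ1 : τ ≤ 1) :
    ENNReal.ofReal (τ * |fderiv ℝ u x (a - x)|) ≤
      ENNReal.ofReal |u ((1 - τ) • x + τ • a) - c| + ENNReal.ofReal |u x - c| +
      ENNReal.ofReal (τ * ‖a - x‖ ^ 2) *
        ∫⁻ t in Ioc 0 τ, ENNReal.ofReal (frob (hess u ((1 - t) • x + t • a))) := by
  have hγ : ∀ t ∈ Icc 0 τ, (1 - t) • x + t • a ∈ ball (0 : E d) R := fun t ht =>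
    (convex_ball 0 R) hx ha (by linarith [ht.2]) ht.1 (by ring)
  have hγd : ∀ t : ℝ, HasDerivAt (fun t : ℝ => (1 - t) • x + t • a) (a - x) t := by
    intro t
    have h := (((hasDerivAt_const t (1 : ℝ)).sub (hasDerivAt_id t)).smul_const x).add
      ((hasDerivAt_id t).smul_const a)
    exact HasDerivAt.congr_deriv (f' := (0 - 1 : ℝ) • x + (1 : ℝ) • a) h (by module)
  have hγc : Continuous (fun t : ℝ => (1 - t) • x + t • a) := by fun_prop
  set b : ℝ → ℝ := fun t => frob (hess u ((1 - t) • x + t • a)) * ‖a - x‖ ^ 2 with hbdef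
  have hfc : ContinuousOn (fun t : ℝ => frob (hess u ((1 - t) • x + t • a))) (Icc 0 τ) :=
    (aux_frob_cont R u hu).comp hγc.continuousOn hγ
  have hbc : ContinuousOn b (Icc 0 τ) := hfc.mul continuousOn_const
  have hT := aux_taylor (fun t => u ((1 - t) • x + t • a) - c)
    (fun t => fderiv ℝ u ((1 - t) • x + t • a) (a - x))
    (fun t => fderiv ℝ (fun y => fderiv ℝ u y (a - x)) ((1 - t) • x + t • a) (a - x))
    b τ hτ
    (fun t ht => by
      have : DifferentiableAt ℝ u ((1 - t) • x + t • a) :=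
        (hu.differentiableOn (by norm_num)).differentiableAt (isOpen_ball.mem_nhds (hγ t ht))
      exact (this.hasFDerivAt.comp_hasDerivAt t (hγd t)).sub_const c)
    (fun t ht => by
      have : DifferentiableAt ℝ (fun y => fderiv ℝ u y (a - x)) ((1 - t) • x + t • a) :=
        ((aux_contD R u hu _).differentiableOn (by norm_num)).differentiableAt
          (isOpen_ball.mem_nhds (hγ t ht))
      exact this.hasFDerivAt.comp_hasDerivAt t (hγd t))
    hbc (fun t ht => aux_hess R u hu _ _ (hγ t ht))
  simp only [sub_zero, one_smul, zero_smul, add_zero] at hT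
  refine (ENNReal.ofReal_le_ofReal hT).trans ?_
  have hf0 : ∀ m : Matrix (Fin d) (Fin d) ℝ, 0 ≤ frob m := fun m => Real.sqrt_nonneg _
  rw [ENNReal.ofReal_add (by positivity) (mul_nonneg hτ.le (integral_nonneg fun t =>
    mul_nonneg (hf0 _) (by positivity))), ENNReal.ofReal_add (by positivity) (by positivity)]
  gcongr
  rw [integral_mul_const, mul_comm (∫ t in Ioc 0 τ, _), ← mul_assoc,
    ENNReal.ofReal_mul (by positivity), ofReal_integral_eq_lintegral_ofReal]
  · exact hfc.integrableOn_Icc.mono_set Ioc_subset_Icc_self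
  · exact Eventually.of_forall fun t => hf0 _

lemma aux_jensen (f : ℝ → ℝ≥0∞) (hf : Measurable f) (p τ : ℝ) (hp : 1 < p) :
    (∫⁻ t in Ioc 0 τ, f t) ^ p ≤ ENNReal.ofReal τ ^ (p - 1) * ∫⁻ t in Ioc 0 τ, f t ^ p := by
  have hc := Real.HolderConjugate.conjExponent hp
  have h := ENNReal.lintegral_mul_le_Lp_mul_Lq (volume.restrict (Ioc 0 τ)) hc
    hf.aemeasurable (aemeasurable_const (b := (1 : ℝ≥0∞)))
  simp only [Pi.mul_apply, mul_one, ENNReal.one_rpow, lintegral_const, one_mul,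
    Measure.restrict_apply_univ, Real.volume_Ioc, sub_zero] at h
  have hp0 : 0 < p := by linarith
  refine (ENNReal.rpow_le_rpow h hp0.le).trans_eq ?_
  rw [ENNReal.mul_rpow_of_nonneg _ _ hp0.le, ← ENNReal.rpow_mul, ← ENNReal.rpow_mul, mul_comm]
  congr 1
  · congr 1
    rw [Real.conjExponent]; field_simp
  · rw [one_div, inv_mul_cancel₀ hp0.ne', ENNReal.rpow_one]

lemma aux_three (a b c : ℝ≥0∞) (p : ℝ) (hp : 1 < p) :
    (a + b + c) ^ p ≤ 4 ^ p * (a ^ p + b ^ p + c ^ p) := by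
  have h1 := ENNReal.rpow_add_le_mul_rpow_add_rpow (a + b) c hp.le
  have h2 := ENNReal.rpow_add_le_mul_rpow_add_rpow a b hp.le
  have e : (4 : ℝ≥0∞) ^ p = 2 ^ p * 2 ^ p := by
    rw [← ENNReal.mul_rpow_of_nonneg _ _ (by linarith)]; norm_num
  have h3 : (2 : ℝ≥0∞) ^ (p - 1) ≤ 2 ^ p :=
    ENNReal.rpow_le_rpow_of_exponent_le (by norm_num) (by linarith)
  have h4 : (1 : ℝ≥0∞) ≤ 2 ^ p := ENNReal.one_le_rpow (by norm_num) (by linarith)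
  calc _ ≤ 2 ^ p * (2 ^ p * (a ^ p + b ^ p) + 2 ^ p * c ^ p) := by
        refine h1.trans ?_
        gcongr
        · exact h2.trans (by gcongr)
        · exact le_mul_of_one_le_left zero_le h4
    _ = _ := by rw [e]; ring

lemma aux_meas0 {d : ℕ} (R : ℝ) (f : E d → ℝ)
    (hf : ContinuousOn f (ball (0 : E d) R)) :
    Measurable ((ball (0 : E d) R).indicator f) := by
  classical
  have h0 := hf.measurable_piecewise (g := (0 : E d → ℝ)) continuousOn_const
    measurableSet_ball
  rwa [piecewise_eq_indicator] at h0

lemma aux_meas {d : ℕ} (R p : ℝ) (f : E d → ℝ)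
    (hf : ContinuousOn f (ball (0 : E d) R)) :
    Measurable fun y => ENNReal.ofReal (|(ball (0 : E d) R).indicator f y| ^ p) :=
  ENNReal.measurable_ofReal.comp ((aux_meas0 R f hf).abs.pow_const p)

lemma aux_ofReal_rpow (a p : ℝ) (hp : 1 < p) :
    ENNReal.ofReal (|a| ^ p) = ENNReal.ofReal |a| ^ p :=
  (ENNReal.ofReal_rpow_of_nonneg (abs_nonneg _) (by linarith)).symm

lemma aux_pw {d : ℕ} (p : ℝ) (hp : 1 < p) (R : ℝ) (x₀ : E d) (hx₀ : x₀ ∈ ball (0 : E d) R)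
    (u : E d → ℝ) (hu : ContDiffOn ℝ 2 u (ball (0 : E d) R)) (c r s τ : ℝ)
    (hr : 0 < r) (hrs : r ≤ s) (hsR : s ≤ 2 * R) (hτ : 0 < τ) (hτ1 : τ ≤ 1)
    (Fu F2 : E d → ℝ≥0∞)
    (hFu : Fu = fun y => ENNReal.ofReal
      (|(ball (0 : E d) R).indicator (fun z => u z - c) y| ^ p))
    (hF2 : F2 = fun y => ENNReal.ofReal
      (|(ball (0 : E d) R).indicator (fun z => frob (hess u z)) y| ^ p))
    (x : E d) (hx : x ∈ ball x₀ r) :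
    ENNReal.ofReal (τ * (s / 16)) ^ p * volume (ball x₀ s) *
      ENNReal.ofReal (|(ball (0 : E d) R).indicator (fun z => ‖fderiv ℝ u z‖) x| ^ p) ≤
    16 ^ d * 4 ^ p * (∫⁻ a in ball x₀ s, Fu ((1 - τ) • x + τ • a) +
      Fu ((1 - 0 : ℝ) • x + (0 : ℝ) • a) +
      ENNReal.ofReal (4 * τ * s ^ 2) ^ p * ENNReal.ofReal τ ^ (p - 1) *
        ∫⁻ t in Ioc 0 τ, F2 ((1 - t) • x + t • a)) := by
  have hp0 : 0 < p := by linarith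
  have hs : 0 < s := hr.trans_le hrs
  by_cases hxR : x ∈ ball (0 : E d) R
  swap
  · rw [indicator_of_notMem hxR, abs_zero, Real.zero_rpow hp0.ne']; simp
  obtain ⟨z, hz1, hz2⟩ := aux_geom2 R s hs hsR x₀ hx₀
  obtain ⟨w, hw1, hw2⟩ := aux_geom (fderiv ℝ u x) x z (s / 4) (by positivity)
  have e16 : s / 4 / 4 = s / 16 := by ring
  rw [e16] at hw1 hw2
  have hV : volume (ball x₀ s) = 16 ^ d * volume (ball w (s / 16)) := by
    rw [aux_ball _ _ hs, aux_ball _ (s / 16) (by positivity), ← mul_assoc]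
    congr 1
    rw [show (16 : ℝ≥0∞) ^ d = ENNReal.ofReal (16 ^ d) by
      rw [ENNReal.ofReal_pow (by norm_num)]; simp, ← ENNReal.ofReal_mul (by positivity),
      ← mul_pow]
    congr 2; ring
  have hmF2 : Measurable F2 := by
    rw [hF2]; exact aux_meas R p _ (aux_frob_cont R u hu)
  have hpt : ∀ a ∈ ball w (s / 16),
      ENNReal.ofReal (τ * (s / 16)) ^ p * ENNReal.ofReal ‖fderiv ℝ u x‖ ^ p ≤
      4 ^ p * (Fu ((1 - τ) • x + τ • a) + Fu ((1 - 0 : ℝ) • x + (0 : ℝ) • a) +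
      ENNReal.ofReal (4 * τ * s ^ 2) ^ p * ENNReal.ofReal τ ^ (p - 1) *
        ∫⁻ t in Ioc 0 τ, F2 ((1 - t) • x + t • a)) := by
    intro a ha
    have haR : a ∈ ball (0 : E d) R := hz2 (hw1 ha)
    have has : a ∈ ball x₀ s := hz1 (hw1 ha)
    have hγ : ∀ t : ℝ, 0 ≤ t → t ≤ τ → (1 - t) • x + t • a ∈ ball (0 : E d) R := fun t h0 h1 =>
      (convex_ball 0 R) hxR haR (by linarith) h0 (by ring)
    have hP := aux_point R u hu x a hxR haR c τ hτ hτ1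
    have hn : ‖a - x‖ ≤ 2 * s := by
      rw [mem_ball_iff_norm] at hx has
      have : a - x = (a - x₀) - (x - x₀) := by abel
      rw [this]
      refine (norm_sub_le _ _).trans ?_
      linarith
    have hJ := aux_jensen (fun t => ENNReal.ofReal
      |(ball (0 : E d) R).indicator (fun z => frob (hess u z)) ((1 - t) • x + t • a)|)
      (by
        have h := aux_meas0 R _ (aux_frob_cont R u hu)
        have hc : Measurable fun t : ℝ => (1 - t) • x + t • a :=
          (by fun_prop : Continuous fun t : ℝ => (1 - t) • x + t • a).measurable
        exact ENNReal.measurable_ofReal.comp (h.comp hc).abs) p τ hp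
    have e2 : ∫⁻ t in Ioc 0 τ, ENNReal.ofReal (frob (hess u ((1 - t) • x + t • a))) =
        ∫⁻ t in Ioc 0 τ, ENNReal.ofReal
          |(ball (0 : E d) R).indicator (fun z => frob (hess u z)) ((1 - t) • x + t • a)| := by
      refine setLIntegral_congr_fun measurableSet_Ioc fun t ht => ?_
      rw [indicator_of_mem (hγ t ht.1.le ht.2), abs_of_nonneg (show 0 ≤ frob (hess u ((1 - t) • x + t • a)) from Real.sqrt_nonneg _)]
    have e3 : ∫⁻ t in Ioc 0 τ, F2 ((1 - t) • x + t • a) = ∫⁻ t in Ioc 0 τ, ENNReal.ofReal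
          |(ball (0 : E d) R).indicator (fun z => frob (hess u z)) ((1 - t) • x + t • a)| ^ p := by
      simp only [hF2, aux_ofReal_rpow _ _ hp]
    rw [e2] at hP
    rw [e3]
    have e4 : Fu ((1 - τ) • x + τ • a) = ENNReal.ofReal |u ((1 - τ) • x + τ • a) - c| ^ p := by
      rw [hFu]; dsimp only
      rw [indicator_of_mem (hγ τ hτ.le le_rfl), aux_ofReal_rpow _ _ hp]
    have e5 : Fu ((1 - 0 : ℝ) • x + (0 : ℝ) • a) = ENNReal.ofReal |u x - c| ^ p := by
      rw [hFu]; dsimp only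
      rw [indicator_of_mem (hγ 0 le_rfl hτ.le), aux_ofReal_rpow _ _ hp]
      simp
    rw [e4, e5, ← ENNReal.mul_rpow_of_nonneg _ _ hp0.le, ← ENNReal.ofReal_mul (by positivity)]
    have h0 : ENNReal.ofReal (τ * (s / 16) * ‖fderiv ℝ u x‖) ≤
        ENNReal.ofReal (τ * |fderiv ℝ u x (a - x)|) := by
      apply ENNReal.ofReal_le_ofReal
      have := mul_le_mul_of_nonneg_left (hw2 a ha) hτ.le
      linarith
    refine (ENNReal.rpow_le_rpow (h0.trans hP) hp0.le).trans ?_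
    refine (aux_three _ _ _ p hp).trans ?_
    gcongr
    rw [ENNReal.mul_rpow_of_nonneg _ _ hp0.le, mul_assoc]
    have h6 : τ * ‖a - x‖ ^ 2 ≤ 4 * τ * s ^ 2 := by
      have : ‖a - x‖ ^ 2 ≤ (2 * s) ^ 2 := by gcongr
      nlinarith
    gcongr
  rw [indicator_of_mem hxR, abs_of_nonneg (norm_nonneg _),
    ← ENNReal.ofReal_rpow_of_nonneg (norm_nonneg _) hp0.le, hV]
  have h4t : (4 : ℝ≥0∞) ^ p ≠ ⊤ := ENNReal.rpow_ne_top_of_nonneg hp0.le (by norm_num)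
  calc _ = 16 ^ d * (ENNReal.ofReal (τ * (s / 16)) ^ p * ENNReal.ofReal ‖fderiv ℝ u x‖ ^ p *
        volume (ball w (s / 16))) := by ring
    _ ≤ 16 ^ d * (∫⁻ a in ball w (s / 16), 4 ^ p * (Fu ((1 - τ) • x + τ • a) +
        Fu ((1 - 0 : ℝ) • x + (0 : ℝ) • a) +
        ENNReal.ofReal (4 * τ * s ^ 2) ^ p * ENNReal.ofReal τ ^ (p - 1) *
        ∫⁻ t in Ioc 0 τ, F2 ((1 - t) • x + t • a))) := by
      gcongr
      rw [← setLIntegral_const]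
      exact setLIntegral_mono' measurableSet_ball hpt
    _ ≤ 16 ^ d * (∫⁻ a in ball x₀ s, 4 ^ p * (Fu ((1 - τ) • x + τ • a) +
        Fu ((1 - 0 : ℝ) • x + (0 : ℝ) • a) +
        ENNReal.ofReal (4 * τ * s ^ 2) ^ p * ENNReal.ofReal τ ^ (p - 1) *
        ∫⁻ t in Ioc 0 τ, F2 ((1 - t) • x + t • a))) := by
      gcongr
      exact hw1.trans hz1
    _ = _ := by
      rw [lintegral_const_mul' _ _ h4t, ← mul_assoc (16 ^ d)]

lemma aux_core {d : ℕ} (p μ : ℝ) (hp : 1 < p) (hμ : 0 < μ) (R : ℝ) (x₀ : E d)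
    (hx₀ : x₀ ∈ ball (0 : E d) R)
    (u : E d → ℝ) (hu : ContDiffOn ℝ 2 u (ball (0 : E d) R)) (c r s τ : ℝ)
    (hr : 0 < r) (hrs : r ≤ s) (hsR : s ≤ 2 * R) (hτ : 0 < τ) (hτ1 : τ ≤ 1)
    (Mu M2 : ℝ≥0∞)
    (hMu : ∀ σ ∈ Icc r (2 * R), ENNReal.ofReal (σ ^ μ) * nLp p (ball x₀ σ)
      ((ball (0 : E d) R).indicator fun z => u z - c) ≤ Mu)
    (hM2 : ∀ σ ∈ Icc r (2 * R), ENNReal.ofReal (σ ^ μ) * nLp p (ball x₀ σ)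
      ((ball (0 : E d) R).indicator fun z => frob (hess u z)) ≤ M2) :
    ENNReal.ofReal (τ * (s / 16)) * (ENNReal.ofReal (r ^ μ) * nLp p (ball x₀ r)
      ((ball (0 : E d) R).indicator fun z => ‖fderiv ℝ u z‖)) ≤
    32 ^ d * 4 * (2 * Mu + ENNReal.ofReal (4 * τ ^ 2 * s ^ 2) * M2) := by
  have hp0 : 0 < p := by linarith
  have hs : 0 < s := hr.trans_le hrs
  obtain ⟨Fu, hFu⟩ : ∃ Fu : E d → ℝ≥0∞, Fu = fun y => ENNReal.ofReal
      (|(ball (0 : E d) R).indicator (fun z => u z - c) y| ^ p) := ⟨_, rfl⟩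
  obtain ⟨F2, hF2⟩ : ∃ F2 : E d → ℝ≥0∞, F2 = fun y => ENNReal.ofReal
      (|(ball (0 : E d) R).indicator (fun z => frob (hess u z)) y| ^ p) := ⟨_, rfl⟩
  have hmu : Measurable Fu := by
    rw [hFu]; exact aux_meas R p _ (hu.continuousOn.sub continuousOn_const)
  have hm2 : Measurable F2 := by
    rw [hF2]; exact aux_meas R p _ (aux_frob_cont R u hu)
  set A := ENNReal.ofReal (r ^ μ) with hA
  set Vr := volume (ball x₀ r) with hVr
  set Vs := volume (ball x₀ s) with hVs
  have hVr0 : Vr ≠ 0 := (measure_ball_pos _ _ hr).ne'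
  have hVs0 : Vs ≠ 0 := (measure_ball_pos _ _ hs).ne'
  have hVrt : Vr ≠ ⊤ := measure_ball_lt_top.ne
  have hVst : Vs ≠ ⊤ := measure_ball_lt_top.ne
  have hAt : A ^ p ≠ ⊤ := ENNReal.rpow_ne_top_of_nonneg hp0.le ENNReal.ofReal_ne_top
  have Iu : ∀ t : ℝ, 0 ≤ t → t ≤ 1 → A ^ p * ∫⁻ x in ball x₀ r, ∫⁻ a in ball x₀ s,
      Fu ((1 - t) • x + t • a) ≤ 2 ^ d * Vr * Vs * Mu ^ p := by
    intro t h0 h1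
    rw [hFu] at hmu ⊢
    exact aux_I' p μ hp hμ _ hmu r s t (2 * R) Mu hr hrs hsR h0 h1 x₀ hMu
  have I2 : ∀ t : ℝ, 0 ≤ t → t ≤ 1 → A ^ p * ∫⁻ x in ball x₀ r, ∫⁻ a in ball x₀ s,
      F2 ((1 - t) • x + t • a) ≤ 2 ^ d * Vr * Vs * M2 ^ p := by
    intro t h0 h1
    rw [hF2] at hm2 ⊢
    exact aux_I' p μ hp hμ _ hm2 r s t (2 * R) M2 hr hrs hsR h0 h1 x₀ hM2
  set D := ENNReal.ofReal (4 * τ * s ^ 2) ^ p * ENNReal.ofReal τ ^ (p - 1) with hD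
  have hDt : D ≠ ⊤ := ENNReal.mul_ne_top
    (ENNReal.rpow_ne_top_of_nonneg hp0.le ENNReal.ofReal_ne_top)
    (ENNReal.rpow_ne_top_of_nonneg (by linarith) ENNReal.ofReal_ne_top)
  have hms : ∀ t : ℝ, Measurable fun z : E d × E d => (1 - t) • z.1 + t • z.2 := fun t => by
    fun_prop
  have hmsa : ∀ (t : ℝ) (x : E d), Measurable fun a : E d => (1 - t) • x + t • a :=
    fun t x => by fun_prop
  have h4t : (16 : ℝ≥0∞) ^ d * 4 ^ p ≠ ⊤ := ENNReal.mul_ne_top (by simp)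
    (ENNReal.rpow_ne_top_of_nonneg hp0.le (by norm_num))
  have hmUx : ∀ t : ℝ, Measurable fun x : E d => ∫⁻ a in ball x₀ s, Fu ((1 - t) • x + t • a) :=
    fun t => (hmu.comp (hms t)).lintegral_prod_right'
  have step1 : ENNReal.ofReal (τ * (s / 16)) ^ p * Vs * ∫⁻ x in ball x₀ r,
      ENNReal.ofReal (|(ball (0 : E d) R).indicator (fun z => ‖fderiv ℝ u z‖) x| ^ p) ≤
      16 ^ d * 4 ^ p * ((∫⁻ x in ball x₀ r, ∫⁻ a in ball x₀ s, Fu ((1 - τ) • x + τ • a)) +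
        (∫⁻ x in ball x₀ r, ∫⁻ a in ball x₀ s, Fu ((1 - 0 : ℝ) • x + (0 : ℝ) • a)) +
        D * ∫⁻ x in ball x₀ r, ∫⁻ a in ball x₀ s, ∫⁻ t in Ioc 0 τ,
          F2 ((1 - t) • x + t • a)) := by
    rw [← lintegral_const_mul' _ _ (ENNReal.mul_ne_top
      (ENNReal.rpow_ne_top_of_nonneg hp0.le ENNReal.ofReal_ne_top) hVst),
      ← lintegral_const_mul' D _ hDt, ← lintegral_add_left (hmUx τ),
      ← lintegral_add_left (show Measurable fun x : E d =>
        (∫⁻ a in ball x₀ s, Fu ((1 - τ) • x + τ • a)) +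
        ∫⁻ a in ball x₀ s, Fu ((1 - 0 : ℝ) • x + (0 : ℝ) • a) from (hmUx τ).add (hmUx 0)),
      ← lintegral_const_mul' _ _ h4t]
    refine setLIntegral_mono' measurableSet_ball fun x hx => ?_
    refine (aux_pw p hp R x₀ hx₀ u hu c r s τ hr hrs hsR hτ hτ1 Fu F2 hFu hF2 x hx).trans_eq ?_
    congr 1
    have m1 := hmu.comp (hmsa τ x)
    have m2 := hmu.comp (hmsa 0 x)
    rw [lintegral_add_left (show Measurable fun a : E d => Fu ((1 - τ) • x + τ • a) +
      Fu ((1 - 0 : ℝ) • x + (0 : ℝ) • a) from m1.add m2), lintegral_const_mul' D _ hDt]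
    congr 1
    exact lintegral_add_left m1 _
  have hm3 : Measurable fun q : (E d × ℝ) × E d =>
      F2 ((1 - q.1.2) • q.1.1 + q.1.2 • q.2) :=
    hm2.comp (by fun_prop)
  have step2 : ∫⁻ x in ball x₀ r, ∫⁻ a in ball x₀ s, ∫⁻ t in Ioc 0 τ, F2 ((1 - t) • x + t • a) =
      ∫⁻ t in Ioc 0 τ, ∫⁻ x in ball x₀ r, ∫⁻ a in ball x₀ s, F2 ((1 - t) • x + t • a) := by
    calc _ = ∫⁻ x in ball x₀ r, ∫⁻ t in Ioc 0 τ, ∫⁻ a in ball x₀ s,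
          F2 ((1 - t) • x + t • a) := by
          refine lintegral_congr fun x => ?_
          refine lintegral_lintegral_swap (f := fun (a : E d) (t : ℝ) =>
            F2 ((1 - t) • x + t • a)) ?_
          exact (hm2.comp (by fun_prop : Measurable fun q : E d × ℝ =>
            (1 - q.2) • x + q.2 • q.1)).aemeasurable
      _ = _ := lintegral_lintegral_swap (f := fun (x : E d) (t : ℝ) => ∫⁻ a in ball x₀ s,
          F2 ((1 - t) • x + t • a)) (hm3.lintegral_prod_right').aemeasurable
  have step3 : A ^ p * ∫⁻ x in ball x₀ r, ∫⁻ a in ball x₀ s, ∫⁻ t in Ioc 0 τ,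
      F2 ((1 - t) • x + t • a) ≤ 2 ^ d * Vr * Vs * M2 ^ p * ENNReal.ofReal τ := by
    rw [step2, ← lintegral_const_mul' _ _ hAt]
    calc _ ≤ ∫⁻ t in Ioc 0 τ, 2 ^ d * Vr * Vs * M2 ^ p :=
          setLIntegral_mono' measurableSet_Ioc fun t ht => I2 t ht.1.le (ht.2.trans hτ1)
      _ = _ := by rw [setLIntegral_const, Real.volume_Ioc, sub_zero]
  have eD : D * ENNReal.ofReal τ = ENNReal.ofReal (4 * τ ^ 2 * s ^ 2) ^ p := by
    have : ENNReal.ofReal τ ^ (p - 1) * ENNReal.ofReal τ = ENNReal.ofReal τ ^ p := by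
      have h := ENNReal.rpow_add (p - 1) 1 (x := ENNReal.ofReal τ)
        (by simpa using hτ) ENNReal.ofReal_ne_top
      rw [ENNReal.rpow_one] at h
      rw [← h]; congr 1; ring
    rw [hD, mul_assoc, this, ← ENNReal.mul_rpow_of_nonneg _ _ hp0.le,
      ← ENNReal.ofReal_mul (by positivity)]
    congr 2; ring
  set nD := nLp p (ball x₀ r) ((ball (0 : E d) R).indicator fun z => ‖fderiv ℝ u z‖) with hnD
  have eG : ∫⁻ x in ball x₀ r,
      ENNReal.ofReal (|(ball (0 : E d) R).indicator (fun z => ‖fderiv ℝ u z‖) x| ^ p) =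
      Vr * nD ^ p := by
    rw [hnD, nLp, ← ENNReal.rpow_mul, one_div, inv_mul_cancel₀ hp0.ne', ENNReal.rpow_one,
      ← mul_assoc, ENNReal.mul_inv_cancel hVr0 hVrt, one_mul]
  rw [eG] at step1
  have step4 : (Vr * Vs) * (ENNReal.ofReal (τ * (s / 16)) ^ p * (A ^ p * nD ^ p)) ≤
      (Vr * Vs) * (32 ^ d * 4 ^ p * (Mu ^ p + Mu ^ p +
        ENNReal.ofReal (4 * τ ^ 2 * s ^ 2) ^ p * M2 ^ p)) := by
    calc _ = A ^ p * (ENNReal.ofReal (τ * (s / 16)) ^ p * Vs * (Vr * nD ^ p)) := by ring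
      _ ≤ _ := mul_le_mul_right step1 _
      _ = 16 ^ d * 4 ^ p * (
        (A ^ p * ∫⁻ x in ball x₀ r, ∫⁻ a in ball x₀ s, Fu ((1 - τ) • x + τ • a)) +
        (A ^ p * ∫⁻ x in ball x₀ r, ∫⁻ a in ball x₀ s, Fu ((1 - 0 : ℝ) • x + (0 : ℝ) • a)) +
        D * (A ^ p * ∫⁻ x in ball x₀ r, ∫⁻ a in ball x₀ s, ∫⁻ t in Ioc 0 τ,
          F2 ((1 - t) • x + t • a))) := by ring
      _ ≤ 16 ^ d * 4 ^ p * (2 ^ d * Vr * Vs * Mu ^ p + 2 ^ d * Vr * Vs * Mu ^ p +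
          D * (2 ^ d * Vr * Vs * M2 ^ p * ENNReal.ofReal τ)) := by
        refine mul_le_mul_right (add_le_add (add_le_add (Iu τ hτ.le hτ1)
          (Iu 0 le_rfl zero_le_one)) (mul_le_mul_right step3 _)) _
      _ = _ := by
        rw [← eD, show (32 : ℝ≥0∞) = 16 * 2 by norm_num, mul_pow]; ring
  have step5 := (ENNReal.mul_le_mul_iff_right (mul_ne_zero hVr0 hVs0)
    (ENNReal.mul_ne_top hVrt hVst)).1 step4
  have h32 : (32 : ℝ≥0∞) ^ d ≤ (32 ^ d) ^ p := by
    have : (1 : ℝ≥0∞) ≤ 32 ^ d := one_le_pow₀ (by norm_num)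
    exact ENNReal.le_rpow_self_of_one_le this hp.le
  rw [← ENNReal.rpow_le_rpow_iff hp0, ENNReal.mul_rpow_of_nonneg _ _ hp0.le,
    ENNReal.mul_rpow_of_nonneg _ _ hp0.le]
  refine step5.trans ?_
  rw [ENNReal.mul_rpow_of_nonneg _ _ hp0.le, ENNReal.mul_rpow_of_nonneg _ _ hp0.le,
    ← ENNReal.mul_rpow_of_nonneg _ M2 hp0.le, two_mul]
  gcongr
  exact (add_le_add_left (ENNReal.add_rpow_le_rpow_add _ _ hp.le) _).trans
    (ENNReal.add_rpow_le_rpow_add _ _ hp.le)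

/-- Estimate (4.7) of the paper's Lemma 4.4: Morrey interpolation inequality for the
gradient over balls `B_r(x₀)`. -/
theorem stmt_7 (d : ℕ) (hd : 1 ≤ d) (p μ : ℝ)
    (hp : 1 < p) (hμ : 0 < μ) (hμd : μ ≤ (d : ℝ) / p) :
    ∃ N : ℝ, 0 < N ∧
      ∀ R : ℝ, 0 < R → ∀ x₀ ∈ ball (0 : E d) R,
        ∀ u : E d → ℝ, ContDiffOn ℝ 2 u (closedBall (0 : E d) R) →
          ∀ ε ∈ Set.Ioc (0 : ℝ) 1, ∀ r : ℝ, 0 < r → r ≤ 2 * R → ∀ c : ℝ,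
            ENNReal.ofReal (r ^ μ) *
                nLp p (ball x₀ r)
                  ((ball (0 : E d) R).indicator fun z => ‖fderiv ℝ u z‖) ≤
              ENNReal.ofReal (N * ε * R) *
                  (⨆ s ∈ Set.Icc r (2 * R), ENNReal.ofReal (s ^ μ) *
                    nLp p (ball x₀ s)
                      ((ball (0 : E d) R).indicator fun z => frob (hess u z))) +
                ENNReal.ofReal (N * ε⁻¹ * R⁻¹) *
                  (⨆ s ∈ Set.Icc r (2 * R), ENNReal.ofReal (s ^ μ) *
                    nLp p (ball x₀ s)
                      ((ball (0 : E d) R).indicator fun z => u z - c)) := by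
  refine ⟨256 * 32 ^ d * 4, by positivity, ?_⟩
  intro R hR x₀ hx₀ u hu ε hε r hr hrR c
  have hu' := hu.mono ball_subset_closedBall
  obtain ⟨hε0, hε1⟩ := hε
  set Mu := ⨆ s ∈ Set.Icc r (2 * R), ENNReal.ofReal (s ^ μ) * nLp p (ball x₀ s)
    ((ball (0 : E d) R).indicator fun z => u z - c) with hMu
  set M2 := ⨆ s ∈ Set.Icc r (2 * R), ENNReal.ofReal (s ^ μ) * nLp p (ball x₀ s)
    ((ball (0 : E d) R).indicator fun z => frob (hess u z)) with hM2
  have hbu : ∀ σ ∈ Icc r (2 * R), ENNReal.ofReal (σ ^ μ) * nLp p (ball x₀ σ)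
      ((ball (0 : E d) R).indicator fun z => u z - c) ≤ Mu := fun σ hσ =>
    le_iSup₂ (f := fun s (_ : s ∈ Set.Icc r (2 * R)) => ENNReal.ofReal (s ^ μ) *
      nLp p (ball x₀ s) ((ball (0 : E d) R).indicator fun z => u z - c)) σ hσ
  have hb2 : ∀ σ ∈ Icc r (2 * R), ENNReal.ofReal (σ ^ μ) * nLp p (ball x₀ σ)
      ((ball (0 : E d) R).indicator fun z => frob (hess u z)) ≤ M2 := fun σ hσ =>
    le_iSup₂ (f := fun s (_ : s ∈ Set.Icc r (2 * R)) => ENNReal.ofReal (s ^ μ) *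
      nLp p (ball x₀ s) ((ball (0 : E d) R).indicator fun z => frob (hess u z))) σ hσ
  set X := ENNReal.ofReal (r ^ μ) * nLp p (ball x₀ r)
    ((ball (0 : E d) R).indicator fun z => ‖fderiv ℝ u z‖) with hX
  have hεR : 0 < ε * R := by positivity
  obtain ⟨s, τ, hrs, hsR, hτ, hτ1, hτs⟩ : ∃ s τ : ℝ, r ≤ s ∧ s ≤ 2 * R ∧ 0 < τ ∧ τ ≤ 1 ∧
      τ * s = ε * R := by
    rcases le_total (ε * R) r with h | h
    · exact ⟨r, ε * R / r, le_rfl, hrR, by positivity, (div_le_one hr).2 h, by field_simp⟩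
    · exact ⟨ε * R, 1, h, by nlinarith, one_pos, le_rfl, one_mul _⟩
  have h := aux_core p μ hp hμ R x₀ hx₀ u hu' c r s τ hr hrs hsR hτ hτ1 Mu M2 hbu hb2
  rw [← hX, show τ * (s / 16) = ε * R / 16 by rw [← hτs]; ring,
    show 4 * τ ^ 2 * s ^ 2 = 4 * (ε * R) ^ 2 by rw [← hτs]; ring] at h
  have e1 : X = ENNReal.ofReal (16 * (ε * R)⁻¹) * (ENNReal.ofReal (ε * R / 16) * X) := by
    rw [← mul_assoc, ← ENNReal.ofReal_mul (by positivity),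
      show 16 * (ε * R)⁻¹ * (ε * R / 16) = 1 by field_simp, ENNReal.ofReal_one, one_mul]
  have e2 : (32 : ℝ≥0∞) ^ d * 4 = ENNReal.ofReal (32 ^ d * 4) := by
    rw [ENNReal.ofReal_mul (by positivity), ENNReal.ofReal_pow (by norm_num)]; simp
  have e3 : (2 : ℝ≥0∞) = ENNReal.ofReal 2 := by simp
  rw [e2, e3] at h
  rw [e1]
  refine (mul_le_mul_right h _).trans ?_
  rw [mul_add, mul_add, add_comm, ← mul_assoc, ← mul_assoc, ← mul_assoc, ← mul_assoc,
    ← ENNReal.ofReal_mul (by positivity), ← ENNReal.ofReal_mul (by positivity),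
    ← ENNReal.ofReal_mul (by positivity)]
  have hP : (0 : ℝ) < 32 ^ d := by positivity
  gcongr ENNReal.ofReal ?_ * _ + ENNReal.ofReal ?_ * _
  · have : 16 * (ε * R)⁻¹ * (32 ^ d * 4) * (4 * (ε * R) ^ 2) =
      256 * 32 ^ d * ε * R := by field_simp; ring
    rw [this]
    have : 0 < 32 ^ d * (ε * R) := by positivity
    nlinarith
  · have : 16 * (ε * R)⁻¹ * (32 ^ d * 4) * 2 = 128 * 32 ^ d * ε⁻¹ * R⁻¹ := by
      rw [mul_inv]; ring
    rw [this]
    have : 0 < 32 ^ d * (ε⁻¹ * R⁻¹) := by positivity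
    nlinarith
end
end

section
/- Let d ≥ 1 be an integer, p ∈ (1,∞), 0 < μ ≤ d/p, R ∈ (0,∞). There is a constant N = N(d,p,μ) such that for every function u that is twice continuously differentiable on B̄_R and every ε ∈ (0,1]: ‖Du‖_{E_{p,μ}(B_R)} ≤ N ε R ‖D²u‖_{E_{p,μ}(B_R)} + N ε^{−1} R^{−1} ‖u‖_{E_{p,μ}(B_R)}. -/
open MeasureTheory Metric Set Filter
open scoped ENNReal RealInnerProductSpace

noncomputable section

/-- Normalized `L_p` seminorm on a ball for extended nonnegative functions. -/
def Nn {d : ℕ} (p : ℝ) (x : E d) (ρ : ℝ) (G : E d → ℝ≥0∞) : ℝ≥0∞ :=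
  ((volume (ball x ρ))⁻¹ * ∫⁻ y in ball x ρ, G y ^ p) ^ (1 / p)

/-- Contraction towards `z`. -/
def Tm {d : ℕ} (τ : ℝ) (z y : E d) : E d := y + τ • (z - y)

lemma nLp_eq {d : ℕ} (p : ℝ) (hp : 0 < p) (x : E d) (ρ : ℝ) (g : E d → ℝ) :
    nLp p (ball x ρ) g = Nn p x ρ (fun y => ‖g y‖ₑ) := by
  unfold nLp Nn
  congr 2
  apply lintegral_congr
  intro y
  dsimp only
  rw [← ENNReal.ofReal_rpow_of_nonneg (abs_nonneg _) hp.le, Real.enorm_eq_ofReal_abs]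

lemma Nn_mono {d : ℕ} (p : ℝ) (hp : 0 < p) (x : E d) (ρ : ℝ) (F G : E d → ℝ≥0∞)
    (h : ∀ y, F y ≤ G y) : Nn p x ρ F ≤ Nn p x ρ G := by
  unfold Nn
  gcongr
  exact h _

lemma Nn_add {d : ℕ} (p : ℝ) (hp : 1 ≤ p) (x : E d) (ρ : ℝ) (F G : E d → ℝ≥0∞)
    (hF : Measurable F) (hG : Measurable G) :
    Nn p x ρ (fun y => F y + G y) ≤ Nn p x ρ F + Nn p x ρ G := by
  unfold Nn
  have h0 : 0 ≤ 1 / p := by positivity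
  rw [ENNReal.mul_rpow_of_nonneg _ _ h0, ENNReal.mul_rpow_of_nonneg _ _ h0,
    ENNReal.mul_rpow_of_nonneg _ _ h0, ← mul_add]
  gcongr
  exact ENNReal.lintegral_Lp_add_le hF.aemeasurable hG.aemeasurable hp

lemma Nn_smul {d : ℕ} (p : ℝ) (hp : 0 < p) (x : E d) (ρ : ℝ) (c : ℝ≥0∞) (F : E d → ℝ≥0∞)
    (hF : Measurable F) :
    Nn p x ρ (fun y => c * F y) = c * Nn p x ρ F := by
  unfold Nn
  have h0 : 0 ≤ 1 / p := by positivity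
  simp_rw [ENNReal.mul_rpow_of_nonneg _ _ hp.le]
  rw [lintegral_const_mul _ (hF.pow_const p), mul_left_comm, ENNReal.mul_rpow_of_nonneg _ _ h0,
    ← ENNReal.rpow_mul, mul_one_div_cancel hp.ne', ENNReal.rpow_one]

lemma Nn_sum {d : ℕ} (p : ℝ) (hp : 1 ≤ p) (x : E d) (ρ : ℝ) {ι : Type*} (s : Finset ι)
    (F : ι → E d → ℝ≥0∞) (hF : ∀ i, Measurable (F i)) :
    Nn p x ρ (fun y => ∑ i ∈ s, F i y) ≤ ∑ i ∈ s, Nn p x ρ (F i) := by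
  classical
  induction s using Finset.induction_on with
  | empty =>
    have hp0 : 0 < p := by linarith
    simp [Nn, hp0]
  | insert a s ha ih =>
    simp only [Finset.sum_insert ha]
    refine (Nn_add p hp x ρ _ _ (hF a) (Finset.measurable_sum _ fun i _ => hF i)).trans ?_
    gcongr

lemma Tm_mem {d : ℕ} {Ω : Set (E d)} (hc : Convex ℝ Ω) {y z : E d} (hy : y ∈ Ω) (hz : z ∈ Ω)
    {τ : ℝ} (h0 : 0 ≤ τ) (h1 : τ ≤ 1) : Tm τ z y ∈ Ω :=
  hc.add_smul_sub_mem hy hz ⟨h0, h1⟩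

lemma Nn_comp {d : ℕ} (p : ℝ) (x z : E d) (ρ τ : ℝ) (hτ : τ < 1) (G : E d → ℝ≥0∞) :
    Nn p x ρ (fun y => G (Tm τ z y)) = Nn p (Tm τ z x) ((1 - τ) * ρ) G := by
  have hr : 0 < 1 - τ := by linarith
  let e : E d ≃ᵐ E d :=
    ((Homeomorph.smulOfNeZero (1 - τ) hr.ne').trans (Homeomorph.addRight (τ • z))).toMeasurableEquiv
  have he : ∀ y, e y = Tm τ z y := by
    intro y
    change (1 - τ) • y + τ • z = y + τ • (z - y)
    module
  obtain ⟨c, hc0, hct, hmap⟩ : ∃ c : ℝ≥0∞, c ≠ 0 ∧ c ≠ ⊤ ∧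
      Measure.map e (volume : Measure (E d)) = c • volume := by
    refine ⟨ENNReal.ofReal (abs ((1 - τ) ^ Module.finrank ℝ (E d))⁻¹), ?_, ENNReal.ofReal_ne_top, ?_⟩
    · simp only [ne_eq, ENNReal.ofReal_eq_zero, not_le]
      positivity
    · have h1 : (e : E d → E d) = (fun y => y + τ • z) ∘ (fun y => (1 - τ) • y) := by
        ext1 y
        rfl
      rw [h1, ← Measure.map_map (by fun_prop) (by fun_prop), Measure.map_addHaar_smul _ hr.ne',
        Measure.map_smul, map_add_right_eq_self]
  have hpre : e ⁻¹' (ball (Tm τ z x) ((1 - τ) * ρ)) = ball x ρ := by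
    ext y
    simp only [mem_preimage, mem_ball, he, dist_eq_norm]
    have : Tm τ z y - Tm τ z x = (1 - τ) • (y - x) := by unfold Tm; module
    rw [this, norm_smul, Real.norm_of_nonneg hr.le]
    exact mul_lt_mul_iff_right₀ hr
  have hmp : MeasurePreserving e volume (c • (volume : Measure (E d))) := ⟨e.measurable, hmap⟩
  have hv : volume (ball x ρ) = c * volume (ball (Tm τ z x) ((1 - τ) * ρ)) := by
    rw [← hpre, hmp.measure_preimage_equiv]; rfl
  have hi : ∫⁻ y in ball x ρ, G (Tm τ z y) ^ p
      = c * ∫⁻ y in ball (Tm τ z x) ((1 - τ) * ρ), G y ^ p := by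
    have := hmp.setLIntegral_comp_preimage_emb e.measurableEmbedding (fun y => G y ^ p)
      (ball (Tm τ z x) ((1 - τ) * ρ))
    rw [hpre, Measure.restrict_smul, lintegral_smul_measure] at this
    simpa only [he, smul_eq_mul] using this
  unfold Nn
  rw [hv, hi, ENNReal.mul_inv (Or.inl hc0) (Or.inl hct)]
  congr 1
  rw [mul_mul_mul_comm, ENNReal.inv_mul_cancel hc0 hct, one_mul]

lemma Nn_comp_le {d : ℕ} (p μ : ℝ) (hμ : 0 < μ) {Ω : Set (E d)} (hc : Convex ℝ Ω)
    (G : E d → ℝ≥0∞) (M : ℝ≥0∞)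
    (hM : ∀ ρ : ℝ, 0 < ρ → ∀ x ∈ Ω, ENNReal.ofReal (ρ ^ μ) * Nn p x ρ G ≤ M)
    {x z : E d} (hx : x ∈ Ω) (hz : z ∈ Ω) {ρ τ : ℝ} (hρ : 0 < ρ) (h0 : 0 ≤ τ) (h1 : τ ≤ 1 / 2) :
    ENNReal.ofReal (ρ ^ μ) * Nn p x ρ (fun y => G (Tm τ z y)) ≤ ENNReal.ofReal (2 ^ μ) * M := by
  rw [Nn_comp p x z ρ τ (by linarith)]
  have h2 : ρ ^ μ ≤ 2 ^ μ * ((1 - τ) * ρ) ^ μ := by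
    rw [← Real.mul_rpow (by norm_num) (by nlinarith)]
    apply Real.rpow_le_rpow hρ.le _ hμ.le
    nlinarith
  calc _ ≤ ENNReal.ofReal (2 ^ μ * ((1 - τ) * ρ) ^ μ) * Nn p (Tm τ z x) ((1 - τ) * ρ) G := by
        gcongr
    _ = ENNReal.ofReal (2 ^ μ) *
        (ENNReal.ofReal (((1 - τ) * ρ) ^ μ) * Nn p (Tm τ z x) ((1 - τ) * ρ) G) := by
        rw [ENNReal.ofReal_mul (by positivity), mul_assoc]
    _ ≤ _ := by
        gcongr
        exact hM _ (mul_pos (by linarith) hρ) _ (Tm_mem hc hx hz h0 (by linarith))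

lemma Nn_le_iff {d : ℕ} (p : ℝ) (hp : 0 < p) (x : E d) (ρ c : ℝ) (hc : 0 < c)
    (F : E d → ℝ≥0∞) (K : ℝ≥0∞) :
    ENNReal.ofReal c * Nn p x ρ F ≤ K ↔
      (volume (ball x ρ))⁻¹ * ∫⁻ y in ball x ρ, F y ^ p ≤ (K / ENNReal.ofReal c) ^ p := by
  have hc0 : ENNReal.ofReal c ≠ 0 := by simpa using hc
  rw [mul_comm, ← ENNReal.le_div_iff_mul_le (Or.inl hc0) (Or.inl ENNReal.ofReal_ne_top)]
  unfold Nn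
  rw [one_div, ENNReal.rpow_inv_le_iff hp]

lemma jensen_aux (p : ℝ) (hp : 1 ≤ p) (f : ℝ → ℝ≥0∞) (hf : Measurable f) :
    (∫⁻ s in Icc (0 : ℝ) 1, f s) ^ p ≤ ∫⁻ s in Icc (0 : ℝ) 1, f s ^ p := by
  have hp0 : 0 < p := by linarith
  have : IsProbabilityMeasure (volume.restrict (Icc (0 : ℝ) 1)) := ⟨by simp⟩
  have h := eLpNorm_le_eLpNorm_of_exponent_le (μ := volume.restrict (Icc (0 : ℝ) 1)) (f := f)
    (p := 1) (q := ENNReal.ofReal p) (by simpa using hp) hf.aestronglyMeasurable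
  rw [eLpNorm_one_eq_lintegral_enorm,
    eLpNorm_eq_lintegral_rpow_enorm_toReal (by simpa using hp0) ENNReal.ofReal_ne_top,
    ENNReal.toReal_ofReal hp0.le, one_div, ENNReal.le_rpow_inv_iff hp0] at h
  simpa using h

lemma Nn_avg_le {d : ℕ} (p μ : ℝ) (hp : 1 ≤ p) (hμ : 0 < μ) {Ω : Set (E d)} (hc : Convex ℝ Ω)
    (G : E d → ℝ≥0∞) (hG : Measurable G) (M : ℝ≥0∞)
    (hM : ∀ ρ : ℝ, 0 < ρ → ∀ x ∈ Ω, ENNReal.ofReal (ρ ^ μ) * Nn p x ρ G ≤ M)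
    {x z : E d} (hx : x ∈ Ω) (hz : z ∈ Ω) {ρ τ : ℝ} (hρ : 0 < ρ) (h0 : 0 ≤ τ) (h1 : τ ≤ 1 / 2) :
    ENNReal.ofReal (ρ ^ μ) * Nn p x ρ (fun y => ∫⁻ s in Icc (0 : ℝ) 1, G (Tm (s * τ) z y))
      ≤ ENNReal.ofReal (2 ^ μ) * M := by
  have hp0 : 0 < p := by linarith
  have hρμ : 0 < ρ ^ μ := by positivity
  have key : ∀ s ∈ Icc (0 : ℝ) 1, (volume (ball x ρ))⁻¹ *
      ∫⁻ y in ball x ρ, G (Tm (s * τ) z y) ^ p ≤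
        (ENNReal.ofReal (2 ^ μ) * M / ENNReal.ofReal (ρ ^ μ)) ^ p := by
    intro s hs
    rw [← Nn_le_iff p hp0 x ρ (ρ ^ μ) hρμ (fun y => G (Tm (s * τ) z y))]
    refine Nn_comp_le p μ hμ hc G M hM hx hz hρ (mul_nonneg hs.1 h0) ?_
    nlinarith [hs.1, hs.2]
  rw [Nn_le_iff p hp0 x ρ (ρ ^ μ) hρμ]
  have hjm : Measurable (fun q : E d × ℝ => G (Tm (q.2 * τ) z q.1) ^ p) := by
    apply Measurable.pow_const
    apply hG.comp
    unfold Tm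
    fun_prop
  have hvt : (volume (ball x ρ))⁻¹ ≠ ⊤ := by
    simp only [ne_eq, ENNReal.inv_eq_top]
    exact (measure_ball_pos _ _ hρ).ne'
  calc (volume (ball x ρ))⁻¹ *
        ∫⁻ y in ball x ρ, (∫⁻ s in Icc (0 : ℝ) 1, G (Tm (s * τ) z y)) ^ p
      ≤ (volume (ball x ρ))⁻¹ *
        ∫⁻ y in ball x ρ, ∫⁻ s in Icc (0 : ℝ) 1, G (Tm (s * τ) z y) ^ p := by
        gcongr with y
        apply jensen_aux p hp
        apply hG.comp
        unfold Tm
        fun_prop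
    _ = (volume (ball x ρ))⁻¹ *
        ∫⁻ s in Icc (0 : ℝ) 1, ∫⁻ y in ball x ρ, G (Tm (s * τ) z y) ^ p := by
        rw [lintegral_lintegral_swap (f := fun y s => G (Tm (s * τ) z y) ^ p) hjm.aemeasurable]
    _ = ∫⁻ s in Icc (0 : ℝ) 1, (volume (ball x ρ))⁻¹ *
          ∫⁻ y in ball x ρ, G (Tm (s * τ) z y) ^ p := by
        rw [lintegral_const_mul' _ _ hvt]
    _ ≤ ∫⁻ s in Icc (0 : ℝ) 1, (ENNReal.ofReal (2 ^ μ) * M / ENNReal.ofReal (ρ ^ μ)) ^ p :=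
        setLIntegral_mono' measurableSet_Icc key
    _ = _ := by simp

lemma frob_bound {d : ℕ} (m : Matrix (Fin d) (Fin d) ℝ) (v : E d) :
    |∑ i, ∑ j, v i * v j * m i j| ≤ ‖v‖ ^ 2 * frob m := by
  have hcs := Finset.sum_mul_sq_le_sq_mul_sq (Finset.univ : Finset (Fin d × Fin d))
    (fun q => v q.1 * v q.2) (fun q => m q.1 q.2)
  simp only [Fintype.sum_prod_type] at hcs
  have hv : ∑ i, ∑ j, (v i * v j) ^ 2 = (‖v‖ ^ 2) ^ 2 := by
    rw [EuclideanSpace.real_norm_sq_eq, sq (∑ i, v i ^ 2), Finset.sum_mul_sum]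
    simp_rw [mul_pow]
  rw [hv] at hcs
  unfold frob
  rw [← Real.sqrt_sq (show 0 ≤ ‖v‖ ^ 2 by positivity), ← Real.sqrt_mul (by positivity)]
  exact Real.abs_le_sqrt hcs

lemma vec_expand {d : ℕ} (v : E d) : v = ∑ i, v i • EuclideanSpace.single i (1 : ℝ) := by
  ext j
  simp [Finset.sum_apply, Pi.single_apply]

lemma hess_eq {d : ℕ} (u : E d → ℝ) (x : E d) (h : DifferentiableAt ℝ (fderiv ℝ u) x) (i j : Fin d) :
    hess u x i j = fderiv ℝ (fderiv ℝ u) x (EuclideanSpace.single i 1) (EuclideanSpace.single j 1) := by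
  unfold hess
  simp only [Matrix.of_apply]
  rw [fderiv_clm_apply h (by fun_prop)]
  simp

lemma second_bound {d : ℕ} (u : E d → ℝ) (x : E d) (h : DifferentiableAt ℝ (fderiv ℝ u) x)
    (v : E d) : |fderiv ℝ (fderiv ℝ u) x v v| ≤ ‖v‖ ^ 2 * frob (hess u x) := by
  refine le_of_eq_of_le ?_ (frob_bound (hess u x) v)
  congr 1
  conv_lhs => rw [vec_expand v]
  simp only [map_sum, map_smul, ContinuousLinearMap.sum_apply, ContinuousLinearMap.smul_apply,
    hess_eq u x h, smul_eq_mul, Finset.mul_sum]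
  rw [Finset.sum_comm]
  refine Finset.sum_congr rfl fun i _ => Finset.sum_congr rfl fun j _ => ?_
  ring

lemma taylor_aux {d : ℕ} {Ω : Set (E d)} (ho : IsOpen Ω) (hc : Convex ℝ Ω) (u : E d → ℝ)
    (hu : ContDiffOn ℝ 2 u Ω) {y w : E d} (hy : y ∈ Ω) (hw : w ∈ Ω) :
    ‖u w - u y - fderiv ℝ u y (w - y)‖ₑ ≤ ENNReal.ofReal (‖w - y‖ ^ 2) *
      ∫⁻ s in Icc (0 : ℝ) 1, ‖frob (hess u (y + s • (w - y)))‖ₑ := by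
  set v := w - y with hv
  have hmem : ∀ s ∈ Icc (0 : ℝ) 1, y + s • v ∈ Ω := fun s hs => hc.add_smul_sub_mem hy hw hs
  have hu1 : ContDiffOn ℝ 1 (fderiv ℝ u) Ω := hu.fderiv_of_isOpen ho (by norm_num)
  have hu2 : ContinuousOn (fderiv ℝ (fderiv ℝ u)) Ω :=
    hu1.continuousOn_fderiv_of_isOpen ho le_rfl
  have hd0 : ∀ x ∈ Ω, DifferentiableAt ℝ u x := fun x hx =>
    (hu.differentiableOn (by norm_num)).differentiableAt (ho.mem_nhds hx)
  have hd1 : ∀ x ∈ Ω, DifferentiableAt ℝ (fderiv ℝ u) x := fun x hx =>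
    (hu1.differentiableOn (by norm_num)).differentiableAt (ho.mem_nhds hx)
  have hline : ∀ s : ℝ, HasDerivAt (fun s : ℝ => y + s • v) v s := by
    intro s
    simpa using ((hasDerivAt_id s).smul_const v).const_add y
  have hφ : ∀ s ∈ Icc (0 : ℝ) 1, HasDerivAt (fun s : ℝ => u (y + s • v))
      (fderiv ℝ u (y + s • v) v) s := fun s hs =>
    (hd0 _ (hmem s hs)).hasFDerivAt.comp_hasDerivAt s (hline s)
  have hψ : ∀ s ∈ Icc (0 : ℝ) 1, HasDerivAt (fun s : ℝ => fderiv ℝ u (y + s • v) v)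
      (fderiv ℝ (fderiv ℝ u) (y + s • v) v v) s := by
    intro s hs
    have h1 : HasDerivAt (fun s : ℝ => fderiv ℝ u (y + s • v))
      (fderiv ℝ (fderiv ℝ u) (y + s • v) v) s :=
      (hd1 _ (hmem s hs)).hasFDerivAt.comp_hasDerivAt s (hline s)
    simpa using h1.clm_apply (hasDerivAt_const s v)
  obtain ⟨c, hcm, hcs⟩ := exists_hasDerivAt_eq_slope (fun s : ℝ => u (y + s • v))
    (fun s => fderiv ℝ u (y + s • v) v) zero_lt_one
    (fun s hs => (hφ s hs).continuousAt.continuousWithinAt)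
    (fun s hs => hφ s (Ioo_subset_Icc_self hs))
  have hyw : y + v = w := by rw [hv]; abel
  simp only [one_smul, zero_smul, add_zero, sub_zero, div_one, hyw] at hcs
  have hsub : Icc 0 c ⊆ Icc (0 : ℝ) 1 := Icc_subset_Icc_right hcm.2.le
  have hcont : ContinuousOn (fun s : ℝ => fderiv ℝ (fderiv ℝ u) (y + s • v) v v) (Icc 0 1) := by
    have h1 : ContinuousOn (fun s : ℝ => fderiv ℝ (fderiv ℝ u) (y + s • v)) (Icc 0 1) :=
      hu2.comp (by fun_prop) hmem
    exact (h1.clm_apply continuousOn_const).clm_apply continuousOn_const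
  have hint := intervalIntegral.integral_eq_sub_of_hasDerivAt
    (f := fun s : ℝ => fderiv ℝ u (y + s • v) v) (a := 0) (b := c)
    (f' := fun s : ℝ => fderiv ℝ (fderiv ℝ u) (y + s • v) v v)
    (fun s hs => hψ s (hsub (by rwa [uIcc_of_le hcm.1.le] at hs)))
    (ContinuousOn.intervalIntegrable (hcont.mono (by rw [uIcc_of_le hcm.1.le]; exact hsub)))
  simp only [zero_smul, add_zero] at hint
  rw [← hcs, ← hint, intervalIntegral.integral_of_le hcm.1.le]
  refine (enorm_integral_le_lintegral_enorm _).trans ?_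
  rw [← lintegral_const_mul' _ _ ENNReal.ofReal_ne_top]
  refine (lintegral_mono_set (Ioc_subset_Icc_self.trans hsub)).trans ?_
  refine setLIntegral_mono' measurableSet_Icc fun s hs => ?_
  have hf : 0 ≤ frob (hess u (y + s • v)) := Real.sqrt_nonneg _
  rw [Real.enorm_eq_ofReal_abs, Real.enorm_eq_ofReal_abs, abs_of_nonneg hf,
    ← ENNReal.ofReal_mul (by positivity)]
  exact ENNReal.ofReal_le_ofReal (second_bound u _ (hd1 _ (hmem s hs)) v)

lemma norm_clm_le {d : ℕ} (f : E d →L[ℝ] ℝ) :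
    ‖f‖ₑ ≤ ∑ i, ‖f (EuclideanSpace.single i 1)‖ₑ := by
  have h : ‖f‖ ≤ ∑ i, ‖f (EuclideanSpace.single i 1)‖ := by
    refine f.opNorm_le_bound (by positivity) fun v => ?_
    conv_lhs => rw [vec_expand v, map_sum]
    refine (norm_sum_le _ _).trans ?_
    rw [Finset.sum_mul]
    refine Finset.sum_le_sum fun i _ => ?_
    rw [map_smul, norm_smul, mul_comm]
    gcongr
    exact PiLp.norm_apply_le v i
  simp_rw [← ofReal_norm]
  rw [← ENNReal.ofReal_sum_of_nonneg (fun i _ => norm_nonneg _)]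
  exact ENNReal.ofReal_le_ofReal h

lemma partial_bound {d : ℕ} {R τ : ℝ} (hR : 0 < R) (hτ : 0 < τ) (hτ1 : τ ≤ 1) (u : E d → ℝ)
    (hu : ContDiffOn ℝ 2 u (ball (0 : E d) R)) {y : E d} (hy : y ∈ ball (0 : E d) R) (i : Fin d) :
    ‖fderiv ℝ u y (EuclideanSpace.single i 1)‖ₑ ≤
      ENNReal.ofReal (2 / (R * τ)) *
        (‖(ball (0 : E d) R).indicator u (Tm τ ((R / 2) • EuclideanSpace.single i 1) y)‖ₑ +
          ‖(ball (0 : E d) R).indicator u (Tm τ 0 y)‖ₑ) +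
      ENNReal.ofReal (8 * R * τ) *
        ((∫⁻ s in Icc (0 : ℝ) 1, ‖(ball (0 : E d) R).indicator (fun x => frob (hess u x))
            (Tm (s * τ) ((R / 2) • EuclideanSpace.single i 1) y)‖ₑ) +
          ∫⁻ s in Icc (0 : ℝ) 1, ‖(ball (0 : E d) R).indicator (fun x => frob (hess u x))
            (Tm (s * τ) 0 y)‖ₑ) := by
  set Ω := ball (0 : E d) R with hΩ
  set z : E d := (R / 2) • EuclideanSpace.single i 1 with hz
  have hc : Convex ℝ Ω := convex_ball _ _
  have h0 : (0 : E d) ∈ Ω := mem_ball_self hR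
  have hzm : z ∈ Ω := by
    rw [hΩ, mem_ball_zero_iff, hz, norm_smul]
    simp only [EuclideanSpace.norm_single, norm_one, mul_one, Real.norm_eq_abs]
    rw [abs_of_pos (by positivity)]
    linarith
  have step : ∀ a ∈ Ω, ‖u (Tm τ a y) - u y - fderiv ℝ u y (τ • (a - y))‖ₑ ≤
      ENNReal.ofReal (4 * R ^ 2 * τ ^ 2) *
        ∫⁻ s in Icc (0 : ℝ) 1, ‖Ω.indicator (fun x => frob (hess u x)) (Tm (s * τ) a y)‖ₑ := by
    intro a ha
    have h := taylor_aux isOpen_ball hc u hu hy (Tm_mem hc hy ha hτ.le hτ1)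
    have e1 : Tm τ a y - y = τ • (a - y) := by unfold Tm; abel
    rw [e1] at h
    refine h.trans ?_
    apply mul_le_mul'
    · apply ENNReal.ofReal_le_ofReal
      rw [norm_smul, mul_pow, Real.norm_of_nonneg hτ.le]
      have : ‖a - y‖ ≤ 2 * R := by
        have h1 := norm_sub_le a y
        rw [hΩ, mem_ball_zero_iff] at ha hy
        linarith
      have h2 : ‖a - y‖ ^ 2 ≤ (2 * R) ^ 2 := by gcongr
      nlinarith [sq_nonneg τ]
    · refine setLIntegral_mono' measurableSet_Icc fun s hs => ?_
      have e2 : y + s • τ • (a - y) = Tm (s * τ) a y := by unfold Tm; rw [mul_smul]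
      rw [e2, indicator_of_mem]
      exact Tm_mem hc hy ha (mul_nonneg hs.1 hτ.le) (by nlinarith [hs.1, hs.2])
  have s1 := step z hzm
  have s2 := step 0 h0
  set A := ∫⁻ s in Icc (0 : ℝ) 1, ‖Ω.indicator (fun x => frob (hess u x)) (Tm (s * τ) z y)‖ₑ
  set B := ∫⁻ s in Icc (0 : ℝ) 1, ‖Ω.indicator (fun x => frob (hess u x)) (Tm (s * τ) 0 y)‖ₑ
  rw [indicator_of_mem (Tm_mem hc hy hzm hτ.le hτ1), indicator_of_mem (Tm_mem hc hy h0 hτ.le hτ1)]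
  have hid : fderiv ℝ u y (EuclideanSpace.single i 1) = (2 / (R * τ)) *
      ((u (Tm τ z y) - u (Tm τ 0 y)) -
        ((u (Tm τ z y) - u y - fderiv ℝ u y (τ • (z - y))) -
          (u (Tm τ 0 y) - u y - fderiv ℝ u y (τ • (0 - y))))) := by
    simp only [map_smul, map_sub, hz, smul_eq_mul, map_zero]
    field_simp
    ring
  have hcc : ENNReal.ofReal (8 * R * τ) =
      ENNReal.ofReal (2 / (R * τ)) * ENNReal.ofReal (4 * R ^ 2 * τ ^ 2) := by
    rw [← ENNReal.ofReal_mul (by positivity)]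
    congr 1
    field_simp
    ring
  rw [hid, enorm_mul, Real.enorm_of_nonneg (by positivity), hcc, mul_assoc, ← mul_add]
  gcongr
  refine enorm_sub_le.trans ?_
  refine add_le_add enorm_sub_le (enorm_sub_le.trans ?_)
  rw [mul_add]
  exact add_le_add s1 s2

lemma measurable_frob_hess {d : ℕ} (u : E d → ℝ) : Measurable (fun x => frob (hess u x)) := by
  unfold frob hess
  refine Real.continuous_sqrt.measurable.comp ?_
  refine Finset.measurable_sum _ fun i _ => Finset.measurable_sum _ fun j _ => ?_
  simp only [Matrix.of_apply]
  exact (measurable_fderiv_apply_const ℝ _ _).pow_const 2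

lemma morrey_le {d : ℕ} (p μ : ℝ) (hp : 0 < p) (Ω : Set (E d)) (g : E d → ℝ) :
    ∀ ρ : ℝ, 0 < ρ → ∀ x ∈ Ω,
      ENNReal.ofReal (ρ ^ μ) * Nn p x ρ (fun y => ‖Ω.indicator g y‖ₑ) ≤ morrey p μ Ω g := by
  intro ρ hρ x hx
  rw [← nLp_eq p hp]
  unfold morrey
  exact le_iSup₂_of_le ρ hρ (le_iSup₂_of_le x hx le_rfl)

/-- Estimate (4.8) of the paper's Lemma 4.4: Morrey-norm interpolation inequality
for the gradient. -/
theorem stmt_8 (d : ℕ) (hd : 1 ≤ d) (p μ : ℝ)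
    (hp : 1 < p) (hμ : 0 < μ) (hμd : μ ≤ (d : ℝ) / p) :
    ∃ N : ℝ, 0 < N ∧
      ∀ R : ℝ, 0 < R →
        ∀ u : E d → ℝ, ContDiffOn ℝ 2 u (closedBall (0 : E d) R) →
          ∀ ε ∈ Set.Ioc (0 : ℝ) 1,
            morrey p μ (ball (0 : E d) R) (fun x => ‖fderiv ℝ u x‖) ≤
              ENNReal.ofReal (N * ε * R) *
                  morrey p μ (ball (0 : E d) R) (fun x => frob (hess u x)) +
                ENNReal.ofReal (N * ε⁻¹ * R⁻¹) * morrey p μ (ball (0 : E d) R) u := by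
  have hp0 : 0 < p := by linarith
  have hdpos : (0 : ℝ) < d := by exact_mod_cast hd
  refine ⟨d * 8 * 2 ^ μ, by positivity, ?_⟩
  intro R hR u hu' ε hε
  have hε0 := hε.1
  have hε1 := hε.2
  set Ω := ball (0 : E d) R with hΩ
  have hu : ContDiffOn ℝ 2 u Ω := hu'.mono ball_subset_closedBall
  have hc : Convex ℝ Ω := convex_ball _ _
  set MH := morrey p μ Ω (fun x => frob (hess u x)) with hMH
  set MU := morrey p μ Ω u with hMU
  set τ : ℝ := ε / 2 with hτ
  have hτ0 : 0 < τ := by positivity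
  have hτ1 : τ ≤ 1 / 2 := by rw [hτ]; linarith
  set H : E d → ℝ≥0∞ := fun y => ‖Ω.indicator (fun x => frob (hess u x)) y‖ₑ with hH
  set U : E d → ℝ≥0∞ := fun y => ‖Ω.indicator u y‖ₑ with hU
  have hHm : Measurable H :=
    ((measurable_frob_hess u).indicator measurableSet_ball).enorm
  have hUm : Measurable U := by
    have h1 : Measurable (Ω.indicator u) := by
      classical
      rw [← piecewise_eq_indicator]
      exact hu.continuousOn.measurable_piecewise continuousOn_const measurableSet_ball
    exact h1.enorm
  set z : Fin d → E d := fun i => (R / 2) • EuclideanSpace.single i 1 with hz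
  have h0 : (0 : E d) ∈ Ω := mem_ball_self hR
  have hzm : ∀ i, z i ∈ Ω := by
    intro i
    rw [hΩ, mem_ball_zero_iff, hz, norm_smul]
    simp only [EuclideanSpace.norm_single, norm_one, mul_one, Real.norm_eq_abs]
    rw [abs_of_pos (by positivity)]
    linarith
  set A : E d → E d → ℝ≥0∞ := fun a y => ∫⁻ s in Icc (0 : ℝ) 1, H (Tm (s * τ) a y) with hA
  have hAm : ∀ a, Measurable (A a) := by
    intro a
    have : Measurable (fun q : E d × ℝ => H (Tm (q.2 * τ) a q.1)) := by
      apply hHm.comp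
      unfold Tm
      fun_prop
    exact this.lintegral_prod_right'
  have hUTm : ∀ a, Measurable (fun y => U (Tm τ a y)) := by
    intro a
    apply hUm.comp
    unfold Tm
    fun_prop
  set c1 := ENNReal.ofReal (2 / (R * τ)) with hc1
  set c2 := ENNReal.ofReal (8 * R * τ) with hc2
  have hpt : ∀ y, ‖Ω.indicator (fun x => ‖fderiv ℝ u x‖) y‖ₑ ≤
      ∑ i, (c1 * (U (Tm τ (z i) y) + U (Tm τ 0 y)) + c2 * (A (z i) y + A 0 y)) := by
    intro y
    by_cases hy : y ∈ Ω
    · rw [indicator_of_mem hy, enorm_norm]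
      refine (norm_clm_le _).trans (Finset.sum_le_sum fun i _ => ?_)
      exact partial_bound hR hτ0 (by linarith) u hu hy i
    · rw [indicator_of_notMem hy]
      simp
  have hfin : ENNReal.ofReal (d * 8 * 2 ^ μ * ε * R) * MH +
      ENNReal.ofReal (d * 8 * 2 ^ μ * ε⁻¹ * R⁻¹) * MU =
      ∑ _i : Fin d, (c1 * (ENNReal.ofReal (2 ^ μ) * MU + ENNReal.ofReal (2 ^ μ) * MU) +
        c2 * (ENNReal.ofReal (2 ^ μ) * MH + ENNReal.ofReal (2 ^ μ) * MH)) := by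
    have e1 : ENNReal.ofReal (d * 8 * 2 ^ μ * ε * R) =
        d * (c2 * (2 * ENNReal.ofReal (2 ^ μ))) := by
      rw [hc2, ← ENNReal.ofReal_natCast, ← ENNReal.ofReal_ofNat, ← ENNReal.ofReal_mul (by positivity),
        ← ENNReal.ofReal_mul (by positivity), ← ENNReal.ofReal_mul (by positivity)]
      congr 1
      rw [hτ]
      ring
    have e2 : ENNReal.ofReal (d * 8 * 2 ^ μ * ε⁻¹ * R⁻¹) =
        d * (c1 * (2 * ENNReal.ofReal (2 ^ μ))) := by
      rw [hc1, ← ENNReal.ofReal_natCast, ← ENNReal.ofReal_ofNat, ← ENNReal.ofReal_mul (by positivity),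
        ← ENNReal.ofReal_mul (by positivity), ← ENNReal.ofReal_mul (by positivity)]
      congr 1
      rw [hτ]
      field_simp
      ring
    rw [e1, e2, Finset.sum_const, Finset.card_univ, Fintype.card_fin, nsmul_eq_mul]
    ring
  rw [hfin]
  unfold morrey
  refine iSup₂_le fun ρ hρ => iSup₂_le fun x hx => ?_
  rw [nLp_eq p hp0]
  have hUb : ∀ a ∈ Ω, ENNReal.ofReal (ρ ^ μ) * Nn p x ρ (fun y => U (Tm τ a y)) ≤
      ENNReal.ofReal (2 ^ μ) * MU := fun a ha =>
    Nn_comp_le p μ hμ hc U MU (morrey_le p μ hp0 Ω u) hx ha hρ hτ0.le hτ1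
  have hAb : ∀ a ∈ Ω, ENNReal.ofReal (ρ ^ μ) * Nn p x ρ (A a) ≤
      ENNReal.ofReal (2 ^ μ) * MH := fun a ha =>
    Nn_avg_le p μ hp.le hμ hc H hHm MH (morrey_le p μ hp0 Ω _) hx ha hρ hτ0.le hτ1
  have hm1 : ∀ i, Measurable (fun y => c1 * (U (Tm τ (z i) y) + U (Tm τ 0 y))) := fun i =>
    ((hUTm (z i)).add (hUTm 0)).const_mul _
  have hm2 : ∀ i, Measurable (fun y => c2 * (A (z i) y + A 0 y)) := fun i =>
    ((hAm (z i)).add (hAm 0)).const_mul _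
  calc _ ≤ ENNReal.ofReal (ρ ^ μ) * ∑ i, Nn p x ρ (fun y =>
        c1 * (U (Tm τ (z i) y) + U (Tm τ 0 y)) + c2 * (A (z i) y + A 0 y)) := by
        gcongr
        exact (Nn_mono p hp0 x ρ _ _ hpt).trans
          (Nn_sum p hp.le x ρ Finset.univ _ fun i => (hm1 i).add (hm2 i))
    _ ≤ ENNReal.ofReal (ρ ^ μ) * ∑ i,
        (c1 * (Nn p x ρ (fun y => U (Tm τ (z i) y)) + Nn p x ρ (fun y => U (Tm τ 0 y))) +
          c2 * (Nn p x ρ (A (z i)) + Nn p x ρ (A 0))) := by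
        gcongr with i
        refine (Nn_add p hp.le x ρ _ _ (hm1 i) (hm2 i)).trans ?_
        rw [Nn_smul p hp0 x ρ c1 (fun y => U (Tm τ (z i) y) + U (Tm τ 0 y)) ((hUTm (z i)).add (hUTm 0)),
          Nn_smul p hp0 x ρ c2 (fun y => A (z i) y + A 0 y) ((hAm (z i)).add (hAm 0))]
        gcongr
        · exact Nn_add p hp.le x ρ _ _ (hUTm _) (hUTm _)
        · exact Nn_add p hp.le x ρ _ _ (hAm _) (hAm _)
    _ = ∑ i, (c1 * (ENNReal.ofReal (ρ ^ μ) * Nn p x ρ (fun y => U (Tm τ (z i) y)) +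
            ENNReal.ofReal (ρ ^ μ) * Nn p x ρ (fun y => U (Tm τ 0 y))) +
          c2 * (ENNReal.ofReal (ρ ^ μ) * Nn p x ρ (A (z i)) +
            ENNReal.ofReal (ρ ^ μ) * Nn p x ρ (A 0))) := by
        rw [Finset.mul_sum]
        refine Finset.sum_congr rfl fun i _ => ?_
        ring
    _ ≤ _ := by
        refine Finset.sum_le_sum fun i _ => ?_
        exact add_le_add (mul_le_mul_right (add_le_add (hUb _ (hzm i)) (hUb 0 h0)) _)
          (mul_le_mul_right (add_le_add (hAb _ (hzm i)) (hAb 0 h0)) _)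
end
end
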